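/- For every ε > 0 there exists an integer A such that for every odd integer a ≥ A, the rank over ℚ of the family of vectors (1,0), (0,1), (ζ(3), 6ζ(5)), (ζ(5), 15ζ(7)), …, (ζ(a), (a(a+1)/2)·ζ(a+2)) — that is, the vectors (1,0), (0,1) together with the vectors (ζ(i), (i(i+1)/2)·ζ(i+2)) for all odd integers i with 3 ≤ i ≤ a — in ℝ² viewed as a vector space over ℚ, is at least (2−ε)·(log a)/(1+log 2). -/

import Mathlib

/-- The Riemann zeta value ζ(s) = Σ_{m ≥ 1} m^{-s}, as a real number. -/
noncomputable def zeta (s : ℕ) : ℝ := ∑' m : ℕ, 1 / ((m : ℝ) + 1) ^ s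


section
open MeasureTheory Filter Topology Set

lemma pnt_E : ∃ E : ℂ → ℂ, ContinuousOn E {s | 1 ≤ s.re} ∧ ∀ s : ℂ, 1 < s.re →
    LSeries (fun n => (ArithmeticFunction.vonMangoldt n : ℂ)) s = E s + 1 / (s - 1) := by
  refine ⟨ArithmeticFunction.vonMangoldt.LFunctionResidueClassAux (q := 1) 1,
    ArithmeticFunction.vonMangoldt.continuousOn_LFunctionResidueClassAux 1, fun s hs => ?_⟩
  rw [ArithmeticFunction.vonMangoldt.eqOn_LFunctionResidueClassAux (q := 1) (a := 1) isUnit_one hs]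
  have : ArithmeticFunction.vonMangoldt.residueClass (q := 1) 1 =
      fun n => ArithmeticFunction.vonMangoldt n := by
    funext n
    simp [ArithmeticFunction.vonMangoldt.residueClass, Subsingleton.elim (_ : ZMod 1) 1]
  simp [this]

lemma pnt_psi_int (s : ℂ) (hs : 1 < s.re) :
    LSeries (fun n => (ArithmeticFunction.vonMangoldt n : ℂ)) s =
      s * ∫ t in Ioi (1:ℝ), (Chebyshev.psi t : ℂ) * (t : ℂ) ^ (-(s + 1)) := by
  rw [LSeries_eq_mul_integral_of_nonneg (fun n => ArithmeticFunction.vonMangoldt n)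
    (r := 1) zero_le_one hs ?_ (fun n => ArithmeticFunction.vonMangoldt_nonneg)]
  · congr 2
    ext t
    congr 1
    rw [Chebyshev.psi]
    push_cast
    rfl
  · refine Asymptotics.IsBigO.of_bound (Real.log 4 + 4) (Eventually.of_forall fun n => ?_)
    have h := Chebyshev.psi_le_const_mul_self (x := (n:ℝ)) (by positivity)
    have h0 := Chebyshev.psi_nonneg (n:ℝ)
    rw [Chebyshev.psi_eq_sum_Icc, Nat.floor_natCast, ← Finset.insert_Icc_add_one_left_eq_Icc (Nat.zero_le n), Finset.sum_insert (by simp), ArithmeticFunction.map_zero, zero_add] at h h0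
    simp only [zero_add] at h h0
    rw [Real.norm_of_nonneg h0, Real.rpow_one, Real.norm_of_nonneg (by positivity)]
    exact h

noncomputable def pg (u : ℝ) : ℝ := Chebyshev.psi (Real.exp u) * Real.exp (-u)

lemma pg_nonneg (u : ℝ) : 0 ≤ pg u := mul_nonneg (Chebyshev.psi_nonneg _) (Real.exp_pos _).le

lemma pg_le (u : ℝ) : pg u ≤ Real.log 4 + 4 := by
  have h := Chebyshev.psi_le_const_mul_self (Real.exp_pos u).le
  calc pg u ≤ (Real.log 4 + 4) * Real.exp u * Real.exp (-u) := by
        unfold pg; gcongr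
    _ = _ := by rw [mul_assoc, ← Real.exp_add]; simp

lemma pg_meas : Measurable pg :=
  ((Chebyshev.psi_mono.measurable).comp Real.measurable_exp).mul
    (Real.measurable_exp.comp measurable_neg)

lemma pg_abs (u : ℝ) : |pg u - 1| ≤ 10 := by
  have h1 := pg_nonneg u
  have h2 := pg_le u
  have h3 : Real.log 4 ≤ 3 := by
    have := Real.log_le_sub_one_of_pos (show (0:ℝ) < 4 by norm_num); linarith
  rw [abs_le]; constructor <;> linarith

lemma pnt_cov (s : ℂ) :
    ∫ t in Ioi (1:ℝ), (Chebyshev.psi t : ℂ) * (t : ℂ) ^ (-(s + 1)) =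
    ∫ u in Ioi (0:ℝ), (pg u : ℂ) * Complex.exp (-(s - 1) * u) := by
  have himg : Real.exp '' (Ioi 0) = Ioi 1 := by
    ext x
    simp only [mem_image, mem_Ioi]
    constructor
    · rintro ⟨u, hu, rfl⟩; simpa using hu
    · intro hx; exact ⟨Real.log x, Real.log_pos hx, Real.exp_log (by linarith)⟩
  rw [← himg, integral_image_eq_integral_abs_deriv_smul measurableSet_Ioi
    (fun x _ => (Real.hasDerivAt_exp x).hasDerivWithinAt) Real.exp_injective.injOn]
  refine setIntegral_congr_fun measurableSet_Ioi fun u _ => ?_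
  simp only [pg]
  rw [abs_of_pos (Real.exp_pos u), Complex.real_smul, Complex.cpow_def_of_ne_zero
    (by exact_mod_cast (Real.exp_pos u).ne'), ← Complex.ofReal_log (Real.exp_pos u).le, Real.log_exp]
  push_cast
  rw [mul_left_comm, ← Complex.exp_add, mul_assoc, ← Complex.exp_add]
  congr 2
  ring

lemma pnt_int1 (s : ℂ) (hs : 1 < s.re) : IntegrableOn (fun u : ℝ => Complex.exp (-(s - 1) * u)) (Ioi 0) := by
  exact integrableOn_exp_mul_complex_Ioi (by simpa using hs) 0

lemma pnt_int2 (s : ℂ) (hs : 1 < s.re) : IntegrableOn (fun u : ℝ => ((pg u - 1 : ℝ) : ℂ) * Complex.exp (-(s - 1) * u)) (Ioi 0) := by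
  refine (pnt_int1 s hs).bdd_mul (c := 10) ?_ ?_
  · exact (Complex.measurable_ofReal.comp (pg_meas.sub measurable_const)).aestronglyMeasurable
  · exact Eventually.of_forall fun u => by
      rw [Complex.norm_real]; exact pg_abs u

lemma pnt_laplace : ∃ G : ℂ → ℂ, ContinuousOn G {s | 1 ≤ s.re} ∧ ∀ s : ℂ, 1 < s.re →
    ∫ u in Ioi (0:ℝ), ((pg u - 1 : ℝ) : ℂ) * Complex.exp (-(s - 1) * u) = G s := by
  obtain ⟨E, hE, hE2⟩ := pnt_E
  refine ⟨fun s => (E s - 1) / s, ?_, fun s hs => ?_⟩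
  · refine (hE.sub continuousOn_const).div continuousOn_id ?_
    rintro s hs h
    simp only [Set.mem_ofPred_eq] at hs
    rw [show s = 0 from h] at hs
    norm_num at hs
  · have hs0 : s ≠ 0 := by rintro rfl; norm_num at hs
    have hs1 : s - 1 ≠ 0 := by
      intro h
      have : s = 1 := by linear_combination h
      rw [this] at hs; norm_num at hs
    have h1 := pnt_psi_int s hs
    rw [hE2 s hs, pnt_cov] at h1
    have hA : ∫ u in Ioi (0:ℝ), Complex.exp (-(s - 1) * u) = 1 / (s - 1) := by
      rw [integral_exp_mul_complex_Ioi (by simpa using hs)]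
      simp only [Complex.ofReal_zero, mul_zero, Complex.exp_zero]
      rw [neg_div_neg_eq]
    have : ∫ u in Ioi (0:ℝ), ((pg u - 1 : ℝ) : ℂ) * Complex.exp (-(s - 1) * u) =
      (∫ u in Ioi (0:ℝ), (pg u : ℂ) * Complex.exp (-(s - 1) * u)) - 1 / (s - 1) := by
      rw [← hA, ← integral_sub _ (pnt_int1 s hs)]
      · congr 1; ext u; push_cast; ring
      · have := (pnt_int2 s hs).add (pnt_int1 s hs)
        refine this.congr (Eventually.of_forall fun u => ?_)
        simp only [Pi.add_apply]; push_cast; ring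
    rw [this]
    set X := ∫ u in Ioi (0:ℝ), (pg u : ℂ) * Complex.exp (-(s - 1) * u)
    field_simp at h1 ⊢
    linear_combination -h1

noncomputable def pK (w : ℝ) : ℝ := ∫ y in (-1:ℝ)..1, (1 - |y|) * Real.cos (w * y)

lemma pK_complex (w : ℝ) : (pK w : ℂ) = ∫ y in (-1:ℝ)..1, ((1 - |y| : ℝ) : ℂ) * Complex.exp (Complex.I * w * y) := by
  have h1 : ∀ y : ℝ, ((1 - |y| : ℝ) : ℂ) * Complex.exp (Complex.I * w * y) =
      (((1 - |y|) * Real.cos (w * y) : ℝ) : ℂ) + Complex.I * (((1 - |y|) * Real.sin (w * y) : ℝ) : ℂ) := by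
    intro y
    rw [show Complex.I * w * y = ((w * y : ℝ) : ℂ) * Complex.I by push_cast; ring, Complex.exp_mul_I]
    push_cast; ring
  simp_rw [h1]
  rw [intervalIntegral.integral_add, intervalIntegral.integral_const_mul,
    intervalIntegral.integral_ofReal, intervalIntegral.integral_ofReal]
  · have : ∫ y in (-1:ℝ)..1, (1 - |y|) * Real.sin (w * y) = 0 := by
      have h := intervalIntegral.integral_comp_neg (a := -1) (b := 1) (fun y => (1 - |y|) * Real.sin (w * y))
      simp only [abs_neg, mul_neg, Real.sin_neg, neg_neg, intervalIntegral.integral_neg] at h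
      linarith
    rw [this, pK]; simp
  · apply Continuous.intervalIntegrable; fun_prop
  · apply Continuous.intervalIntegrable; fun_prop

lemma pK_eq (w : ℝ) (hw : w ≠ 0) : pK w = 2 * (1 - Real.cos w) / w ^ 2 := by
  have hint : ∀ a b : ℝ, IntervalIntegrable (fun y => (1 - |y|) * Real.cos (w * y)) volume a b := by
    intro a b; apply Continuous.intervalIntegrable; fun_prop
  have h2 : ∫ y in (-1:ℝ)..0, (1 - |y|) * Real.cos (w * y) = ∫ y in (0:ℝ)..1, (1 - |y|) * Real.cos (w * y) := by
    have h := intervalIntegral.integral_comp_neg (a := 0) (b := 1) (fun y => (1 - |y|) * Real.cos (w * y))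
    simp only [abs_neg, mul_neg, Real.cos_neg, neg_zero] at h
    exact h.symm
  have h3 : ∫ y in (0:ℝ)..1, (1 - |y|) * Real.cos (w * y) = (1 - Real.cos w) / w ^ 2 := by
    have : ∫ y in (0:ℝ)..1, (1 - |y|) * Real.cos (w * y) = ∫ y in (0:ℝ)..1, (1 - y) * Real.cos (w * y) := by
      refine intervalIntegral.integral_congr fun y hy => ?_
      rw [uIcc_of_le zero_le_one] at hy
      simp only [abs_of_nonneg hy.1]
    rw [this, intervalIntegral.integral_eq_sub_of_hasDerivAt
      (f := fun y => (1 - y) * Real.sin (w * y) / w - Real.cos (w * y) / w ^ 2)]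
    · simp; ring
    · intro y _
      have hm : HasDerivAt (fun y => w * y) w y := by simpa using (hasDerivAt_id y).const_mul w
      have e1 := (((hasDerivAt_id y).const_sub 1).mul hm.sin).div_const w
      have e2 := hm.cos.div_const (w ^ 2)
      refine (e1.sub e2).congr_deriv ?_
      simp only [id]
      field_simp
      ring
    · apply Continuous.intervalIntegrable; fun_prop
  rw [pK, ← intervalIntegral.integral_add_adjacent_intervals (hint (-1) 0) (hint 0 1), h2, h3]
  ring

lemma pK_cont : Continuous pK := by
  unfold pK
  apply intervalIntegral.continuous_parametric_intervalIntegral_of_continuous' 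
  fun_prop

lemma pK_zero : pK 0 = 1 := by
  have h2 : ∫ y in (-1:ℝ)..0, (1 - |y|) = 1/2 := by
    have : ∫ y in (-1:ℝ)..0, (1 - |y|) = ∫ y in (-1:ℝ)..0, (1 + y) := by
      refine intervalIntegral.integral_congr fun y hy => ?_
      rw [uIcc_of_le (by norm_num)] at hy
      simp only [abs_of_nonpos hy.2]; ring
    rw [this, intervalIntegral.integral_add (by simp) (by simp), integral_id]; simp; norm_num
  have h3 : ∫ y in (0:ℝ)..1, (1 - |y|) = 1/2 := by
    have : ∫ y in (0:ℝ)..1, (1 - |y|) = ∫ y in (0:ℝ)..1, (1 - y) := by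
      refine intervalIntegral.integral_congr fun y hy => ?_
      rw [uIcc_of_le (by norm_num)] at hy
      simp only [abs_of_nonneg hy.1]
    rw [this, intervalIntegral.integral_sub (by simp) (by simp), integral_id]; simp; norm_num
  simp only [pK, zero_mul, Real.cos_zero, mul_one]
  rw [← intervalIntegral.integral_add_adjacent_intervals (b := 0), h2, h3]
  · norm_num
  · apply Continuous.intervalIntegrable; fun_prop
  · apply Continuous.intervalIntegrable; fun_prop

lemma pK_nonneg (w : ℝ) : 0 ≤ pK w := by
  rcases eq_or_ne w 0 with rfl | hw
  · rw [pK_zero]; norm_num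
  · rw [pK_eq w hw]
    have := Real.cos_le_one w
    apply div_nonneg <;> nlinarith

lemma pK_le (w : ℝ) : pK w ≤ 5 * (1 + w ^ 2)⁻¹ := by
  rcases eq_or_ne w 0 with rfl | hw
  · rw [pK_zero]; norm_num
  · rw [pK_eq w hw]
    have h1 := Real.one_sub_sq_div_two_le_cos (x := w)
    have h2 := Real.neg_one_le_cos w
    have hw2 : 0 < w ^ 2 := by positivity
    rw [← div_eq_mul_inv, div_le_div_iff₀ hw2 (by positivity)]
    nlinarith

lemma pK_int : Integrable pK := by
  refine (integrable_inv_one_add_sq.const_mul 5).mono' pK_cont.aestronglyMeasurable ?_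
  exact Eventually.of_forall fun w => by rw [Real.norm_of_nonneg (pK_nonneg w)]; exact pK_le w

lemma pK_int_pos : 0 < ∫ w, pK w := by
  rw [integral_pos_iff_support_of_nonneg pK_nonneg pK_int]
  have : IsOpen (Function.support pK) := pK_cont.isOpen_support
  exact this.measure_pos volume ⟨0, by simp [pK_zero]⟩

end

section
open MeasureTheory Filter Topology Set

lemma pK_comp_int (B : ℝ) (hB : 0 < B) (x : ℝ) : Integrable (fun u => pK (B * (x - u))) := by
  have := (pK_int.comp_mul_left' hB.ne').comp_sub_left x
  exact this

lemma pnt_fubini (G : ℂ → ℂ) (hG : ∀ s : ℂ, 1 < s.re →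
    ∫ u in Ioi (0:ℝ), ((pg u - 1 : ℝ) : ℂ) * Complex.exp (-(s - 1) * u) = G s)
    (B σ x : ℝ) (hσ : 0 < σ) :
    ((∫ u in Ioi (0:ℝ), (pg u - 1) * Real.exp (-σ * u) * pK (B * (x - u)) : ℝ) : ℂ) =
    ∫ y in (-1:ℝ)..1, ((1 - |y| : ℝ) : ℂ) * Complex.exp (Complex.I * (B * x) * y) *
      G (1 + σ + Complex.I * (B * y)) := by
  rw [← integral_complex_ofReal, intervalIntegral.integral_of_le (by norm_num)]
  have h1 : ∀ u : ℝ, (((pg u - 1) * Real.exp (-σ * u) * pK (B * (x - u)) : ℝ) : ℂ) =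
      ∫ y in Ioc (-1:ℝ) 1, (((pg u - 1) * Real.exp (-σ * u) : ℝ) : ℂ) * 
        (((1 - |y| : ℝ) : ℂ) * Complex.exp (Complex.I * (B * (x - u) : ℝ) * y)) := by
    intro u
    rw [integral_const_mul, Complex.ofReal_mul, pK_complex, intervalIntegral.integral_of_le (by norm_num)]
  simp_rw [h1]
  rw [integral_integral_swap]
  · refine setIntegral_congr_fun measurableSet_Ioc fun y _ => ?_
    rw [← hG _ (by simp [hσ]), ← integral_const_mul]
    congr 1
    ext u
    push_cast
    rw [show Complex.I * (↑B * (↑x - ↑u)) * ↑y = Complex.I * (B * x) * y + (- Complex.I * (B * u) * y) by ring,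
      Complex.exp_add, show -(1 + (σ:ℂ) + Complex.I * (B * y) - 1) * u = -σ * u + (- Complex.I * (B * u) * y) by ring,
      Complex.exp_add]
    ring
  · have hd : Integrable (fun z : ℝ × ℝ => (10 * Real.exp (-σ * z.1)) * (1:ℝ)) ((volume.restrict (Ioi 0)).prod (volume.restrict (Ioc (-1) 1))) := by
      refine Integrable.mul_prod (f := fun u => 10 * Real.exp (-σ * u)) (g := fun _ => (1:ℝ)) ?_ ?_
      · exact (integrableOn_exp_mul_Ioi (by linarith) 0).const_mul 10
      · exact integrable_const _
    refine hd.mono' ?_ ?_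
    · apply Measurable.aestronglyMeasurable
      have := pg_meas
      unfold Function.uncurry
      fun_prop
    · rw [Measure.prod_restrict]
      refine (ae_restrict_mem (measurableSet_Ioi.prod measurableSet_Ioc)).mono fun z hz => ?_
      rcases z with ⟨u, y⟩
      simp only [mem_prod, mem_Ioi, mem_Ioc] at hz
      simp only [Function.uncurry]
      rw [norm_mul, norm_mul, Complex.norm_real, Complex.norm_real, norm_mul, Real.norm_eq_abs, Real.norm_eq_abs,
        abs_of_pos (Real.exp_pos _), show Complex.I * (B * (x - u) : ℝ) * y = ((B * (x - u) * y : ℝ) : ℂ) * Complex.I by push_cast; ring,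
        Complex.norm_exp_ofReal_mul_I, mul_one]
      have h3 : ‖1 - |y|‖ ≤ 1 := by
        rw [Real.norm_eq_abs, abs_le]
        have : |y| ≤ 1 := abs_le.mpr ⟨hz.2.1.le, hz.2.2⟩
        have := abs_nonneg y
        constructor <;> linarith
      have := pg_abs u
      gcongr

lemma pnt_identity (G : ℂ → ℂ) (hGc : ContinuousOn G {s | 1 ≤ s.re}) (hG : ∀ s : ℂ, 1 < s.re →
    ∫ u in Ioi (0:ℝ), ((pg u - 1 : ℝ) : ℂ) * Complex.exp (-(s - 1) * u) = G s)
    (B x : ℝ) (hB : 0 < B) :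
    ((∫ u in Ioi (0:ℝ), (pg u - 1) * pK (B * (x - u)) : ℝ) : ℂ) =
    ∫ y in (-1:ℝ)..1, ((1 - |y| : ℝ) : ℂ) * Complex.exp (Complex.I * (B * x) * y) *
      G (1 + Complex.I * (B * y)) := by
  let σ : ℕ → ℝ := fun m => 1 / ((m:ℝ) + 1)
  have hσ : ∀ m, 0 < σ m := fun m => by simp only [σ]; positivity
  have hσ1 : ∀ m, σ m ≤ 1 := fun m => by
    simp only [σ]; rw [div_le_one (by positivity)]; linarith [(Nat.cast_nonneg m : (0:ℝ) ≤ m)]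
  have hσ0 : Tendsto σ atTop (𝓝 0) := tendsto_one_div_add_atTop_nhds_zero_nat
  have hl : Tendsto (fun m => ((∫ u in Ioi (0:ℝ), (pg u - 1) * Real.exp (-σ m * u) * pK (B * (x - u)) : ℝ) : ℂ))
      atTop (𝓝 ((∫ u in Ioi (0:ℝ), (pg u - 1) * pK (B * (x - u)) : ℝ) : ℂ)) := by
    refine (Complex.continuous_ofReal.tendsto _).comp ?_
    refine tendsto_integral_of_dominated_convergence (fun u => 10 * pK (B * (x - u))) ?_ ?_ ?_ ?_
    · intro m
      have := pg_meas
      have := pK_cont.measurable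
      apply Measurable.aestronglyMeasurable
      fun_prop
    · exact ((pK_comp_int B hB x).const_mul 10).integrableOn
    · intro m
      refine (ae_restrict_mem measurableSet_Ioi).mono fun u hu => ?_
      have hu' : 0 < u := hu
      rw [norm_mul, norm_mul, Real.norm_eq_abs, Real.norm_of_nonneg (Real.exp_pos _).le,
        Real.norm_of_nonneg (pK_nonneg _)]
      have h1 : Real.exp (-σ m * u) ≤ 1 := by
        rw [Real.exp_le_one_iff]; nlinarith [hσ m]
      have := pg_abs u
      have := pK_nonneg (B * (x - u))
      have : |pg u - 1| * Real.exp (-σ m * u) ≤ 10 * 1 := by gcongr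
      nlinarith
    · refine Eventually.of_forall fun u => ?_
      have : Tendsto (fun m => Real.exp (-σ m * u)) atTop (𝓝 (Real.exp (-0 * u))) :=
        (Real.continuous_exp.tendsto _).comp ((hσ0.neg).mul_const u)
      have := (this.const_mul (pg u - 1)).mul_const (pK (B * (x - u)))
      simpa using this
  have hK : IsCompact ((Icc (1:ℝ) 2) ×ℂ (Icc (-B) B)) := isCompact_Icc.reProdIm isCompact_Icc
  have hKs : ((Icc (1:ℝ) 2) ×ℂ (Icc (-B) B)) ⊆ {s : ℂ | 1 ≤ s.re} := fun s hs => hs.1.1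
  obtain ⟨C, hC⟩ := hK.exists_bound_of_continuousOn (hGc.mono hKs)
  have hmem : ∀ t : ℝ, 0 ≤ t → t ≤ 1 → ∀ y : ℝ, |y| ≤ 1 → (1 + (t:ℂ) + Complex.I * (B * y)) ∈ (Icc (1:ℝ) 2) ×ℂ (Icc (-B) B) := by
    intro t ht0 ht1 y hy
    have := abs_le.mp hy
    rw [Complex.mem_reProdIm]
    simp
    refine ⟨⟨ht0, by linarith⟩, ?_, ?_⟩ <;> nlinarith
  have hG0c : ∀ t : ℝ, 0 ≤ t → Continuous (fun y : ℝ => G (1 + t + Complex.I * (B * y))) := by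
    intro t ht
    refine hGc.comp_continuous (by fun_prop) fun y => ?_
    simp [ht]
  have hr : Tendsto (fun m => ∫ y in (-1:ℝ)..1, ((1 - |y| : ℝ) : ℂ) * Complex.exp (Complex.I * (B * x) * y) *
      G (1 + σ m + Complex.I * (B * y))) atTop (𝓝 (∫ y in (-1:ℝ)..1, ((1 - |y| : ℝ) : ℂ) * Complex.exp (Complex.I * (B * x) * y) *
      G (1 + Complex.I * (B * y)))) := by
    refine intervalIntegral.tendsto_integral_filter_of_dominated_convergence (fun _ => C) ?_ ?_ ?_ ?_
    · refine Eventually.of_forall fun m => ?_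
      have := hG0c (σ m) (hσ m).le
      apply Continuous.aestronglyMeasurable
      exact Continuous.mul (by fun_prop) this
    · refine Eventually.of_forall fun m => ?_
      refine Eventually.of_forall fun y hy => ?_
      rw [uIoc_of_le (by norm_num)] at hy
      have hy1 : |y| ≤ 1 := abs_le.mpr ⟨hy.1.le, hy.2⟩
      rw [norm_mul, norm_mul, Complex.norm_real, show Complex.I * (B * x) * y = ((B * x * y : ℝ) : ℂ) * Complex.I by push_cast; ring,
        Complex.norm_exp_ofReal_mul_I, mul_one]
      have h3 : ‖1 - |y|‖ ≤ 1 := by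
        rw [Real.norm_eq_abs, abs_le]
        have := abs_nonneg y
        constructor <;> linarith
      have h4 := hC _ (hmem (σ m) (hσ m).le (hσ1 m) y hy1)
      calc _ ≤ 1 * C := by gcongr
        _ = C := one_mul _
    · simp
    · refine Eventually.of_forall fun y hy => ?_
      refine Tendsto.const_mul _ ?_
      have h5 : Tendsto (fun m => (1 + (σ m : ℂ) + Complex.I * (B * y))) atTop (𝓝[{s | 1 ≤ s.re}] (1 + Complex.I * (B * y))) := by
        rw [tendsto_nhdsWithin_iff]
        constructor
        · have : Tendsto (fun m => (σ m : ℂ)) atTop (𝓝 ((0:ℝ):ℂ)) := (Complex.continuous_ofReal.tendsto _).comp hσ0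
          have := (this.const_add 1).add_const (Complex.I * (B * y))
          simpa using this
        · exact Eventually.of_forall fun m => by simp [(hσ m).le]
      exact (hGc (1 + Complex.I * (B * y)) (by simp)).tendsto.comp h5
  refine tendsto_nhds_unique hl (hr.congr fun m => ?_)
  rw [pnt_fubini G hG B (σ m) x (hσ m)]

lemma pnt_avg (B : ℝ) (hB : 0 < B) :
    Tendsto (fun x => ∫ u in Ioi (0:ℝ), (pg u - 1) * pK (B * (x - u))) atTop (𝓝 0) := by
  obtain ⟨G, hGc, hG⟩ := pnt_laplace
  have hRL := Real.tendsto_integral_exp_smul_cocompact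
    ((Ioc (-1:ℝ) 1).indicator fun y => ((1 - |y| : ℝ) : ℂ) * G (1 + Complex.I * (B * y)))
  have hmap : Tendsto (fun x : ℝ => -(B * x) / (2 * Real.pi)) atTop (cocompact ℝ) := by
    refine Tendsto.mono_right ?_ atBot_le_cocompact
    refine Tendsto.atBot_div_const (by positivity) ?_
    exact tendsto_neg_atTop_atBot.comp (tendsto_id.const_mul_atTop hB)
  have h := hRL.comp hmap
  have h2 : Tendsto (fun x => ((∫ u in Ioi (0:ℝ), (pg u - 1) * pK (B * (x - u)) : ℝ) : ℂ)) atTop (𝓝 0) := by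
    refine h.congr fun x => ?_
    rw [pnt_identity G hGc hG B x hB, intervalIntegral.integral_of_le (by norm_num), ← integral_indicator measurableSet_Ioc]
    simp only [Function.comp]
    congr 1
    ext y
    by_cases hy : y ∈ Ioc (-1:ℝ) 1
    · simp only [indicator_of_mem hy]
      rw [Circle.smul_def, Real.fourierChar_apply, smul_eq_mul]
      have : 2 * Real.pi * -(y * (-(B * x) / (2 * Real.pi))) = B * x * y := by
        field_simp
      rw [this]
      push_cast
      rw [show (B:ℂ) * x * y * Complex.I = Complex.I * (B * x) * y by ring]
      ring
    · simp [indicator_of_notMem hy]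
  have h3 := (Complex.continuous_re.tendsto 0).comp h2
  simpa [Function.comp_def] using h3

end

section
open MeasureTheory Filter Topology Set

lemma pg_mono_ish (u v : ℝ) (h : u ≤ v) : pg u * Real.exp (-(v - u)) ≤ pg v := by
  unfold pg
  rw [mul_assoc, ← Real.exp_add, show -u + -(v-u) = -v by ring]
  have := Chebyshev.psi_mono (Real.exp_le_exp.mpr h)
  gcongr

lemma pg_limsup (c : ℝ) (hc : 1 < c) : ∀ᶠ x in atTop, pg x ≤ c := by
  set I := ∫ w, pK w with hI
  have hI0 : 0 < I := pK_int_pos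
  -- choose delta
  obtain ⟨δ, hδ0, hδ⟩ : ∃ δ : ℝ, 0 < δ ∧ Real.exp (2 * δ) < c := by
    refine ⟨Real.log c / 3, div_pos (Real.log_pos hc) (by norm_num), ?_⟩
    have := Real.log_pos hc
    rw [← Real.lt_log_iff_exp_lt (by linarith)]
    linarith
  have hlim := intervalIntegral_tendsto_integral pK_int tendsto_neg_atTop_atBot tendsto_id
  have hlt : Real.exp (2 * δ) * I / c < I := by
    rw [div_lt_iff₀ (by linarith)]; nlinarith
  obtain ⟨R, hR0, hR⟩ := ((eventually_gt_atTop (0:ℝ)).and (hlim.eventually (lt_mem_nhds hlt))).exists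
  simp only [id] at hR
  set J := ∫ w in (-R)..R, pK w with hJ
  have hJ0 : 0 < J := lt_of_le_of_lt (by positivity) hR
  set B := R / δ with hB
  have hB0 : 0 < B := by positivity
  have hBδ : B * δ = R := by rw [hB]; field_simp
  -- eventual smallness
  set e := (c * J - Real.exp (2*δ) * I) / (Real.exp (2*δ) * B) with he
  have he0 : 0 < e := by
    apply div_pos _ (by positivity)
    rw [div_lt_iff₀ (by linarith)] at hR
    linarith
  have hev := (pnt_avg B hB0).eventually (gt_mem_nhds he0)
  have hev2 : ∀ᶠ x in atTop, pg (x - δ) ≤ c := by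
    filter_upwards [hev, eventually_gt_atTop δ] with x hx hxd
    have i1 : IntegrableOn (fun u => pK (B * (x - u))) (Ioi 0) := (pK_comp_int B hB0 x).integrableOn
    have i2 : IntegrableOn (fun u => (pg u - 1) * pK (B * (x - u))) (Ioi 0) := by
      refine Integrable.mono' (i1.const_mul 10) ?_ ?_
      · have := pg_meas
        have := pK_cont.measurable
        apply Measurable.aestronglyMeasurable
        fun_prop
      · refine Eventually.of_forall fun u => ?_
        rw [norm_mul, Real.norm_eq_abs, Real.norm_of_nonneg (pK_nonneg _)]
        have := pg_abs u
        have := pK_nonneg (B * (x - u))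
        gcongr
    have i3 : IntegrableOn (fun u => pg u * pK (B * (x - u))) (Ioi 0) := by
      refine (i2.add i1).congr (Eventually.of_forall fun u => ?_)
      simp only [Pi.add_apply]; ring
    have e1 : ∫ u in Ioi (0:ℝ), pg u * pK (B * (x - u)) = (∫ u in Ioi (0:ℝ), (pg u - 1) * pK (B * (x - u))) + ∫ u in Ioi (0:ℝ), pK (B * (x - u)) := by
      rw [← integral_add i2 i1]
      congr 1; ext u; ring
    have e2 : ∫ u in Ioi (0:ℝ), pK (B * (x - u)) ≤ I / B := by
      have : ∫ u in Ioi (0:ℝ), pK (B * (x - u)) ≤ ∫ u, pK (B * (x - u)) :=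
        setIntegral_le_integral (pK_comp_int B hB0 x) (Eventually.of_forall fun u => pK_nonneg _)
      refine this.trans (le_of_eq ?_)
      rw [integral_sub_left_eq_self (fun v => pK (B * v)) volume x, Measure.integral_comp_mul_left, abs_of_pos (by positivity), smul_eq_mul]
      field_simp
      rw [hI]
    have e3 : ∫ u in (x - δ)..(x+δ), pK (B * (x - u)) = J / B := by
      have : ∀ u, B * (x - u) = B * x - B * u := fun u => by ring
      simp_rw [this]
      rw [intervalIntegral.integral_comp_sub_mul _ hB0.ne', smul_eq_mul, show B * x - B * (x + δ) = -R by rw [← hBδ]; ring,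
        show B * x - B * (x - δ) = R by rw [← hBδ]; ring]
      field_simp
      rw [hJ]
    have e4 : pg (x - δ) * Real.exp (-(2*δ)) * (J / B) ≤ ∫ u in Ioi (0:ℝ), pg u * pK (B * (x - u)) := by
      rw [← e3, ← intervalIntegral.integral_const_mul, intervalIntegral.integral_of_le (by linarith)]
      have hsub : Ioc (x - δ) (x + δ) ⊆ Ioi 0 := fun u hu => by
        have := hu.1; simp only [mem_Ioi]; linarith
      have : ∫ u in Ioc (x - δ) (x+δ), pg (x - δ) * Real.exp (-(2*δ)) * pK (B * (x - u)) ≤ ∫ u in Ioc (x - δ) (x+δ), pg u * pK (B * (x - u)) := by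
        refine setIntegral_mono_on ((i1.mono_set hsub).const_mul _) (i3.mono_set hsub) measurableSet_Ioc fun u hu => ?_
        refine mul_le_mul_of_nonneg_right ?_ (pK_nonneg _)
        refine le_trans ?_ (pg_mono_ish (x - δ) u hu.1.le)
        have := pg_nonneg (x - δ)
        have := hu.2
        gcongr
        linarith
      refine this.trans ?_
      refine setIntegral_mono_set i3 ?_ hsub.eventuallyLE
      exact Eventually.of_forall fun u => mul_nonneg (pg_nonneg _) (pK_nonneg _)
    have e5 : pg (x - δ) * Real.exp (-(2*δ)) * (J / B) ≤ e + I / B := by linarith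
    have e6 : e + I / B = c * J / (Real.exp (2*δ) * B) := by
      rw [he]; field_simp; ring
    rw [e6, Real.exp_neg] at e5
    have e7 : pg (x - δ) * (Real.exp (2 * δ))⁻¹ * (J / B) = pg (x - δ) * J / (Real.exp (2*δ) * B) := by field_simp
    rw [e7, div_le_div_iff_of_pos_right (by positivity)] at e5
    exact le_of_mul_le_mul_right e5 hJ0
  have := (tendsto_atTop_add_const_right atTop δ tendsto_id).eventually hev2
  simpa using this

lemma lcm_bound (ε : ℝ) (hε : 0 < ε) : ∀ᶠ n : ℕ in atTop, (Nat.lcmUpto n : ℝ) ≤ Real.exp ((1 + ε) * n) := by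
  have h := pg_limsup (1 + ε) (by linarith)
  have h2 := (Real.tendsto_log_atTop.comp tendsto_natCast_atTop_atTop).eventually h
  filter_upwards [h2, eventually_gt_atTop 0] with n hn hn0
  have hn0' : (0:ℝ) < n := by exact_mod_cast hn0
  simp only [Function.comp, pg, Real.exp_neg, Real.exp_log hn0'] at hn
  rw [← div_eq_mul_inv, div_le_iff₀ hn0', Chebyshev.psi_eq_log_lcmUpto] at hn
  rwa [← Real.log_le_iff_le_exp (by exact_mod_cast Nat.lcmUpto_pos n)]

end

section
open Filter Topology

lemma crit_dirichlet {κ : Type*} [Fintype κ] (w : κ → ℝ × ℝ) (Q : ℕ) (hQ : 0 < Q) :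
    ∃ l1 l2 : ℤ, (l1 ≠ 0 ∨ l2 ≠ 0) ∧ l1 ^ 2 ≤ (Q:ℤ) ^ (Fintype.card κ) ∧ l2 ^ 2 ≤ (Q:ℤ) ^ (Fintype.card κ) ∧
      ∀ j, ∃ x : ℤ, |l1 * (w j).1 + l2 * (w j).2 - x| ≤ 1 / (Q:ℝ) := by
  classical
  set T := Nat.sqrt (Q ^ (Fintype.card κ)) with hT
  have hT1 : Q ^ (Fintype.card κ) < (T + 1) * (T + 1) := Nat.lt_succ_sqrt _
  have hT2 : T * T ≤ Q ^ (Fintype.card κ) := Nat.sqrt_le _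
  have hQ' : (0:ℝ) < Q := by exact_mod_cast hQ
  let f : ℕ × ℕ → κ → ℕ := fun u j => ⌊(Q:ℝ) * Int.fract ((u.1:ℝ) * (w j).1 + u.2 * (w j).2)⌋₊
  have hmaps : ∀ u ∈ Finset.range (T+1) ×ˢ Finset.range (T+1), f u ∈ Fintype.piFinset (fun _ : κ => Finset.range Q) := by
    intro u _
    rw [Fintype.mem_piFinset]
    intro j
    rw [Finset.mem_range]
    simp only [f]
    rw [Nat.floor_lt (by positivity)]
    have := Int.fract_lt_one ((u.1:ℝ) * (w j).1 + u.2 * (w j).2)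
    nlinarith
  have hcard : (Fintype.piFinset (fun _ : κ => Finset.range Q)).card < (Finset.range (T+1) ×ˢ Finset.range (T+1)).card := by
    rw [Fintype.card_piFinset, Finset.card_product]
    simpa using hT1
  obtain ⟨u, hu, v, hv, huv, hf⟩ := Finset.exists_ne_map_eq_of_card_lt_of_maps_to hcard hmaps
  simp only [Finset.mem_product, Finset.mem_range] at hu hv
  have hb : ∀ x y : ℕ, x < T + 1 → y < T + 1 → ((x:ℤ) - y)^2 ≤ (Q:ℤ) ^ (Fintype.card κ) := by
    intro x y hx hy
    have h1 : ((T:ℤ) * T) ≤ (Q:ℤ) ^ (Fintype.card κ) := by exact_mod_cast hT2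
    have h2 : |(x:ℤ) - y| ≤ T := by rw [abs_le]; omega
    have := sq_le_sq' (abs_le.mp h2).1 (abs_le.mp h2).2
    nlinarith
  refine ⟨(u.1:ℤ) - v.1, (u.2:ℤ) - v.2, ?_, hb _ _ hu.1 hv.1, hb _ _ hu.2 hv.2, fun j => ?_⟩
  · by_contra hcon
    push Not at hcon
    apply huv
    ext <;> omega
  · set A := (u.1:ℝ) * (w j).1 + u.2 * (w j).2 with hA
    set B := (v.1:ℝ) * (w j).1 + v.2 * (w j).2 with hB
    refine ⟨⌊A⌋ - ⌊B⌋, ?_⟩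
    have hj : ⌊(Q:ℝ) * Int.fract A⌋₊ = ⌊(Q:ℝ) * Int.fract B⌋₊ := congrFun hf j
    have h1 := Nat.floor_le (show 0 ≤ (Q:ℝ) * Int.fract A by positivity)
    have h2 := Nat.lt_floor_add_one ((Q:ℝ) * Int.fract A)
    have h3 := Nat.floor_le (show 0 ≤ (Q:ℝ) * Int.fract B by positivity)
    have h4 := Nat.lt_floor_add_one ((Q:ℝ) * Int.fract B)
    rw [hj] at h1 h2
    have e1 : (((u.1:ℤ) - v.1 : ℤ):ℝ) * (w j).1 + (((u.2:ℤ) - v.2 : ℤ) : ℝ) * (w j).2 - ((⌊A⌋ - ⌊B⌋ : ℤ) : ℝ) = Int.fract A - Int.fract B := by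
      have e1 := Int.self_sub_floor A
      have e2 := Int.self_sub_floor B
      rw [← e1, ← e2, hA, hB]
      push_cast
      ring
    rw [e1, abs_le, ← sub_nonneg, ← sub_nonneg (b := Int.fract A - Int.fract B)]
    have h5 : (Q:ℝ) * (1 / Q) = 1 := by field_simp
    constructor <;> refine le_of_mul_le_mul_left (a := (Q:ℝ)) ?_ hQ' <;> nlinarith

lemma crit_span (V : Submodule ℚ (ℝ × ℝ)) [FiniteDimensional ℚ V] (h10 : ((1:ℝ),(0:ℝ)) ∈ V) (h01 : ((0:ℝ),(1:ℝ)) ∈ V)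
    {ι : Type*} [Fintype ι] (g : ι → ℝ × ℝ) (hg : ∀ i, g i ∈ V) :
    ∃ (m : ℕ) (w : Fin m → ℝ × ℝ) (N : ℕ) (q : ι → Fin m → ℤ) (p : ι → ℤ × ℤ),
      m + 2 = Module.finrank ℚ V ∧ 0 < N ∧ ∀ i, (N:ℝ) * (g i).1 = ∑ j, (q i j : ℝ) * (w j).1 + (p i).1 ∧
        (N:ℝ) * (g i).2 = ∑ j, (q i j : ℝ) * (w j).2 + (p i).2 := by
  classical
  set e1 : ℝ × ℝ := (1, 0) with he1
  set e2 : ℝ × ℝ := (0, 1) with he2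
  have hne : e1 ≠ e2 := by simp [he1, he2]
  have hli : LinearIndepOn ℚ id ({e1, e2} : Set (ℝ × ℝ)) := by
    rw [LinearIndepOn.pair_iff _ hne]
    intro s t hst
    simp only [he1, he2, id, Prod.smul_mk, Prod.mk_add_mk, Prod.mk_eq_zero] at hst
    simpa [Rat.smul_def] using hst
  obtain ⟨b, hbV, hsub, hspan, hb⟩ := exists_linearIndepOn_id_extension hli (show ({e1, e2} : Set (ℝ × ℝ)) ⊆ (V : Set (ℝ×ℝ)) by
    rintro x (rfl | rfl)
    · exact h10
    · exact h01)
  have hVs : Submodule.span ℚ b = V := le_antisymm (Submodule.span_le.mpr hbV) hspan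
  have hfin : b.Finite := by
    have : LinearIndependent ℚ (fun x : b => (⟨x, hbV x.2⟩ : V)) := by
      apply LinearIndependent.of_comp V.subtype
      exact hb
    have h2 := this.finite
    exact Set.toFinite b
  set bf := hfin.toFinset with hbf
  have hbf' : (bf : Set (ℝ × ℝ)) = b := by simp [hbf]
  have h1f : e1 ∈ bf := by rw [hbf, Set.Finite.mem_toFinset]; exact hsub (by simp)
  have h2f : e2 ∈ bf := by rw [hbf, Set.Finite.mem_toFinset]; exact hsub (by simp)
  have h2f' : e2 ∈ bf.erase e1 := Finset.mem_erase.mpr ⟨hne.symm, h2f⟩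
  set b' := (bf.erase e1).erase e2 with hb'
  have hcard : b'.card + 2 = Module.finrank ℚ V := by
    have h1 := Finset.card_erase_add_one h2f'
    have h2 := Finset.card_erase_add_one h1f
    have h3 : Module.finrank ℚ V = bf.card := by
      rw [← hVs, ← hbf']
      exact finrank_span_finset_eq_card (by rw [hbf']; exact hb)
    rw [h3, hb']
    omega
  have hex : ∀ i, ∃ f : ℝ × ℝ → ℚ, ∑ x ∈ bf, f x • x = g i := by
    intro i
    have := hg i
    rw [← hVs, ← hbf'] at this
    obtain ⟨f, _, hf⟩ := Submodule.mem_span_finset.mp this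
    exact ⟨f, hf⟩
  choose f hf using hex
  set N : ℕ := ∏ i, ∏ x ∈ bf, (f i x).den with hN
  have hN0 : 0 < N := Finset.prod_pos fun i _ => Finset.prod_pos fun x _ => (f i x).den_pos
  have hint : ∀ i, ∀ x ∈ bf, ∃ z : ℤ, (N:ℚ) * f i x = z := by
    intro i x hx
    have hd : (f i x).den ∣ N :=
      (Finset.dvd_prod_of_mem (fun x => (f i x).den) hx).trans (Finset.dvd_prod_of_mem (fun i => ∏ x ∈ bf, (f i x).den) (Finset.mem_univ i))
    obtain ⟨c, hc⟩ := hd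
    refine ⟨c * (f i x).num, ?_⟩
    rw [hc]
    push_cast
    have := Rat.den_mul_eq_num (f i x)
    rw [← this]
    ring
  choose! z hz using hint
  refine ⟨b'.card, fun j => (b'.equivFin.symm j : ℝ × ℝ), N, fun i j => z i (b'.equivFin.symm j : ℝ × ℝ), fun i => (z i e1, z i e2), hcard, hN0, fun i => ?_⟩
  have key : ∀ φ : ℝ × ℝ →ₗ[ℚ] ℝ, (N:ℝ) * φ (g i) = ∑ j : Fin b'.card, (z i (b'.equivFin.symm j : ℝ × ℝ) : ℝ) * φ (b'.equivFin.symm j : ℝ × ℝ) + (z i e1 * φ e1 + z i e2 * φ e2) := by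
    intro φ
    have h1 : ∀ x ∈ bf, (N:ℝ) * φ (f i x • x) = z i x * φ x := by
      intro x hx
      rw [map_smul, Rat.smul_def, ← mul_assoc]
      have : (((N:ℚ) * f i x : ℚ) : ℝ) = ((z i x : ℚ) : ℝ) := by rw [hz i x hx]
      push_cast at this
      rw [this]
    rw [← hf i, map_sum, Finset.mul_sum, Finset.sum_congr rfl h1, ← Finset.add_sum_erase _ _ h1f, ← Finset.add_sum_erase _ _ h2f',
      ← hb', ← Finset.sum_coe_sort b', ← b'.equivFin.symm.sum_comp]
    ring
  constructor
  · have := key (LinearMap.fst ℚ ℝ ℝ)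
    simpa [he1, he2] using this
  · have := key (LinearMap.snd ℚ ℝ ℝ)
    simpa [he1, he2] using this

end

section
open Filter Topology

lemma criterion (V : Submodule ℚ (ℝ × ℝ)) [FiniteDimensional ℚ V] (h10 : ((1:ℝ),(0:ℝ)) ∈ V) (h01 : ((0:ℝ),(1:ℝ)) ∈ V)
    {ι : Type*} [Fintype ι] (g : ι → ℝ × ℝ) (hg : ∀ i, g i ∈ V) (α h α' : ℝ) (hα : 0 < α) (hβ : α ≤ h + α')
    (H : ∀ᶠ k : ℕ in atTop, ∃ D : ℝ, 0 < D ∧ ∃ c : Fin 2 → ι → ℤ, (∀ b i, |(c b i : ℝ)| ≤ D * Real.exp (h * k)) ∧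
      (∀ b, |∑ i, (c b i : ℝ) * (g i).1| ≤ Real.exp (-α * k)) ∧ (∀ b, |∑ i, (c b i : ℝ) * (g i).2| ≤ Real.exp (-α * k)) ∧
      ∀ l1 l2 : ℝ, ∃ b, D * Real.exp (-α' * k) * max |l1| |l2| ≤
        |l1 * (∑ i, (c b i : ℝ) * (g i).1) + l2 * (∑ i, (c b i : ℝ) * (g i).2)|) :
    2 * α ≤ ((Module.finrank ℚ V : ℝ) - 2) * (h + α' - α) := by
  obtain ⟨m, w, N, q, p, hm, hN, hq⟩ := crit_span V h10 h01 g hg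
  have hm' : (Module.finrank ℚ V : ℝ) - 2 = m := by rw [← hm]; push_cast; ring
  rw [hm']
  by_contra hcon
  push Not at hcon
  obtain ⟨k0, hk0⟩ := eventually_atTop.mp H
  set M : ℝ := ∑ i, ∑ j, |(q i j : ℝ)| with hM
  have hM0 : 0 ≤ M := Finset.sum_nonneg fun i _ => Finset.sum_nonneg fun j _ => abs_nonneg _
  have hN1 : (1:ℝ) ≤ N := by exact_mod_cast hN
  set β := (h + α' - α) / α with hβd
  have hβ0 : 0 ≤ β := div_nonneg (by linarith) hα.le
  have hβm : 0 < 1 - β * (m / 2) := by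
    have : β * (m/2) = (m * (h + α' - α)) / (2 * α) := by rw [hβd]; field_simp
    rw [this, sub_pos, div_lt_one (by linarith)]
    exact hcon
  set C : ℝ := Real.log (M + 1) + (h + α') * (k0 + 1 + Real.log (4 * N) / α) with hC
  obtain ⟨Q, hQ1, hQC⟩ : ∃ Q : ℕ, 1 ≤ Q ∧ C / (1 - β * (m / 2)) < Real.log Q :=
    ((eventually_ge_atTop 1).and ((Real.tendsto_log_atTop.comp tendsto_natCast_atTop_atTop).eventually (eventually_gt_atTop _))).exists
  have hQ1' : (1:ℝ) ≤ Q := by exact_mod_cast hQ1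
  rw [div_lt_iff₀ hβm] at hQC
  obtain ⟨l1, l2, hl, hl1, hl2, hx⟩ := crit_dirichlet w Q hQ1
  choose x hx using hx
  rw [Fintype.card_fin] at hl1 hl2
  set Λ : ℝ := max |(l1:ℝ)| |(l2:ℝ)| with hΛ
  have hΛ1 : 1 ≤ Λ := by
    rcases hl with h | h
    · refine le_trans ?_ (le_max_left _ _)
      exact_mod_cast Int.one_le_abs h
    · refine le_trans ?_ (le_max_right _ _)
      exact_mod_cast Int.one_le_abs h
  have hΛ2 : Λ ^ 2 ≤ (Q:ℝ) ^ m := by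
    rcases max_choice |(l1:ℝ)| |(l2:ℝ)| with h | h
    · rw [hΛ, h, sq_abs]; exact_mod_cast hl1
    · rw [hΛ, h, sq_abs]; exact_mod_cast hl2
  have hΛlog : Real.log Λ ≤ m / 2 * Real.log Q := by
    have := Real.log_le_log (by positivity) hΛ2
    rw [Real.log_pow, Real.log_pow] at this
    push_cast at this
    linarith
  have hΛlog0 : 0 ≤ Real.log Λ := Real.log_nonneg hΛ1
  set k := max k0 (⌊Real.log (4 * N * Λ) / α⌋₊ + 1) with hk
  have hlogadd : Real.log (4 * N * Λ) = Real.log (4 * N) + Real.log Λ := Real.log_mul (by positivity) (by positivity)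
  have hlog0 : 0 ≤ Real.log (4 * N) := Real.log_nonneg (by linarith)
  have hk1 : Real.log (4 * N * Λ) < α * k := by
    have h1 := Nat.lt_floor_add_one (Real.log (4 * N * Λ) / α)
    have h2 : ((⌊Real.log (4 * N * Λ) / α⌋₊ + 1 : ℕ) : ℝ) ≤ k := Nat.cast_le.mpr (le_max_right _ _)
    push_cast at h2
    have h3 := h1.trans_le h2
    rw [div_lt_iff₀ hα] at h3
    linarith
  have hk2 : (k:ℝ) ≤ k0 + 1 + Real.log (4 * N) / α + Real.log Λ / α := by
    have h1 := Nat.floor_le (show 0 ≤ Real.log (4 * N * Λ) / α by rw [hlogadd]; positivity)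
    have h2 : k ≤ k0 + (⌊Real.log (4 * N * Λ) / α⌋₊ + 1) := by omega
    have h3 : (k:ℝ) ≤ k0 + (⌊Real.log (4 * N * Λ) / α⌋₊ + 1) := by exact_mod_cast h2
    rw [hlogadd, add_div] at h1
    rw [hlogadd, add_div] at h3
    linarith
  obtain ⟨D, hD, c, hc, hy1, hy2, hlow⟩ := hk0 k (le_max_left _ _)
  obtain ⟨b, hb⟩ := hlow l1 l2
  set Y1 := ∑ i, (c b i : ℝ) * (g i).1 with hY1
  set Y2 := ∑ i, (c b i : ℝ) * (g i).2 with hY2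
  -- the key inequality
  have hkey : M * Real.exp (h * k) / Q < Λ * Real.exp (-α' * k) := by
    have h1 : (M + 1) * Real.exp ((h + α') * k) ≤ Λ * Q := by
      rw [← Real.log_le_log_iff (by positivity) (by positivity), Real.log_mul (by positivity) (by positivity), Real.log_exp,
        Real.log_mul (by positivity) (by positivity)]
      have h2 : (h + α') * k ≤ (h + α') * (k0 + 1 + Real.log (4 * N) / α + Real.log Λ / α) :=
        mul_le_mul_of_nonneg_left hk2 (by linarith)
      have h3 : (h + α') * (Real.log Λ / α) = β * Real.log Λ + Real.log Λ := by
        rw [hβd]; field_simp; ring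
      have h4 : β * Real.log Λ ≤ β * (m / 2 * Real.log Q) := mul_le_mul_of_nonneg_left hΛlog hβ0
      rw [mul_add, h3] at h2
      linarith
    have h5 : M * Real.exp ((h + α') * k) < Λ * Q := by
      have := Real.exp_pos ((h + α') * k)
      linarith
    rw [div_lt_iff₀ (by linarith), neg_mul, Real.exp_neg]
    rw [add_mul, Real.exp_add] at h5
    have h6 := Real.exp_pos (α' * k)
    rw [← mul_lt_mul_iff_left₀ h6]
    calc _ = M * (Real.exp (h * k) * Real.exp (α' * k)) := by ring
      _ < Λ * Q := h5
      _ = _ := by field_simp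
  -- decomposition
  set Z : ℤ := ∑ i, c b i * (∑ j, q i j * x j + l1 * (p i).1 + l2 * (p i).2) with hZ
  set E : ℝ := ∑ i, (c b i : ℝ) * ∑ j, (q i j : ℝ) * (l1 * (w j).1 + l2 * (w j).2 - x j) with hE
  have hdec : (N:ℝ) * (l1 * Y1 + l2 * Y2) = Z + E := by
    rw [hY1, hY2, hZ, hE]
    push_cast
    rw [Finset.mul_sum, Finset.mul_sum, ← Finset.sum_add_distrib, ← Finset.sum_add_distrib, Finset.mul_sum]
    refine Finset.sum_congr rfl fun i _ => ?_
    have e1 : ∑ j, (q i j : ℝ) * (l1 * (w j).1 + l2 * (w j).2 - x j) = l1 * ∑ j, (q i j : ℝ) * (w j).1 + l2 * ∑ j, (q i j : ℝ) * (w j).2 - ∑ j, (q i j : ℝ) * x j := by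
      rw [Finset.mul_sum, Finset.mul_sum, ← Finset.sum_add_distrib, ← Finset.sum_sub_distrib]
      refine Finset.sum_congr rfl fun j _ => by ring
    rw [e1]
    have e2 := (hq i).1
    have e3 := (hq i).2
    linear_combination (c b i : ℝ) * l1 * e2 + (c b i : ℝ) * l2 * e3
  have hEb : |E| ≤ D * (M * Real.exp (h * k) / Q) := by
    calc |E| ≤ ∑ i, |(c b i : ℝ) * ∑ j, (q i j : ℝ) * (l1 * (w j).1 + l2 * (w j).2 - x j)| := Finset.abs_sum_le_sum_abs _ _
      _ ≤ ∑ i, (D * Real.exp (h * k)) * ∑ j, |(q i j : ℝ)| * (1 / Q) := by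
        refine Finset.sum_le_sum fun i _ => ?_
        rw [abs_mul]
        refine mul_le_mul (hc b i) ?_ (abs_nonneg _) (by positivity)
        refine (Finset.abs_sum_le_sum_abs _ _).trans (Finset.sum_le_sum fun j _ => ?_)
        rw [abs_mul]
        exact mul_le_mul_of_nonneg_left (hx j) (abs_nonneg _)
      _ = _ := by
        simp_rw [← Finset.sum_mul]
        rw [← Finset.mul_sum, ← Finset.sum_mul, hM]
        ring
  have hlt : |E| < D * Real.exp (-α' * k) * Λ := by
    refine hEb.trans_lt ?_
    have := mul_lt_mul_of_pos_left hkey hD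
    linarith
  have hup : |l1 * Y1 + l2 * Y2| ≤ 2 * Λ * Real.exp (-α * k) := by
    have a1 := hy1 b
    have a2 := hy2 b
    have b1 : |(l1:ℝ)| ≤ Λ := le_max_left _ _
    have b2 : |(l2:ℝ)| ≤ Λ := le_max_right _ _
    calc _ ≤ |l1 * Y1| + |l2 * Y2| := abs_add_le _ _
      _ = |(l1:ℝ)| * |Y1| + |(l2:ℝ)| * |Y2| := by rw [abs_mul, abs_mul]
      _ ≤ Λ * Real.exp (-α * k) + Λ * Real.exp (-α * k) := by gcongr
      _ = _ := by ring
  have hsmall : N * (4 * Λ * Real.exp (-α * k)) < 1 := by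
    rw [Real.log_lt_iff_lt_exp (by positivity)] at hk1
    rw [neg_mul, Real.exp_neg]
    have h6 := Real.exp_pos (α * k)
    rw [← mul_lt_mul_iff_left₀ h6]
    calc _ = 4 * N * Λ := by field_simp
      _ < _ := by linarith
  have hle : |l1 * Y1 + l2 * Y2| ≤ N * |l1 * Y1 + l2 * Y2| := le_mul_of_one_le_left (abs_nonneg _) hN1
  have hNup : N * |l1 * Y1 + l2 * Y2| < 1 / 2 := by
    have := mul_le_mul_of_nonneg_left hup (by linarith : (0:ℝ) ≤ N)
    linarith
  have hNabs : |(N:ℝ) * (l1 * Y1 + l2 * Y2)| = N * |l1 * Y1 + l2 * Y2| := by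
    rw [abs_mul, abs_of_nonneg (by linarith : (0:ℝ) ≤ N)]
  have hZ0 : Z = 0 := by
    have : |(Z:ℝ)| < 1 := by
      have e : (Z:ℝ) = N * (l1 * Y1 + l2 * Y2) - E := by linarith
      rw [e]
      refine (abs_sub _ _).trans_lt ?_
      rw [hNabs]
      linarith
    have h2 : |Z| < 1 := by exact_mod_cast this
    exact Int.abs_lt_one_iff.mp h2
  rw [hZ0, Int.cast_zero, zero_add] at hdec
  rw [hdec] at hNabs
  linarith

end

section
open Filter Topology

/-- linear power series X + b -/
noncomputable def lin (b : ℝ) : PowerSeries ℝ := PowerSeries.X + PowerSeries.C b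

noncomputable def sh (t : ℝ) : Polynomial ℝ →+* PowerSeries ℝ := Polynomial.eval₂RingHom PowerSeries.C (lin t)

lemma sh_X (t : ℝ) : sh t Polynomial.X = lin t := by simp [sh]
lemma sh_C (t c : ℝ) : sh t (Polynomial.C c) = PowerSeries.C c := by simp [sh]
lemma sh_lin (t b : ℝ) : sh t (Polynomial.X + Polynomial.C b) = lin (t + b) := by
  rw [map_add, sh_X, sh_C, lin, lin, map_add, add_assoc]

lemma sh_eq (t : ℝ) (p : Polynomial ℝ) : sh t p = ((p.comp (Polynomial.X + Polynomial.C t) : Polynomial ℝ) : PowerSeries ℝ) := by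
  have : sh t = (Polynomial.coeToPowerSeries.ringHom).comp (Polynomial.compRingHom (Polynomial.X + Polynomial.C t)) := by
    apply Polynomial.ringHom_ext
    · intro c
      rw [sh_C]; simp
    · rw [sh_X]; simp [lin]
  rw [this]; simp

lemma lin_const (b : ℝ) : PowerSeries.constantCoeff (lin b) = b := by simp [lin]

lemma lin_mul_inv (b : ℝ) (hb : b ≠ 0) : lin b * (lin b)⁻¹ = 1 := by
  apply PowerSeries.mul_inv_cancel
  rwa [lin_const]

lemma lin_inv (b : ℝ) (hb : b ≠ 0) : (lin b)⁻¹ = PowerSeries.C b⁻¹ * PowerSeries.mk (fun k => (-b⁻¹) ^ k) := by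
  rw [eq_comm, PowerSeries.eq_inv_iff_mul_eq_one (by rwa [lin_const]), lin, mul_add]
  ext k
  rw [map_add, PowerSeries.coeff_mul_C, mul_comm _ PowerSeries.X]
  rcases k with _ | k
  · simp [hb]
  · rw [PowerSeries.coeff_succ_X_mul, PowerSeries.coeff_C_mul, PowerSeries.coeff_C_mul, PowerSeries.coeff_mk, PowerSeries.coeff_mk,
      PowerSeries.coeff_one, if_neg (by omega), pow_succ]
    field_simp
    ring

lemma coeff0_mul (f g : PowerSeries ℝ) : PowerSeries.coeff 0 (f * g) = PowerSeries.coeff 0 f * PowerSeries.coeff 0 g := by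
  simp
lemma coeff1_mul (f g : PowerSeries ℝ) : PowerSeries.coeff 1 (f * g) = PowerSeries.coeff 0 f * PowerSeries.coeff 1 g + PowerSeries.coeff 1 f * PowerSeries.coeff 0 g := by
  rw [PowerSeries.coeff_mul]
  simp [Finset.Nat.antidiagonal_succ]
lemma coeff2_mul (f g : PowerSeries ℝ) : PowerSeries.coeff 2 (f * g) = PowerSeries.coeff 0 f * PowerSeries.coeff 2 g + PowerSeries.coeff 1 f * PowerSeries.coeff 1 g + PowerSeries.coeff 2 f * PowerSeries.coeff 0 g := by
  rw [PowerSeries.coeff_mul]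
  simp [Finset.Nat.antidiagonal_succ]
  ring

lemma lin_inv_pow_coeff (b : ℝ) (hb : b ≠ 0) (i : ℕ) :
    PowerSeries.coeff 0 ((lin b)⁻¹ ^ i) = 1 / b ^ i ∧ PowerSeries.coeff 1 ((lin b)⁻¹ ^ i) = - (i:ℝ) / b ^ (i+1) ∧
    PowerSeries.coeff 2 ((lin b)⁻¹ ^ i) = ((i:ℝ) * (i+1) / 2) / b ^ (i+2) := by
  induction i with
  | zero => simp [PowerSeries.coeff_one]
  | succ i ih =>
    obtain ⟨h0, h1, h2⟩ := ih
    have e0 : PowerSeries.coeff 0 (lin b)⁻¹ = 1 / b := by rw [lin_inv b hb, PowerSeries.coeff_C_mul]; simp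
    have e1 : PowerSeries.coeff 1 (lin b)⁻¹ = - 1 / b ^ 2 := by rw [lin_inv b hb, PowerSeries.coeff_C_mul]; simp; field_simp
    have e2 : PowerSeries.coeff 2 (lin b)⁻¹ = 1 / b ^ 3 := by rw [lin_inv b hb, PowerSeries.coeff_C_mul]; simp; field_simp
    rw [pow_succ, coeff0_mul, coeff1_mul, coeff2_mul, h0, h1, h2, e0, e1, e2]
    refine ⟨?_, ?_, ?_⟩
    · field_simp; ring
    · push_cast; field_simp; ring
    · push_cast; field_simp; ring

/-- weighted coefficient bound -/
def Bd (f : PowerSeries ℝ) (B : ℝ) : Prop := ∀ N : ℕ, ∑ k ∈ Finset.range N, |PowerSeries.coeff k f| * (1/2) ^ k ≤ B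

lemma Bd.nonneg {f : PowerSeries ℝ} {B : ℝ} (h : Bd f B) : 0 ≤ B := by simpa using h 0
lemma Bd.mono {f : PowerSeries ℝ} {B B' : ℝ} (h : Bd f B) (hB : B ≤ B') : Bd f B' := fun N => (h N).trans hB
lemma Bd.coeff {f : PowerSeries ℝ} {B : ℝ} (h : Bd f B) (k : ℕ) : |PowerSeries.coeff k f| ≤ 2 ^ k * B := by
  have h1 := h (k+1)
  have h2 : |PowerSeries.coeff k f| * (1/2) ^ k ≤ ∑ k ∈ Finset.range (k+1), |PowerSeries.coeff k f| * (1/2) ^ k :=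
    Finset.single_le_sum (f := fun k => |PowerSeries.coeff k f| * (1/2 : ℝ) ^ k) (fun i _ => by positivity) (by simp)
  have h3 := h2.trans h1
  rw [div_pow, one_pow, mul_one_div, div_le_iff₀ (by positivity)] at h3
  linarith

lemma Bd.mul {f g : PowerSeries ℝ} {B B' : ℝ} (hf : Bd f B) (hg : Bd g B') : Bd (f * g) (B * B') := by
  intro N
  have key : ∑ k ∈ Finset.range N, |PowerSeries.coeff k (f * g)| * (1/2:ℝ) ^ k ≤
      (∑ k ∈ Finset.range N, |PowerSeries.coeff k f| * (1/2:ℝ) ^ k) * (∑ k ∈ Finset.range N, |PowerSeries.coeff k g| * (1/2:ℝ) ^ k) := by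
    rw [Finset.sum_mul_sum, ← Finset.sum_product']
    calc _ ≤ ∑ k ∈ Finset.range N, ∑ p ∈ Finset.HasAntidiagonal.antidiagonal k, (|PowerSeries.coeff p.1 f| * (1/2:ℝ) ^ p.1) * (|PowerSeries.coeff p.2 g| * (1/2:ℝ) ^ p.2) := by
          refine Finset.sum_le_sum fun k _ => ?_
          rw [PowerSeries.coeff_mul]
          refine (mul_le_mul_of_nonneg_right (Finset.abs_sum_le_sum_abs _ _) (by positivity)).trans ?_
          rw [Finset.sum_mul]
          refine Finset.sum_le_sum fun p hp => ?_
          rw [Finset.HasAntidiagonal.mem_antidiagonal] at hp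
          rw [← hp, abs_mul, pow_add]
          apply le_of_eq; ring
      _ = ∑ x ∈ (Finset.range N).sigma (fun k => Finset.HasAntidiagonal.antidiagonal k), (|PowerSeries.coeff x.2.1 f| * (1/2:ℝ) ^ x.2.1) * (|PowerSeries.coeff x.2.2 g| * (1/2:ℝ) ^ x.2.2) := by
          rw [Finset.sum_sigma]
      _ ≤ _ := by
          rw [← Finset.sum_image (s := (Finset.range N).sigma (fun k => Finset.HasAntidiagonal.antidiagonal k)) (g := fun x => x.2) (f := fun p => (|PowerSeries.coeff p.1 f| * (1/2:ℝ) ^ p.1) * (|PowerSeries.coeff p.2 g| * (1/2:ℝ) ^ p.2))]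
          · refine Finset.sum_le_sum_of_subset_of_nonneg ?_ fun _ _ _ => by positivity
            intro p hp
            simp only [Finset.mem_image, Finset.mem_sigma, Finset.mem_range, Finset.HasAntidiagonal.mem_antidiagonal] at hp
            obtain ⟨x, ⟨h1, h2⟩, rfl⟩ := hp
            simp only [Finset.mem_product, Finset.mem_range]
            omega
          · rintro ⟨k, p⟩ hx ⟨k', p'⟩ hy hxy
            simp only [Finset.coe_sigma, Set.mem_sigma_iff, Finset.mem_coe, Finset.HasAntidiagonal.mem_antidiagonal] at hx hy
            simp only at hxy
            subst hxy
            have : k = k' := by omega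
            subst this
            rfl
  refine key.trans ?_
  exact mul_le_mul (hf N) (hg N) (Finset.sum_nonneg fun _ _ => by positivity) hf.nonneg

lemma Bd.C (c : ℝ) : Bd (PowerSeries.C c) |c| := by
  intro N
  rcases N with _ | N
  · simp
  · rw [Finset.sum_range_succ']
    simp [PowerSeries.coeff_C]

lemma Bd.one : Bd 1 1 := by simpa using Bd.C 1

lemma Bd.add {f g : PowerSeries ℝ} {B B' : ℝ} (hf : Bd f B) (hg : Bd g B') : Bd (f + g) (B + B') := by
  intro N
  refine le_trans ?_ (add_le_add (hf N) (hg N))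
  rw [← Finset.sum_add_distrib]
  refine Finset.sum_le_sum fun k _ => ?_
  rw [map_add, ← add_mul]
  exact mul_le_mul_of_nonneg_right (abs_add_le _ _) (by positivity)

lemma Bd.X : Bd PowerSeries.X (1/2) := by
  intro N
  rcases N with _ | _ | N
  · norm_num
  · norm_num
  · rw [Finset.sum_range_succ', Finset.sum_range_succ']
    simp [PowerSeries.coeff_X]

lemma Bd.lin (b : ℝ) : Bd (lin b) (|b| + 1/2) := by
  have := Bd.add Bd.X (Bd.C b)
  unfold _root_.lin
  convert this using 1
  rw [add_comm]

lemma Bd.pow {f : PowerSeries ℝ} {B : ℝ} (hf : Bd f B) (k : ℕ) : Bd (f ^ k) (B ^ k) := by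
  induction k with
  | zero => simpa using Bd.one
  | succ k ih => rw [pow_succ, pow_succ]; exact ih.mul hf

lemma Bd.prod {ι : Type*} (s : Finset ι) (f : ι → PowerSeries ℝ) (B : ι → ℝ) (h : ∀ i ∈ s, Bd (f i) (B i)) : Bd (∏ i ∈ s, f i) (∏ i ∈ s, B i) := by
  classical
  induction s using Finset.induction_on with
  | empty => simpa using Bd.one
  | insert x s hx ih =>
    rw [Finset.prod_insert hx, Finset.prod_insert hx]
    exact (h x (by simp)).mul (ih fun i hi => h i (by simp [hi]))

lemma Bd.lin_inv (b : ℝ) (hb : 1 ≤ |b|) : Bd (_root_.lin b)⁻¹ (1 / (|b| - 1/2)) := by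
  have hb0 : b ≠ 0 := by
    intro h; rw [h] at hb; norm_num at hb
  intro N
  have h1 : ∀ k, |PowerSeries.coeff k (_root_.lin b)⁻¹| * (1/2:ℝ)^k = |b|⁻¹ * (1/(2 * |b|)) ^ k := by
    intro k
    rw [_root_.lin_inv b hb0, PowerSeries.coeff_C_mul, PowerSeries.coeff_mk, abs_mul, abs_inv, abs_pow, abs_neg, abs_inv, mul_assoc, ← mul_pow]
    congr 2
    field_simp
  simp_rw [h1]
  rw [← Finset.mul_sum]
  have h2 : (1 / (2 * |b|)) < 1 := by rw [div_lt_one (by positivity)]; linarith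
  have h3 : ∑ k ∈ Finset.range N, (1/(2 * |b|)) ^ k ≤ (1 - 1/(2 * |b|))⁻¹ := by
    rw [← tsum_geometric_of_lt_one (by positivity) h2]
    exact (summable_geometric_of_lt_one (by positivity) h2).sum_le_tsum _ (fun _ _ => by positivity)
  refine (mul_le_mul_of_nonneg_left h3 (by positivity)).trans (le_of_eq ?_)
  have : |b| - 1/2 ≠ 0 := by linarith
  have h4 : 1 - 1/(2 * |b|) ≠ 0 := by linarith
  have h5 : |b| ≠ 0 := by positivity
  rw [← mul_inv, mul_sub, one_div]
  field_simp

end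

section
open Filter Topology

noncomputable def Ei (n j : ℕ) : PowerSeries ℝ := ∏ m ∈ (Finset.range (n+1)).erase j, (lin ((m:ℝ) - j))⁻¹

noncomputable def cf (P : Polynomial ℝ) (a n j k : ℕ) : ℝ := PowerSeries.coeff k (sh (-(j:ℝ)) P * (Ei n j) ^ a)

noncomputable def pfR (P : Polynomial ℝ) (a n : ℕ) : Polynomial ℝ :=
  ∑ j ∈ Finset.range (n+1), ∑ k ∈ Finset.range a, Polynomial.C (cf P a n j k) * (Polynomial.X + Polynomial.C (j:ℝ)) ^ k *
    (∏ m ∈ (Finset.range (n+1)).erase j, (Polynomial.X + Polynomial.C (m:ℝ))) ^ a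

lemma pf_Ei (n j : ℕ) : (∏ m ∈ (Finset.range (n+1)).erase j, lin ((m:ℝ) - j)) * Ei n j = 1 := by
  rw [Ei, ← Finset.prod_mul_distrib]
  refine Finset.prod_eq_one fun m hm => ?_
  apply lin_mul_inv
  rw [sub_ne_zero]
  exact_mod_cast (Finset.mem_erase.mp hm).1

lemma pf_sh_prod (n j : ℕ) (t : ℝ) : sh t (∏ m ∈ (Finset.range (n+1)).erase j, (Polynomial.X + Polynomial.C (m:ℝ))) =
    ∏ m ∈ (Finset.range (n+1)).erase j, lin (t + m) := by
  rw [map_prod]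
  exact Finset.prod_congr rfl fun m _ => sh_lin _ _

lemma pf_coeff (P : Polynomial ℝ) (a n j : ℕ) (hj : j ∈ Finset.range (n+1)) (d : ℕ) (hd : d < a) :
    PowerSeries.coeff d (sh (-(j:ℝ)) (P - pfR P a n)) = 0 := by
  have hX : (PowerSeries.X : PowerSeries ℝ) ^ a ∣ sh (-(j:ℝ)) (P - pfR P a n) := by
    set E : PowerSeries ℝ := ∏ m ∈ (Finset.range (n+1)).erase j, lin ((m:ℝ) - j) with hE
    have hEE : E * Ei n j = 1 := pf_Ei n j
    have hP : sh (-(j:ℝ)) P = (sh (-(j:ℝ)) P * (Ei n j) ^ a) * E ^ a := by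
      rw [mul_assoc, ← mul_pow, mul_comm (Ei n j), hEE, one_pow, mul_one]
    have hEsh : sh (-(j:ℝ)) (∏ m ∈ (Finset.range (n+1)).erase j, (Polynomial.X + Polynomial.C (m:ℝ))) = E := by
      rw [pf_sh_prod, hE]
      refine Finset.prod_congr rfl fun m _ => ?_
      rw [neg_add_eq_sub]
    rw [pfR, ← Finset.add_sum_erase _ _ hj, map_sub, map_add, ← sub_sub]
    apply dvd_sub
    · rw [hP, map_sum]
      simp_rw [map_mul, map_pow, sh_C, sh_lin, hEsh]
      rw [← Finset.sum_mul, ← sub_mul]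
      apply Dvd.dvd.mul_right
      rw [PowerSeries.X_pow_dvd_iff]
      intro m hm
      rw [map_sub, map_sum, sub_eq_zero]
      have : ∀ k ∈ Finset.range a, PowerSeries.coeff m (PowerSeries.C (cf P a n j k) * lin (-(j:ℝ) + j) ^ k) = if m = k then cf P a n j k else 0 := by
        intro k _
        rw [neg_add_cancel, PowerSeries.coeff_C_mul, lin, map_zero, add_zero, PowerSeries.coeff_X_pow]
        split_ifs <;> simp
      rw [Finset.sum_congr rfl this, Finset.sum_ite_eq, if_pos (Finset.mem_range.mpr hm)]
      rfl
    · rw [map_sum]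
      refine Finset.dvd_sum fun i hi => ?_
      rw [map_sum]
      refine Finset.dvd_sum fun k _ => ?_
      rw [map_mul, map_pow (sh _) (∏ m ∈ (Finset.range (n+1)).erase i, (Polynomial.X + Polynomial.C (m:ℝ))), pf_sh_prod]
      apply Dvd.dvd.mul_left
      apply pow_dvd_pow_of_dvd
      have hji : j ∈ (Finset.range (n+1)).erase i := Finset.mem_erase.mpr ⟨fun h => (Finset.mem_erase.mp hi).1 h.symm, hj⟩
      refine Dvd.dvd.trans ?_ (Finset.dvd_prod_of_mem _ hji)
      simp [lin]
  exact PowerSeries.X_pow_dvd_iff.mp hX d hd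

lemma pf_term_deg (a n j k : ℕ) (hj : j ∈ Finset.range (n+1)) (c : ℝ) :
    (Polynomial.C c * (Polynomial.X + Polynomial.C (j:ℝ)) ^ k *
    (∏ m ∈ (Finset.range (n+1)).erase j, (Polynomial.X + Polynomial.C (m:ℝ))) ^ a).natDegree ≤ k + n * a := by
  refine Polynomial.natDegree_mul_le.trans (add_le_add ?_ ?_)
  · refine (Polynomial.natDegree_C_mul_le _ _).trans ?_
    rw [Polynomial.natDegree_pow, Polynomial.natDegree_X_add_C, mul_one]
  · rw [Polynomial.natDegree_pow, Polynomial.natDegree_prod_of_monic _ _ (fun m _ => Polynomial.monic_X_add_C _)]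
    simp only [Polynomial.natDegree_X_add_C, Finset.sum_const, Finset.card_erase_of_mem hj, Finset.card_range, smul_eq_mul, mul_one, Nat.add_sub_cancel]
    rw [mul_comm]

lemma pf_eq (P : Polynomial ℝ) (a n : ℕ) (ha : 0 < a) (hP : P.natDegree < a * (n + 1)) : P = pfR P a n := by
  have hdvd : ∏ j ∈ Finset.range (n+1), (Polynomial.X + Polynomial.C (j:ℝ)) ^ a ∣ P - pfR P a n := by
    apply Finset.prod_dvd_of_coprime
    · intro i _ j _ hij
      apply IsCoprime.pow
      have := Polynomial.isCoprime_X_sub_C_of_isUnit_sub (R := ℝ) (a := -(i:ℝ)) (b := -(j:ℝ)) (by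
        rw [isUnit_iff_ne_zero]
        intro h
        apply hij
        have : (i:ℝ) = j := by linarith
        exact_mod_cast this)
      simpa using this
    · intro j hj
      have h1 := (Polynomial.X_sub_C_pow_dvd_iff (p := P - pfR P a n) (t := -(j:ℝ)) (n := a)).mpr (by
        rw [Polynomial.X_pow_dvd_iff]
        intro d hd
        have := pf_coeff P a n j hj d hd
        rw [sh_eq, Polynomial.coeff_coe] at this
        exact this)
      simpa using h1
  have hmon : (∏ j ∈ Finset.range (n+1), (Polynomial.X + Polynomial.C (j:ℝ)) ^ a).Monic :=
    Polynomial.monic_prod_of_monic _ _ fun j _ => (Polynomial.monic_X_add_C _).pow _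
  rw [← sub_eq_zero]
  refine Polynomial.eq_zero_of_dvd_of_natDegree_lt hdvd ?_
  rw [Polynomial.natDegree_prod_of_monic _ _ (fun j _ => (Polynomial.monic_X_add_C _).pow _)]
  simp only [Polynomial.natDegree_pow, Polynomial.natDegree_X_add_C, mul_one, Finset.sum_const, Finset.card_range, smul_eq_mul]
  refine (Polynomial.natDegree_sub_le _ _).trans_lt (max_lt (by linarith) ?_)
  have : (pfR P a n).natDegree ≤ (a - 1) + n * a := by
    refine Polynomial.natDegree_sum_le_of_forall_le _ _ fun j hj => ?_
    refine Polynomial.natDegree_sum_le_of_forall_le _ _ fun k hk => ?_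
    refine (pf_term_deg a n j k hj _).trans ?_
    have := Finset.mem_range.mp hk
    omega
  refine this.trans_lt ?_
  have : (n + 1) * a = n * a + a := by ring
  omega

lemma pf_l1 (P : Polynomial ℝ) (a n : ℕ) (ha : 0 < a) (hP : P.natDegree + 1 < a * (n + 1)) :
    ∑ j ∈ Finset.range (n+1), cf P a n j (a-1) = 0 := by
  have h1 := congrArg (fun p => Polynomial.coeff p (a - 1 + n * a)) (pf_eq P a n ha (by omega))
  have e : a * (n+1) = a - 1 + n * a + 1 := by
    have : a * (n+1) = n * a + a := by ring
    omega
  rw [Polynomial.coeff_eq_zero_of_natDegree_lt (by omega), pfR, Polynomial.finsetSum_coeff] at h1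
  rw [h1]
  refine Finset.sum_congr rfl fun j hj => ?_
  rw [Polynomial.finsetSum_coeff]
  obtain ⟨b, rfl⟩ : ∃ b, a = b + 1 := ⟨a - 1, by omega⟩
  rw [Finset.sum_range_succ, Finset.sum_eq_zero, zero_add]
  · simp only [Nat.add_sub_cancel]
    rw [mul_assoc, Polynomial.coeff_C_mul]
    have hmon : ((Polynomial.X + Polynomial.C (j:ℝ)) ^ b * (∏ m ∈ (Finset.range (n+1)).erase j, (Polynomial.X + Polynomial.C (m:ℝ))) ^ (b+1)).Monic :=
      ((Polynomial.monic_X_add_C _).pow _).mul ((Polynomial.monic_prod_of_monic _ _ fun j _ => (Polynomial.monic_X_add_C _)).pow _)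
    have hdeg : ((Polynomial.X + Polynomial.C (j:ℝ)) ^ b * (∏ m ∈ (Finset.range (n+1)).erase j, (Polynomial.X + Polynomial.C (m:ℝ))) ^ (b+1)).natDegree = b + n * (b + 1) := by
      rw [((Polynomial.monic_X_add_C _).pow _).natDegree_mul ((Polynomial.monic_prod_of_monic _ _ fun j _ => (Polynomial.monic_X_add_C _)).pow _),
        Polynomial.natDegree_pow, Polynomial.natDegree_pow, Polynomial.natDegree_prod_of_monic _ _ (fun m _ => Polynomial.monic_X_add_C _)]
      simp only [Polynomial.natDegree_X_add_C, Finset.sum_const, Finset.card_erase_of_mem hj, Finset.card_range, smul_eq_mul, mul_one, Nat.add_sub_cancel]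
      rw [mul_comm n]
    rw [← hdeg, hmon.coeff_natDegree, mul_one]
  · intro k hk
    apply Polynomial.coeff_eq_zero_of_natDegree_lt
    refine (pf_term_deg (b+1) n j k hj _).trans_lt ?_
    have := Finset.mem_range.mp hk
    omega

end

section
open Filter Topology

noncomputable def Di (n : ℕ) (t : ℝ) : PowerSeries ℝ := ∏ m ∈ Finset.range (n+1), (lin (t + m))⁻¹
noncomputable def Tt (P : Polynomial ℝ) (a n : ℕ) (t : ℝ) : PowerSeries ℝ := sh t P * (Di n t) ^ a

lemma Tt_eq (P : Polynomial ℝ) (a n : ℕ) (ha : 0 < a) (hP : P.natDegree < a * (n + 1)) (t : ℝ) (ht : 0 < t) :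
    Tt P a n t = ∑ j ∈ Finset.range (n+1), ∑ k ∈ Finset.range a, PowerSeries.C (cf P a n j k) * ((lin (t + j))⁻¹) ^ (a - k) := by
  have hinv : ∀ m : ℕ, lin (t + m) * (lin (t+m))⁻¹ = 1 := fun m => lin_mul_inv _ (by positivity)
  unfold Tt
  conv_lhs => rw [pf_eq P a n ha hP]
  rw [pfR, map_sum, Finset.sum_mul]
  refine Finset.sum_congr rfl fun j hj => ?_
  rw [map_sum, Finset.sum_mul]
  refine Finset.sum_congr rfl fun k hk => ?_
  rw [map_mul, map_mul, map_pow, map_pow, sh_C, sh_lin, pf_sh_prod, Di, ← Finset.mul_prod_erase _ _ hj, mul_pow, ← Finset.prod_pow, ← Finset.prod_pow]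
  have h1 : (∏ m ∈ (Finset.range (n+1)).erase j, lin (t + m) ^ a) * (∏ m ∈ (Finset.range (n+1)).erase j, (lin (t + m))⁻¹ ^ a) = 1 := by
    rw [← Finset.prod_mul_distrib]
    refine Finset.prod_eq_one fun m _ => ?_
    rw [← mul_pow, hinv, one_pow]
  have h2 : lin (t + j) ^ k * (lin (t + j))⁻¹ ^ a = (lin (t + j))⁻¹ ^ (a - k) := by
    have : a = k + (a - k) := by have := Finset.mem_range.mp hk; omega
    conv_lhs => rw [this]
    rw [pow_add, ← mul_assoc, ← mul_pow, hinv, one_pow, one_mul]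
  calc _ = PowerSeries.C (cf P a n j k) * (lin (t + j) ^ k * (lin (t + j))⁻¹ ^ a) * ((∏ m ∈ (Finset.range (n+1)).erase j, lin (t + m) ^ a) * (∏ m ∈ (Finset.range (n+1)).erase j, (lin (t + m))⁻¹ ^ a)) := by ring
    _ = _ := by rw [h1, h2, mul_one]

noncomputable def Hj (j i : ℕ) : ℝ := ∑ u ∈ Finset.range j, 1 / ((u:ℝ) + 1) ^ i

lemma Hj_hasSum (j i : ℕ) (hi : 1 ≤ i) : HasSum (fun t : ℕ => 1 / ((t:ℝ) + 1 + j) ^ i - 1 / ((t:ℝ) + 1) ^ i) (- Hj j i) := by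
  induction j with
  | zero => simp [Hj, hasSum_zero]
  | succ j ih =>
    have h1 : HasSum (fun t : ℕ => 1 / ((t:ℝ) + 1 + j) ^ i - 1 / ((t:ℝ) + 1 + (j+1:ℕ)) ^ i) (1 / ((j:ℝ) + 1) ^ i) := by
      rw [hasSum_iff_tendsto_nat_of_nonneg]
      · have h2 : ∀ N : ℕ, ∑ t ∈ Finset.range N, (1 / ((t:ℝ) + 1 + j) ^ i - 1 / ((t:ℝ) + 1 + (j+1:ℕ)) ^ i) = 1 / ((j:ℝ) + 1) ^ i - 1 / ((N:ℝ) + 1 + j) ^ i := by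
          intro N
          induction N with
          | zero => simp [add_comm]
          | succ N ihN =>
            rw [Finset.sum_range_succ, ihN]
            push_cast
            rw [show (N:ℝ) + 1 + (j + 1) = N + 1 + 1 + j by ring]
            ring
        simp_rw [h2]
        have h3 : Tendsto (fun N : ℕ => 1 / ((N:ℝ) + 1 + j) ^ i) atTop (𝓝 0) := by
          have : Tendsto (fun N : ℕ => ((N:ℝ) + 1 + j) ^ i) atTop atTop :=
            (tendsto_pow_atTop (by omega)).comp (tendsto_atTop_add_const_right _ _ (tendsto_atTop_add_const_right _ _ tendsto_natCast_atTop_atTop))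
          simpa [Function.comp_def] using tendsto_inv_atTop_zero.comp this
        simpa using tendsto_const_nhds.sub h3
      · intro t
        rw [sub_nonneg]
        have : (j:ℝ) ≤ (j+1:ℕ) := by push_cast; linarith
        gcongr
    have h4 := ih.sub h1
    have e : - Hj j i - 1 / ((j:ℝ) + 1) ^ i = - Hj (j+1) i := by
      rw [Hj, Hj, Finset.sum_range_succ]; ring
    rw [e] at h4
    refine h4.congr_fun fun t => by ring

lemma zeta_hasSum (i : ℕ) (hi : 2 ≤ i) : HasSum (fun t : ℕ => 1 / ((t:ℝ) + 1) ^ i) (zeta i) := by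
  have h := (Real.summable_one_div_nat_pow (p := i)).mpr (by omega)
  have h2 := (summable_nat_add_iff 1).mpr h
  simp only [Nat.cast_add, Nat.cast_one] at h2
  exact h2.hasSum

lemma gen_hasSum (a n : ℕ) (e : ℕ → ℕ → ℝ) (p : ℕ → ℕ) (hp : ∀ k ∈ Finset.range a, 1 ≤ p k)
    (hp2 : ∀ k ∈ Finset.range a, 2 ≤ p k ∨ ∑ j ∈ Finset.range (n+1), e j k = 0) :
    HasSum (fun t : ℕ => ∑ j ∈ Finset.range (n+1), ∑ k ∈ Finset.range a, e j k / ((t:ℝ) + 1 + j) ^ (p k))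
      (∑ k ∈ Finset.range a, ((∑ j ∈ Finset.range (n+1), e j k * (- Hj j (p k))) + (∑ j ∈ Finset.range (n+1), e j k) * zeta (p k))) := by
  have h : ∀ t : ℕ, ∑ j ∈ Finset.range (n+1), ∑ k ∈ Finset.range a, e j k / ((t:ℝ) + 1 + j) ^ (p k) =
      ∑ k ∈ Finset.range a, ((∑ j ∈ Finset.range (n+1), e j k * (1 / ((t:ℝ) + 1 + j) ^ (p k) - 1 / ((t:ℝ) + 1) ^ (p k))) + (∑ j ∈ Finset.range (n+1), e j k) * (1 / ((t:ℝ) + 1) ^ (p k))) := by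
    intro t
    rw [Finset.sum_comm]
    refine Finset.sum_congr rfl fun k _ => ?_
    rw [Finset.sum_mul, ← Finset.sum_add_distrib]
    refine Finset.sum_congr rfl fun j _ => ?_
    ring
  simp_rw [h]
  refine hasSum_sum fun k hk => ?_
  refine HasSum.add (hasSum_sum fun j _ => (Hj_hasSum j (p k) (hp k hk)).mul_left _) ?_
  rcases hp2 k hk with h2 | h2
  · exact (zeta_hasSum _ h2).mul_left _
  · rw [h2]; simp [hasSum_zero]

lemma S0_hasSum (P : Polynomial ℝ) (a n : ℕ) (ha : 0 < a) (hP : P.natDegree + 1 < a * (n + 1)) :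
    HasSum (fun t : ℕ => PowerSeries.coeff 0 (Tt P a n ((t:ℝ) + 1)))
      (∑ k ∈ Finset.range a, ((∑ j ∈ Finset.range (n+1), cf P a n j k * (- Hj j (a - k))) + (∑ j ∈ Finset.range (n+1), cf P a n j k) * zeta (a - k))) := by
  refine (gen_hasSum a n (cf P a n) (fun k => a - k) (fun k hk => ?_) (fun k hk => ?_)).congr_fun fun t => ?_
  · have := Finset.mem_range.mp hk; omega
  · have := Finset.mem_range.mp hk
    by_cases h : 2 ≤ a - k
    · exact Or.inl h
    · right
      have : k = a - 1 := by omega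
      rw [this]
      exact pf_l1 P a n ha hP
  · rw [Tt_eq P a n ha (by omega) _ (by positivity), map_sum]
    refine Finset.sum_congr rfl fun j _ => ?_
    rw [map_sum]
    refine Finset.sum_congr rfl fun k _ => ?_
    rw [PowerSeries.coeff_C_mul, (lin_inv_pow_coeff _ (by positivity) _).1]
    ring

lemma S2_hasSum (P : Polynomial ℝ) (a n : ℕ) (ha : 0 < a) (hP : P.natDegree + 1 < a * (n + 1)) :
    HasSum (fun t : ℕ => PowerSeries.coeff 2 (Tt P a n ((t:ℝ) + 1)))
      (∑ k ∈ Finset.range a, ((∑ j ∈ Finset.range (n+1), (cf P a n j k * (((a - k : ℕ):ℝ) * ((a - k : ℕ) + 1) / 2)) * (- Hj j (a - k + 2)))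
        + (∑ j ∈ Finset.range (n+1), cf P a n j k * (((a - k : ℕ):ℝ) * ((a - k : ℕ) + 1) / 2)) * zeta (a - k + 2))) := by
  refine (gen_hasSum a n (fun j k => cf P a n j k * (((a - k : ℕ):ℝ) * ((a - k : ℕ) + 1) / 2)) (fun k => a - k + 2) (fun k hk => ?_) (fun k hk => ?_)).congr_fun fun t => ?_
  · omega
  · left; omega
  · rw [Tt_eq P a n ha (by omega) _ (by positivity), map_sum]
    refine Finset.sum_congr rfl fun j _ => ?_
    rw [map_sum]
    refine Finset.sum_congr rfl fun k _ => ?_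
    rw [PowerSeries.coeff_C_mul, (lin_inv_pow_coeff _ (by positivity) _).2.2]
    ring

end

section
open Filter Topology

noncomputable def blk (n : ℕ) (c : ℤ) : Polynomial ℝ :=
  Polynomial.C (1 / (n.factorial : ℝ)) * ∏ i ∈ Finset.range n, (Polynomial.X + Polynomial.C ((c:ℝ) + i))
noncomputable def pb (n : ℕ) (c : ℝ) : PowerSeries ℝ :=
  PowerSeries.C (1 / (n.factorial : ℝ)) * ∏ i ∈ Finset.range n, lin (c + i)

lemma sh_blk (t : ℝ) (n : ℕ) (c : ℤ) : sh t (blk n c) = pb n (t + c) := by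
  rw [blk, pb, map_mul, map_prod, sh_C]
  congr 1
  refine Finset.prod_congr rfl fun i _ => ?_
  rw [sh_lin, add_assoc]

def o1 (n q : ℕ) : ℤ := -(((q + 1) * n : ℕ) : ℤ)
def o2 (n r q : ℕ) : ℤ := -((r * n + 1 + (q + 1) * n : ℕ) : ℤ)

noncomputable def Up (n r : ℕ) : Polynomial ℝ :=
  ∏ q ∈ Finset.range r, ((blk n (o1 n q) * blk n (1 - o1 n q)) * (blk n (o2 n r q) * blk n (1 - o2 n r q)))
noncomputable def Wp (n r : ℕ) : Polynomial ℝ :=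
  (Polynomial.X + Polynomial.C (-((r * n + 1 : ℕ) : ℝ))) * (Polynomial.X + Polynomial.C ((n + (r * n + 1) : ℕ) : ℝ))
noncomputable def Pp (a n r b : ℕ) : Polynomial ℝ :=
  Polynomial.C ((n.factorial : ℝ) ^ a) * Up n r ^ 3 * (Wp n r ^ 2) ^ b

lemma blk_deg (n : ℕ) (c : ℤ) : (blk n c).natDegree ≤ n := by
  refine (Polynomial.natDegree_C_mul_le _ _).trans ?_
  rw [Polynomial.natDegree_prod_of_monic _ _ (fun m _ => Polynomial.monic_X_add_C _)]
  simp only [Polynomial.natDegree_X_add_C, Finset.sum_const, Finset.card_range, smul_eq_mul, mul_one, le_refl]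

lemma Up_deg (n r : ℕ) : (Up n r).natDegree ≤ 4 * r * n := by
  refine (Polynomial.natDegree_prod_le _ _).trans ?_
  calc _ ≤ ∑ q ∈ Finset.range r, 4 * n := by
        refine Finset.sum_le_sum fun q _ => ?_
        refine Polynomial.natDegree_mul_le.trans ?_
        have h1 := (Polynomial.natDegree_mul_le (p := blk n (o1 n q)) (q := blk n (1 - o1 n q)))
        have h2 := (Polynomial.natDegree_mul_le (p := blk n (o2 n r q)) (q := blk n (1 - o2 n r q)))
        have := blk_deg n (o1 n q)
        have := blk_deg n (1 - o1 n q)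
        have := blk_deg n (o2 n r q)
        have := blk_deg n (1 - o2 n r q)
        omega
    _ = _ := by simp; ring

lemma Pp_deg (a n r b : ℕ) (hb : b ≤ 1) : (Pp a n r b).natDegree ≤ 12 * r * n + 4 := by
  refine Polynomial.natDegree_mul_le.trans ?_
  have h1 : (Polynomial.C ((n.factorial : ℝ) ^ a) * Up n r ^ 3).natDegree ≤ 12 * r * n := by
    refine (Polynomial.natDegree_C_mul_le _ _).trans ?_
    rw [Polynomial.natDegree_pow]
    have := Up_deg n r
    calc _ ≤ 3 * (4 * r * n) := by omega
      _ = _ := by ring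
  have h2 : ((Wp n r ^ 2) ^ b).natDegree ≤ 4 := by
    rw [Polynomial.natDegree_pow, Polynomial.natDegree_pow]
    have : (Wp n r).natDegree ≤ 2 := by
      refine Polynomial.natDegree_mul_le.trans ?_
      rw [Polynomial.natDegree_X_add_C, Polynomial.natDegree_X_add_C]
    interval_cases b <;> omega
  omega

/-! integrality -/

noncomputable def Idr (d : ℕ) : Subring (PowerSeries ℝ) :=
  ((PowerSeries.map (Int.castRingHom ℝ)).range).comap (PowerSeries.rescale (d:ℝ))

lemma mem_Idr (d : ℕ) (f : PowerSeries ℝ) : f ∈ Idr d ↔ ∀ k, ∃ z : ℤ, (d:ℝ)^k * PowerSeries.coeff k f = z := by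
  rw [Idr, Subring.mem_comap, RingHom.mem_range]
  constructor
  · rintro ⟨g, hg⟩ k
    refine ⟨PowerSeries.coeff k g, ?_⟩
    have := congrArg (PowerSeries.coeff k) hg
    rw [PowerSeries.coeff_map, PowerSeries.coeff_rescale] at this
    rw [← this]; simp
  · intro h
    choose z hz using h
    refine ⟨PowerSeries.mk z, ?_⟩
    ext k
    rw [PowerSeries.coeff_map, PowerSeries.coeff_rescale, hz]
    simp

lemma Idr_C (d : ℕ) (z : ℤ) : PowerSeries.C (z:ℝ) ∈ Idr d := by
  have : PowerSeries.C (z:ℝ) = ((z : ℤ) : PowerSeries ℝ) := by simp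
  rw [this]; exact intCast_mem _ z

lemma Idr_Xdiv (d m : ℕ) (hm : m ∣ d) : PowerSeries.C (1 / (m:ℝ)) * PowerSeries.X ∈ Idr d := by
  rw [mem_Idr]
  intro k
  rw [PowerSeries.coeff_C_mul, PowerSeries.coeff_X]
  split_ifs with h
  · obtain ⟨e, rfl⟩ := hm
    rcases Nat.eq_zero_or_pos m with rfl | hm
    · exact ⟨0, by simp⟩
    refine ⟨e, ?_⟩
    have : (m:ℝ) ≠ 0 := by positivity
    rw [h]; push_cast; field_simp
  · exact ⟨0, by simp⟩

lemma Idr_X (d : ℕ) : PowerSeries.X ∈ Idr d := by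
  have := Idr_Xdiv d 1 (one_dvd _)
  simpa using this

lemma Idr_lin (d : ℕ) (z : ℤ) : lin z ∈ Idr d := add_mem (Idr_X d) (Idr_C d z)

lemma Idr_geom (d : ℕ) (z : ℤ) (hz : z ∣ (d:ℤ)) (hz0 : z ≠ 0) : PowerSeries.mk (fun k => (-(z:ℝ)⁻¹) ^ k) ∈ Idr d := by
  rw [mem_Idr]
  intro k
  obtain ⟨e, he⟩ := hz
  refine ⟨(-e) ^ k, ?_⟩
  have : (d:ℝ) = z * e := by exact_mod_cast he
  rw [PowerSeries.coeff_mk, ← mul_pow, this]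
  push_cast
  congr 1
  have : (z:ℝ) ≠ 0 := by exact_mod_cast hz0
  field_simp

lemma pb_shift (m : ℕ) (c : ℝ) : pb (m+1) (c + 1) - pb (m+1) c = pb m (c + 1) := by
  rw [pb, pb, pb, Finset.prod_range_succ, Finset.prod_range_succ', ← mul_sub]
  have h : ∏ i ∈ Finset.range m, lin (c + ((i + 1 : ℕ):ℝ)) = ∏ i ∈ Finset.range m, lin (c + 1 + i) := by
    refine Finset.prod_congr rfl fun i _ => ?_
    congr 1; push_cast; ring
  rw [h, ← mul_sub]
  have h2 : lin (c + 1 + m) - lin (c + (0:ℕ)) = PowerSeries.C ((m:ℝ) + 1) := by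
    rw [lin, lin, add_sub_add_left_eq_sub, ← map_sub]
    congr 1; push_cast; ring
  have h3 : PowerSeries.C (1 / ((m+1).factorial : ℝ)) * PowerSeries.C ((m:ℝ) + 1) = PowerSeries.C (1 / (m.factorial : ℝ)) := by
   rw [← map_mul]
   congr 1
   rw [Nat.factorial_succ]
   push_cast
   have := m.factorial_pos
   field_simp
  rw [h2, ← h3]
  ring

lemma pb_zero_mem (d m : ℕ) (h : ∀ i, 1 ≤ i → i ≤ m → i ∣ d) : pb m 0 ∈ Idr d := by
  rcases m with _ | m
  · simp [pb]
  · have : pb (m+1) 0 = (PowerSeries.C (1 / ((m+1 : ℕ):ℝ)) * PowerSeries.X) * ∏ i ∈ Finset.range m, (PowerSeries.C (1 / ((i+1:ℕ):ℝ)) * PowerSeries.X + 1) := by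
      have h1 : ∀ i ∈ Finset.range m, (PowerSeries.C (1 / ((i+1:ℕ):ℝ)) * PowerSeries.X + 1 : PowerSeries ℝ) = PowerSeries.C (1 / ((i+1:ℕ):ℝ)) * lin (0 + (i+1:ℕ)) := by
        intro i _
        rw [lin, mul_add, ← map_mul, zero_add, one_div_mul_cancel (by positivity), map_one]
      rw [Finset.prod_congr rfl h1, Finset.prod_mul_distrib, ← map_prod, pb, Finset.prod_range_succ']
      have h2 : lin (0 + ((0:ℕ):ℝ)) = PowerSeries.X := by simp [lin]
      have h3 : (1 / ((m+1).factorial : ℝ)) = (1 / ((m+1 : ℕ):ℝ)) * ∏ i ∈ Finset.range m, (1 / ((i+1:ℕ):ℝ)) := by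
        rw [Finset.prod_div_distrib, Finset.prod_const_one, ← Nat.cast_prod, Finset.prod_range_add_one_eq_factorial, Nat.factorial_succ]
        push_cast
        have := m.factorial_pos
        field_simp
      rw [h2, h3, map_mul]
      ring
    rw [this]
    refine mul_mem (Idr_Xdiv _ _ (h _ (by omega) le_rfl)) (prod_mem fun i hi => add_mem (Idr_Xdiv _ _ (h _ (by omega) ?_)) (one_mem _))
    have := Finset.mem_range.mp hi; omega

lemma pb_mem (d m : ℕ) (h : ∀ i, 1 ≤ i → i ≤ m → i ∣ d) (c : ℤ) : pb m c ∈ Idr d := by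
  induction m generalizing c with
  | zero => simp [pb]
  | succ m ih =>
    have ih' := ih fun i h1 h2 => h i h1 (by omega)
    induction c using Int.induction_on with
    | zero => simpa using pb_zero_mem d (m+1) h
    | succ c ihc =>
      have h1 := pb_shift m ((c:ℤ):ℝ)
      have h2 := ih' ((c:ℤ) + 1)
      push_cast at h1 h2 ihc ⊢
      rw [sub_eq_iff_eq_add] at h1
      rw [h1]
      exact add_mem h2 ihc
    | pred c ihc =>
      have h1 := pb_shift m ((-(c:ℤ) - 1 : ℤ):ℝ)
      have h2 := ih' (-(c:ℤ))
      push_cast at h1 h2 ihc ⊢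
      rw [sub_add_cancel, sub_eq_iff_eq_add] at h1
      have h3 := sub_mem ihc h2
      rwa [h1, add_sub_cancel_left] at h3

lemma prod_erase_split {M : Type*} [CommMonoid M] (f : ℝ → M) (j p : ℕ) :
    ∏ m ∈ (Finset.range (j + p + 1)).erase j, f ((m:ℝ) - j) = (∏ i ∈ Finset.range j, f (-((i:ℝ) + 1))) * ∏ i ∈ Finset.range p, f ((i:ℝ) + 1) := by
  induction p with
  | zero =>
    rw [Finset.range_zero, Finset.prod_empty, mul_one, add_zero]
    have : (Finset.range (j+1)).erase j = Finset.range j := by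
      ext x; simp only [Finset.mem_erase, Finset.mem_range]; omega
    rw [this, ← Finset.prod_range_reflect]
    refine Finset.prod_congr rfl fun i hi => ?_
    have hi := Finset.mem_range.mp hi
    congr 1
    rw [Nat.cast_sub (by omega), Nat.cast_sub (by omega)]
    push_cast; ring
  | succ p ih =>
    have : (Finset.range (j + (p+1) + 1)).erase j = insert (j + p + 1) ((Finset.range (j + p + 1)).erase j) := by
      ext x; simp only [Finset.mem_erase, Finset.mem_range, Finset.mem_insert]; omega
    rw [this, Finset.prod_insert (by simp), ih, Finset.prod_range_succ]
    have : (((j + p + 1 : ℕ) : ℝ) - j) = (p:ℝ) + 1 := by push_cast; ring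
    rw [this, mul_comm, mul_assoc]

lemma Ei_mem (d n j : ℕ) (hj : j ≤ n) (h : ∀ i, 1 ≤ i → i ≤ n → i ∣ d) : PowerSeries.C (n.factorial : ℝ) * Ei n j ∈ Idr d := by
  have h1 : Ei n j = PowerSeries.C (∏ m ∈ (Finset.range (n+1)).erase j, ((m:ℝ) - j)⁻¹) * ∏ m ∈ (Finset.range (n+1)).erase j, PowerSeries.mk (fun k => (-((m:ℝ) - j)⁻¹) ^ k) := by
    rw [Ei, map_prod, ← Finset.prod_mul_distrib]
    refine Finset.prod_congr rfl fun m hm => ?_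
    apply lin_inv
    rw [sub_ne_zero]
    exact_mod_cast (Finset.mem_erase.mp hm).1
  rw [h1, ← mul_assoc, ← map_mul]
  refine mul_mem ?_ (prod_mem fun m hm => ?_)
  · obtain ⟨p, rfl⟩ := Nat.exists_eq_add_of_le hj
    rw [prod_erase_split (fun x => x⁻¹)]
    have e : ((j + p).factorial : ℝ) * ((∏ i ∈ Finset.range j, (-((i:ℝ) + 1))⁻¹) * ∏ i ∈ Finset.range p, ((i:ℝ) + 1)⁻¹) = (((-1) ^ j * ((j+p).choose j : ℤ) : ℤ) : ℝ) := by
      have e1 : ∏ i ∈ Finset.range j, (-((i:ℝ) + 1))⁻¹ = (-1) ^ j * (j.factorial : ℝ)⁻¹ := by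
        rw [← Finset.prod_range_add_one_eq_factorial, Nat.cast_prod, ← Finset.prod_inv_distrib]
        have : ∀ i ∈ Finset.range j, (-((i:ℝ) + 1))⁻¹ = (-1) * ((i + 1 : ℕ) : ℝ)⁻¹ := by
          intro i _; push_cast; rw [inv_neg]; ring
        rw [Finset.prod_congr rfl this, Finset.prod_mul_distrib, Finset.prod_const, Finset.card_range]
      have e2 : ∏ i ∈ Finset.range p, ((i:ℝ) + 1)⁻¹ = (p.factorial : ℝ)⁻¹ := by
        rw [← Finset.prod_range_add_one_eq_factorial, Nat.cast_prod, ← Finset.prod_inv_distrib]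
        push_cast; rfl
      rw [e1, e2]
      push_cast
      rw [Nat.choose_eq_factorial_div_factorial (by omega), Nat.add_sub_cancel_left]
      rw [Nat.cast_div (Nat.factorial_mul_factorial_dvd_factorial_add j p) (by positivity)]
      push_cast
      field_simp
    rw [e]
    exact Idr_C d _
  · have hm1 := (Finset.mem_erase.mp hm).1
    have hm2 := Finset.mem_range.mp (Finset.mem_erase.mp hm).2
    have := Idr_geom d ((m:ℤ) - j) ?_ (by omega)
    · push_cast at this; exact this
    · rw [← Int.natAbs_dvd]
      exact Int.natCast_dvd_natCast.mpr (h _ (by omega) (by omega))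

lemma shPp_eq (a n r b j : ℕ) : sh (-(j:ℝ)) (Pp a n r b) * Ei n j ^ a =
    (PowerSeries.C (n.factorial : ℝ) * Ei n j) ^ a * sh (-(j:ℝ)) (Up n r) ^ 3 * (sh (-(j:ℝ)) (Wp n r) ^ 2) ^ b := by
  rw [Pp, map_mul, map_mul, sh_C, map_pow, map_pow, map_pow, map_pow, mul_pow]
  ring

lemma cf_int (a n r b j k d : ℕ) (hj : j ≤ n) (h : ∀ i, 1 ≤ i → i ≤ n → i ∣ d) : ∃ z : ℤ, (d:ℝ) ^ k * cf (Pp a n r b) a n j k = z := by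
  have : sh (-(j:ℝ)) (Pp a n r b) * Ei n j ^ a ∈ Idr d := by
    rw [shPp_eq]
    have hb : ∀ c : ℤ, sh (-(j:ℝ)) (blk n c) ∈ Idr d := by
      intro c
      rw [sh_blk]
      have := pb_mem d n h (-(j:ℤ) + c)
      push_cast at this; exact this
    refine mul_mem (mul_mem (pow_mem (Ei_mem d n j hj h) _) (pow_mem ?_ _)) (pow_mem (pow_mem ?_ _) _)
    · rw [Up, map_prod]
      refine prod_mem fun q _ => ?_
      simp only [map_mul]
      exact mul_mem (mul_mem (hb _) (hb _)) (mul_mem (hb _) (hb _))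
    · rw [Wp, map_mul, sh_lin, sh_lin]
      have h1 := Idr_lin d (-(j:ℤ) + -((r * n + 1 : ℕ) : ℤ))
      have h2 := Idr_lin d (-(j:ℤ) + ((n + (r * n + 1) : ℕ) : ℤ))
      push_cast at h1 h2 ⊢
      exact mul_mem h1 h2
  exact (mem_Idr d _).mp this k

end

section
open Filter Topology

noncomputable def ng : PowerSeries ℝ →+* PowerSeries ℝ := PowerSeries.rescale (-1)

lemma ng_lin (b : ℝ) : ng (lin b) = - lin (-b) := by
  ext k
  rw [ng, PowerSeries.coeff_rescale, map_neg, lin, lin, map_add, map_add, PowerSeries.coeff_X, PowerSeries.coeff_C, PowerSeries.coeff_C]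
  rcases k with _ | _ | k <;> simp

lemma ng_C (b : ℝ) : ng (PowerSeries.C b) = PowerSeries.C b := by
  ext k
  rw [ng, PowerSeries.coeff_rescale, PowerSeries.coeff_C]
  rcases k with _ | k <;> simp

lemma ng_lin_inv (b : ℝ) (hb : b ≠ 0) : ng (lin b)⁻¹ = - (lin (-b))⁻¹ := by
  have h1 : ng (lin b) * ng (lin b)⁻¹ = 1 := by rw [← map_mul, lin_mul_inv b hb, map_one]
  rw [ng_lin] at h1
  have h2 := lin_mul_inv (-b) (by simpa using hb)
  calc ng (lin b)⁻¹ = ng (lin b)⁻¹ * (lin (-b) * (lin (-b))⁻¹) := by rw [h2, mul_one]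
    _ = -((- lin (-b) * ng (lin b)⁻¹) * (lin (-b))⁻¹) := by ring
    _ = _ := by rw [h1, one_mul]

lemma ng_pb (n : ℕ) (hn : Even n) (c : ℝ) : ng (pb n c) = pb n (1 - n - c) := by
  rw [pb, pb, map_mul, ng_C, map_prod]
  congr 1
  simp_rw [ng_lin]
  rw [Finset.prod_neg, Finset.card_range, hn.neg_one_pow, one_mul, ← Finset.prod_range_reflect]
  refine Finset.prod_congr rfl fun i hi => ?_
  have := Finset.mem_range.mp hi
  congr 1
  rw [Nat.cast_sub (by omega), Nat.cast_sub (by omega)]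
  push_cast; ring

lemma ng_sh_blk (n : ℕ) (hn : Even n) (j : ℝ) (c : ℤ) : ng (sh (-j) (blk n c)) = sh (j - n) (blk n (1 - c)) := by
  rw [sh_blk, sh_blk, ng_pb n hn]
  congr 1
  push_cast; ring

lemma ng_Ei (n j : ℕ) (hn : Even n) (hj : j ≤ n) : ng (Ei n j) = Ei n (n - j) := by
  rw [Ei, Ei, map_prod]
  have h1 : ∀ m ∈ (Finset.range (n+1)).erase j, ng (lin ((m:ℝ) - j))⁻¹ = - (lin ((j:ℝ) - m))⁻¹ := by
    intro m hm
    rw [ng_lin_inv, neg_sub]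
    rw [sub_ne_zero]
    exact_mod_cast (Finset.mem_erase.mp hm).1
  rw [Finset.prod_congr rfl h1, Finset.prod_neg, Finset.card_erase_of_mem (Finset.mem_range.mpr (by omega)), Finset.card_range, Nat.add_sub_cancel,
    hn.neg_one_pow, one_mul]
  refine Finset.prod_bij' (fun m _ => n - m) (fun m _ => n - m) ?_ ?_ ?_ ?_ ?_
  · intro m hm; simp only [Finset.mem_erase, Finset.mem_range] at hm ⊢; omega
  · intro m hm; simp only [Finset.mem_erase, Finset.mem_range] at hm ⊢; omega
  · intro m hm; simp only [Finset.mem_erase, Finset.mem_range] at hm ⊢; omega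
  · intro m hm; simp only [Finset.mem_erase, Finset.mem_range] at hm ⊢; omega
  · intro m hm
    simp only [Finset.mem_erase, Finset.mem_range] at hm
    rw [Nat.cast_sub (by omega), Nat.cast_sub hj]
    congr 2; ring

lemma cf_symm (a n r b j k : ℕ) (hn : Even n) (hj : j ≤ n) : cf (Pp a n r b) a n (n - j) k = (-1) ^ k * cf (Pp a n r b) a n j k := by
  have e : ((n - j : ℕ) : ℝ) = n - j := Nat.cast_sub hj
  have key : sh (-((n - j : ℕ) : ℝ)) (Pp a n r b) * Ei n (n - j) ^ a = ng (sh (-(j:ℝ)) (Pp a n r b) * Ei n j ^ a) := by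
    rw [e, neg_sub, map_mul, map_pow, ng_Ei n j hn hj]
    congr 1
    rw [Pp]
    have hU : ng (sh (-(j:ℝ)) (Up n r)) = sh (j - n) (Up n r) := by
      rw [Up, map_prod, map_prod, map_prod]
      refine Finset.prod_congr rfl fun q _ => ?_
      simp only [map_mul, ng_sh_blk n hn]
      rw [sub_sub_cancel, sub_sub_cancel]
      ring
    have hW : ng (sh (-(j:ℝ)) (Wp n r)) = sh (j - n) (Wp n r) := by
      rw [Wp, map_mul, map_mul, map_mul, sh_lin, sh_lin, sh_lin, sh_lin, ng_lin, ng_lin, neg_mul_neg, mul_comm]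
      congr 2 <;> push_cast <;> ring
    simp only [map_mul, map_pow, sh_C, ng_C, hU, hW]
  rw [cf, key, ng, PowerSeries.coeff_rescale, cf]

lemma cf_sum_zero (a n r b k : ℕ) (hn : Even n) (hk : Odd k) : ∑ j ∈ Finset.range (n+1), cf (Pp a n r b) a n j k = 0 := by
  have h := Finset.sum_range_reflect (fun j => cf (Pp a n r b) a n j k) (n+1)
  have h2 : ∑ j ∈ Finset.range (n+1), cf (Pp a n r b) a n (n + 1 - 1 - j) k = - ∑ j ∈ Finset.range (n+1), cf (Pp a n r b) a n j k := by
    rw [← Finset.sum_neg_distrib]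
    refine Finset.sum_congr rfl fun j hj => ?_
    have := Finset.mem_range.mp hj
    rw [Nat.add_sub_cancel, cf_symm a n r b j k hn (by omega), hk.neg_one_pow, neg_one_mul]
  linarith

/-! sizes -/

lemma fact_lower (n : ℕ) : ((n:ℝ) / Real.exp 1) ^ n ≤ n.factorial := by
  rw [div_pow, div_le_iff₀ (by positivity), ← Real.exp_nat_mul, mul_one]
  have := Real.pow_div_factorial_le_exp (n:ℝ) (by positivity) n
  rw [div_le_iff₀ (by positivity)] at this
  linarith

lemma fact_upper (n : ℕ) (hn : 1 ≤ n) : (n.factorial : ℝ) ≤ Real.exp 1 * n * ((n:ℝ) / Real.exp 1) ^ n := by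
  induction n, hn using Nat.le_induction with
  | base => simp
  | succ n hn ih =>
    have hn0 : (0:ℝ) < n := by exact_mod_cast hn
    have h1 : ((n:ℝ) / (n+1)) ^ (n+1) ≤ Real.exp (-1) := by
      have : (n:ℝ) / (n+1) ≤ Real.exp (-(1/((n:ℝ)+1))) := by
        have := Real.add_one_le_exp (-(1/((n:ℝ)+1)))
        refine le_trans (le_of_eq ?_) this
        field_simp; ring
      calc _ ≤ (Real.exp (-(1/((n:ℝ)+1)))) ^ (n+1) := by gcongr
        _ = Real.exp (-1) := by
          rw [← Real.exp_nat_mul]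
          congr 1
          push_cast; field_simp
    rw [div_pow, div_le_iff₀ (by positivity), Real.exp_neg] at h1
    rw [Nat.factorial_succ]
    push_cast
    have e1 : Real.exp 1 * n * ((n:ℝ) / Real.exp 1) ^ n = (n:ℝ) ^ (n+1) * Real.exp 1 / Real.exp 1 ^ n := by
      rw [div_pow]; field_simp; ring
    have e2 : Real.exp 1 * ((n:ℝ)+1) * (((n:ℝ)+1) / Real.exp 1) ^ (n+1) = ((n:ℝ)+1) * (((n:ℝ)+1)^(n+1) / Real.exp 1 ^ n) := by
      rw [div_pow, pow_succ (Real.exp 1)]; field_simp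
    rw [e2]
    refine mul_le_mul_of_nonneg_left (ih.trans ?_) (by positivity)
    rw [e1]
    have h2 : (n:ℝ)^(n+1) * Real.exp 1 ≤ ((n:ℝ)+1)^(n+1) := by
      have := mul_le_mul_of_nonneg_right h1 (Real.exp_pos 1).le
      calc _ ≤ _ := this
        _ = _ := by field_simp
    gcongr

/-- common bound on blocks: all linear factors of size at most M n -/
lemma pb_Bd (n : ℕ) (hn : 1 ≤ n) (c M : ℝ) (h : ∀ i ∈ Finset.range n, |c + i| + 1/2 ≤ M * n) : Bd (pb n c) ((M * Real.exp 1) ^ n) := by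
  have hn0 : (0:ℝ) < n := by exact_mod_cast hn
  have h1 := (Bd.C (1 / (n.factorial : ℝ))).mul (Bd.prod (Finset.range n) (fun i => lin (c + i)) (fun i => M * n) (fun i hi => (Bd.lin _).mono (h i hi)))
  refine Bd.mono h1 ?_
  rw [Finset.prod_const, Finset.card_range, abs_of_pos (by positivity), one_div_mul_eq_div, div_le_iff₀ (by positivity)]
  have hM : 0 ≤ M := by
    have h0 := h 0 (by simp; omega)
    have h3 : 0 < M * n := lt_of_lt_of_le (by positivity) h0
    exact (pos_of_mul_pos_left h3 hn0.le).le
  calc (M * n) ^ n = (M * Real.exp 1) ^ n * ((n:ℝ) / Real.exp 1) ^ n := by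
        rw [← mul_pow]; congr 1; field_simp
    _ ≤ _ := mul_le_mul_of_nonneg_left (fact_lower n) (by positivity)

lemma wallis (m : ℕ) : ∏ i ∈ Finset.range m, (1 / (((i:ℝ) + 1) - 1/2)) ≤ (m + 1) / m.factorial := by
  induction m with
  | zero => simp
  | succ m ih =>
    rw [Finset.prod_range_succ, Nat.factorial_succ]
    have h0 : (0:ℝ) < m + 1 - 1/2 := by have := (Nat.cast_nonneg m : (0:ℝ) ≤ m); linarith
    refine (mul_le_mul_of_nonneg_right ih (by positivity)).trans ?_
    push_cast
    rw [div_mul_div_comm, mul_one, div_le_div_iff₀ (by positivity) (by positivity)]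
    have : (0:ℝ) < m.factorial := by positivity
    have h3 : ((m:ℝ) + 1) * (m + 1) ≤ (m + 1 + 1) * (m + 1 - 1/2) := by nlinarith
    nlinarith

lemma Ei_Bd (n j : ℕ) (hj : j ≤ n) : Bd (PowerSeries.C (n.factorial : ℝ) * Ei n j) (2 ^ n * ((n:ℝ) + 1) ^ 2) := by
  have h1 := (Bd.C (n.factorial : ℝ)).mul (Bd.prod ((Finset.range (n+1)).erase j) (fun m => (lin ((m:ℝ) - j))⁻¹) (fun m => 1 / (|(m:ℝ) - j| - 1/2)) (fun m hm => Bd.lin_inv _ ?_))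
  · refine Bd.mono h1 ?_
    obtain ⟨p, rfl⟩ := Nat.exists_eq_add_of_le hj
    rw [prod_erase_split (fun x => 1 / (|x| - 1/2)), abs_of_pos (by positivity)]
    have e1 : ∀ i : ℕ, |(-((i:ℝ) + 1))| = i + 1 := fun i => by rw [abs_neg, abs_of_pos (by positivity)]
    have e2 : ∀ i : ℕ, |((i:ℝ) + 1)| = i + 1 := fun i => abs_of_pos (by positivity)
    simp_rw [e1, e2]
    have hpos : ∀ m : ℕ, 0 ≤ ∏ i ∈ Finset.range m, (1 / (((i:ℝ) + 1) - 1/2)) := fun m => Finset.prod_nonneg fun i _ => by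
      have : (0:ℝ) < i + 1 - 1/2 := by have := (Nat.cast_nonneg i : (0:ℝ) ≤ i); linarith
      positivity
    calc _ ≤ ((j+p).factorial : ℝ) * (((j:ℝ) + 1) / j.factorial * (((p:ℝ) + 1) / p.factorial)) := by
          refine mul_le_mul_of_nonneg_left (mul_le_mul (wallis j) (wallis p) (hpos p) (by positivity)) (by positivity)
      _ = ((j + p).choose j : ℝ) * (((j:ℝ) + 1) * ((p:ℝ) + 1)) := by
          rw [Nat.choose_eq_factorial_div_factorial (by omega), Nat.add_sub_cancel_left]
          rw [Nat.cast_div (Nat.factorial_mul_factorial_dvd_factorial_add j p) (by positivity)]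
          push_cast
          field_simp
      _ ≤ _ := by
          have h2 : ((j + p).choose j : ℝ) ≤ 2 ^ (j + p) := by exact_mod_cast Nat.choose_le_two_pow _ _
          have h3 : (0:ℝ) ≤ j := by positivity
          have h4 : (0:ℝ) ≤ p := by positivity
          refine mul_le_mul h2 ?_ (by positivity) (by positivity)
          push_cast
          nlinarith
  · have := (Finset.mem_erase.mp hm).1
    have h2 : (1:ℤ) ≤ |(m:ℤ) - j| := Int.one_le_abs (by omega)
    exact_mod_cast h2

lemma Up_Bd (n r : ℕ) (hn : 1 ≤ n) (t M : ℝ) (h : |t| + (2 * r + 1) * n + 2 ≤ M * n) : Bd (sh t (Up n r)) ((M * Real.exp 1) ^ (4 * r * n)) := by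
  rw [Up, map_prod]
  have hb : ∀ c : ℤ, |(c:ℝ)| + n ≤ (2 * r + 1) * n + 2 → Bd (sh t (blk n c)) ((M * Real.exp 1) ^ n) := by
    intro c hc
    rw [sh_blk]
    refine pb_Bd n hn _ _ fun i hi => ?_
    have h1 : (i:ℝ) + 1 ≤ n := by exact_mod_cast Finset.mem_range.mp hi
    have h2 := abs_add_le (t + c) (i:ℝ)
    have h3 := abs_add_le t (c:ℝ)
    rw [abs_of_nonneg (Nat.cast_nonneg i : (0:ℝ) ≤ i)] at h2
    linarith
  have e : (M * Real.exp 1) ^ (4 * r * n) = ∏ q ∈ Finset.range r, (((M * Real.exp 1) ^ n * (M * Real.exp 1) ^ n) * ((M * Real.exp 1) ^ n * (M * Real.exp 1) ^ n)) := by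
    rw [Finset.prod_const, Finset.card_range]; ring
  rw [e]
  refine Bd.prod _ _ _ fun q hq => ?_
  have hq1 : (q:ℝ) + 1 ≤ r := by exact_mod_cast Finset.mem_range.mp hq
  have hn0 : (0:ℝ) ≤ n := by positivity
  have hq0 : (0:ℝ) ≤ q := by positivity
  have hqn : ((q:ℝ)+1) * n ≤ r * n := mul_le_mul_of_nonneg_right hq1 hn0
  have hqn0 : 0 ≤ (q:ℝ) * n := by positivity
  have hrn0 : 0 ≤ (r:ℝ) * n := by positivity
  rw [map_mul, map_mul, map_mul]
  refine ((hb _ ?_).mul (hb _ ?_)).mul ((hb _ ?_).mul (hb _ ?_)) <;> simp only [o1, o2] <;> push_cast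
  · rw [abs_of_nonpos (by linarith)]; linarith
  · rw [abs_of_nonneg (by linarith)]; linarith
  · rw [abs_of_nonpos (by linarith)]; linarith
  · rw [abs_of_nonneg (by linarith)]; linarith

lemma Wp_Bd (n r : ℕ) (hn : 1 ≤ n) (t M : ℝ) (h : |t| + (2 * r + 1) * n + 2 ≤ M * n) : Bd (sh t (Wp n r)) ((M * n) ^ 2) := by
  rw [Wp, map_mul, sh_lin, sh_lin, pow_two]
  have hrn0 : 0 ≤ (r:ℝ) * n := by positivity
  have hn0 : (0:ℝ) ≤ n := by positivity
  refine (Bd.mono (Bd.lin _) ?_).mul (Bd.mono (Bd.lin _) ?_)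
  · refine le_trans (add_le_add_left (abs_add_le _ _) _) ?_
    rw [abs_neg, Nat.abs_cast]; push_cast; linarith
  · refine le_trans (add_le_add_left (abs_add_le _ _) _) ?_
    rw [Nat.abs_cast]; push_cast; linarith

lemma UW_Bd (n r b : ℕ) (hn : 1 ≤ n) (t M : ℝ) (h : |t| + (2 * r + 1) * n + 2 ≤ M * n) :
    Bd (sh t (Up n r) ^ 3 * (sh t (Wp n r) ^ 2) ^ b) ((M * Real.exp 1) ^ (12 * r * n) * ((M * n) ^ 4) ^ b) := by
  refine (((Up_Bd n r hn t M h).pow 3).mul (((Wp_Bd n r hn t M h).pow 2).pow b)).mono (le_of_eq ?_)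
  ring

lemma cf_Bd (a n r b j k : ℕ) (hn : 1 ≤ n) (hj : j ≤ n) : |cf (Pp a n r b) a n j k| ≤
    2 ^ k * ((2 ^ n * ((n:ℝ) + 1) ^ 2) ^ a * ((3 * (r + 2) * Real.exp 1) ^ (12 * r * n) * ((3 * (r + 2) * n) ^ 4) ^ b)) := by
  rw [cf]
  refine Bd.coeff ?_ k
  rw [shPp_eq]
  have hn1 : (1:ℝ) ≤ n := by exact_mod_cast hn
  have hj1 : (j:ℝ) ≤ n := by exact_mod_cast hj
  have h := UW_Bd n r b hn (-(j:ℝ)) (3 * (r+2)) (by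
    rw [abs_neg, Nat.abs_cast]
    have hrn0 : 0 ≤ (r:ℝ) * n := by positivity
    nlinarith)
  rw [mul_assoc]
  exact ((Ei_Bd n j hj).pow a).mul h

end

section
open Filter Topology

lemma pb_c0 (n : ℕ) (c : ℝ) : PowerSeries.coeff 0 (pb n c) = 1 / (n.factorial : ℝ) * ∏ i ∈ Finset.range n, (c + i) := by
  rw [PowerSeries.coeff_zero_eq_constantCoeff_apply, pb, map_mul, map_prod]
  simp only [lin_const, PowerSeries.constantCoeff_C]

lemma pb_ge_pos (n : ℕ) (c : ℝ) (hc : 1 ≤ c) : 1 ≤ |PowerSeries.coeff 0 (pb n c)| := by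
  rw [pb_c0, one_div_mul_eq_div, abs_div, Nat.abs_cast, le_div_iff₀ (by positivity), one_mul, Finset.abs_prod]
  rw [← Finset.prod_range_add_one_eq_factorial]
  push_cast
  refine Finset.prod_le_prod (fun i _ => by positivity) fun i _ => ?_
  rw [abs_of_pos (by positivity)]; linarith

lemma pb_ge_neg (n : ℕ) (c : ℝ) (hc : c ≤ -n) : 1 ≤ |PowerSeries.coeff 0 (pb n c)| := by
  rw [pb_c0, one_div_mul_eq_div, abs_div, Nat.abs_cast, le_div_iff₀ (by positivity), one_mul, Finset.abs_prod]
  rw [← Finset.prod_range_add_one_eq_factorial]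
  push_cast
  rw [← Finset.prod_range_reflect]
  refine Finset.prod_le_prod (fun i _ => by positivity) fun i hi => ?_
  have hi := Finset.mem_range.mp hi
  have h1 : ((n - 1 - i : ℕ) : ℝ) + 1 + i = n := by norm_cast; omega
  rw [abs_of_nonpos (by
    have : (i:ℝ) ≤ n := by exact_mod_cast hi.le
    linarith)]; linarith

lemma U_ge (n r : ℕ) : 1 ≤ |PowerSeries.coeff 0 (sh ((r * n + 1 : ℕ) : ℝ) (Up n r))| := by
  rw [Up, map_prod, PowerSeries.coeff_zero_eq_constantCoeff_apply, map_prod, Finset.abs_prod]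
  rw [← Finset.prod_const_one (s := Finset.range r)]
  refine Finset.prod_le_prod (fun _ _ => zero_le_one) fun q hq => ?_
  have hq1 : (q:ℝ) + 1 ≤ r := by exact_mod_cast Finset.mem_range.mp hq
  have hn0 : (0:ℝ) ≤ n := by positivity
  have hqn : ((q:ℝ)+1) * n ≤ r * n := mul_le_mul_of_nonneg_right hq1 hn0
  have hqn0 : 0 ≤ (q:ℝ) * n := by positivity
  have hrn0 : 0 ≤ (r:ℝ) * n := by positivity
  simp only [map_mul, sh_blk, abs_mul, ← PowerSeries.coeff_zero_eq_constantCoeff_apply]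
  refine one_le_mul_of_one_le_of_one_le (one_le_mul_of_one_le_of_one_le (pb_ge_pos _ _ ?_) (pb_ge_pos _ _ ?_)) (one_le_mul_of_one_le_of_one_le (pb_ge_neg _ _ ?_) (pb_ge_pos _ _ ?_)) <;>
    simp only [o1, o2] <;> push_cast <;> linarith

lemma pb_X (n : ℕ) (c : ℝ) (i : ℕ) (hi : i < n) (h : c + i = 0) : PowerSeries.X ∣ pb n c := by
  rw [pb]
  refine Dvd.dvd.mul_left ?_ _
  refine dvd_trans ?_ (Finset.dvd_prod_of_mem _ (Finset.mem_range.mpr hi))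
  rw [h, lin]; simp

lemma U_X (n r t : ℕ) (hn : 1 ≤ n) (h1 : 1 ≤ t) (h2 : t ≤ 2 * r * n + 1) (h3 : t ≠ r * n + 1) : PowerSeries.X ∣ sh (t : ℝ) (Up n r) := by
  rw [Up, map_prod]
  have key : ∀ t', 1 ≤ t' → t' ≤ r * n → ∃ q < r, ∃ i < n, t' + i = (q + 1) * n := by
    intro t' h1 h2
    refine ⟨(t' - 1) / n, ?_, n - 1 - (t' - 1) % n, by omega, ?_⟩
    · rw [Nat.div_lt_iff_lt_mul (by omega)]; omega
    · have := Nat.div_add_mod (t' - 1) n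
      have := Nat.mod_lt (t' - 1) (by omega : 0 < n)
      rw [add_mul, one_mul, mul_comm ((t'-1)/n)]
      omega
  rcases lt_or_gt_of_ne h3 with h | h
  · obtain ⟨q, hq, i, hi, e⟩ := key t h1 (by omega)
    refine dvd_trans ?_ (Finset.dvd_prod_of_mem _ (Finset.mem_range.mpr hq))
    simp only [map_mul, sh_blk]
    refine Dvd.dvd.mul_right (Dvd.dvd.mul_right (pb_X n _ i hi ?_) _) _
    have e' : (t:ℝ) + i = (q+1) * n := by exact_mod_cast e
    simp only [o1]; push_cast; linarith
  · obtain ⟨q, hq, i, hi, e⟩ := key (t - (r * n + 1)) (by omega) (by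
      have : 2 * r * n = r * n + r * n := by ring
      omega)
    refine dvd_trans ?_ (Finset.dvd_prod_of_mem _ (Finset.mem_range.mpr hq))
    simp only [map_mul, sh_blk]
    refine Dvd.dvd.mul_left (Dvd.dvd.mul_right (pb_X n _ i hi ?_) _) _
    have e1 : t + i = r * n + 1 + (q+1) * n := by omega
    have e' : (t:ℝ) + i = r * n + 1 + (q+1) * n := by exact_mod_cast e1
    simp only [o2]; push_cast; linarith

lemma Tt_form (a n r b : ℕ) (t : ℝ) : Tt (Pp a n r b) a n t =
    sh t (Up n r) ^ 3 * (sh t (Wp n r) ^ 2) ^ b * (PowerSeries.C ((n.factorial : ℝ) ^ a) * Di n t ^ a) := by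
  rw [Tt, Pp, map_mul, map_mul, sh_C, map_pow (sh t) (Up n r), map_pow (sh t) (Wp n r ^ 2), map_pow (sh t) (Wp n r)]
  ring

lemma Tt_zero (a n r b t e : ℕ) (hn : 1 ≤ n) (h1 : 1 ≤ t) (h2 : t ≤ 2 * r * n + 1) (h3 : t ≠ r * n + 1) (he : e < 3) :
    PowerSeries.coeff e (Tt (Pp a n r b) a n t) = 0 := by
  have h : PowerSeries.X ^ 3 ∣ Tt (Pp a n r b) a n t := by
    rw [Tt_form, mul_assoc]
    exact Dvd.dvd.mul_right (pow_dvd_pow_of_dvd (U_X n r t hn h1 h2 h3) 3) _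
  exact PowerSeries.X_pow_dvd_iff.mp h e he

lemma Tt_Bd (a n r b : ℕ) (hn : 1 ≤ n) (t M : ℝ) (ht : 1 ≤ t) (h : t + (2 * r + 1) * n + 2 ≤ M * n) :
    Bd (Tt (Pp a n r b) a n t) (((M * Real.exp 1) ^ (12 * r * n) * ((M * n) ^ 4) ^ b) *
      ((n.factorial : ℝ) * ∏ m ∈ Finset.range (n+1), (1 / (t + m - 1/2))) ^ a) := by
  rw [Tt_form]
  refine (UW_Bd n r b hn t M (by rwa [abs_of_pos (by linarith)])).mul ?_
  rw [mul_pow]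
  refine Bd.mul ((Bd.C _).mono (le_of_eq (abs_of_pos (by positivity)))) (Bd.pow ?_ a)
  rw [Di]
  refine Bd.prod _ _ _ fun m _ => ?_
  have h1 : 1 ≤ t + m := by have := (Nat.cast_nonneg m : (0:ℝ) ≤ m); linarith
  have := Bd.lin_inv (t + m) (by rw [abs_of_pos (by linarith)]; exact h1)
  rwa [abs_of_pos (by linarith)] at this

noncomputable def Qq (n r : ℕ) : ℝ := ∏ m ∈ Finset.range (n+1), (((r * n + 1 : ℕ) : ℝ) + m)
noncomputable def B0 (a n r : ℕ) : ℝ := (n.factorial / Qq n r) ^ a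
noncomputable def Lc (n r : ℕ) : ℝ := (3 * (r + 2) * Real.exp 1) ^ (12 * r * n)

lemma Qq_pos (n r : ℕ) : 0 < Qq n r := Finset.prod_pos fun i _ => by positivity
lemma B0_pos (a n r : ℕ) : 0 < B0 a n r := by have := Qq_pos n r; unfold B0; positivity
lemma Lc_one (n r : ℕ) : 1 ≤ Lc n r := by
  refine one_le_pow₀ ?_
  have := Real.add_one_le_exp 1
  have : (0:ℝ) ≤ r := by positivity
  nlinarith

lemma prod_s (n r : ℕ) (hn : 1 ≤ n) (hr : 1 ≤ r) : ∏ m ∈ Finset.range (n+1), (1 / (((r * n + 1 : ℕ) : ℝ) + m - 1/2)) ≤ 3 / Qq n r := by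
  rw [le_div_iff₀ (Qq_pos n r), Qq, ← Finset.prod_mul_distrib]
  have hrn : (1:ℝ) ≤ r * n := by exact_mod_cast Nat.mul_le_mul hr hn
  have key : ∀ N : ℕ, ∏ m ∈ Finset.range N, (1 / (((r * n + 1 : ℕ) : ℝ) + m - 1/2) * (((r * n + 1 : ℕ) : ℝ) + m)) ≤ ((r:ℝ) * n + N) / (r * n) := by
    intro N
    induction N with
    | zero => simp; rw [div_self]; linarith
    | succ N ih =>
      rw [Finset.prod_range_succ]
      push_cast at ih ⊢
      have hN : (0:ℝ) ≤ N := by positivity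
      have h1 : 1 / ((r:ℝ) * n + 1 + N - 1/2) * (r * n + 1 + N) ≤ (r * n + (N + 1)) / (r * n + N) := by
        rw [one_div_mul_eq_div, div_le_div_iff₀ (by linarith) (by linarith)]
        nlinarith
      refine (mul_le_mul ih h1 ?_ (by positivity)).trans (le_of_eq ?_)
      · rw [one_div_mul_eq_div]; refine div_nonneg (by linarith) (by linarith)
      · field_simp
  refine (key (n+1)).trans ?_
  rw [div_le_iff₀ (by linarith)]
  push_cast
  have : (n:ℝ) ≤ r * n := by exact_mod_cast Nat.le_mul_of_pos_left n hr
  linarith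

lemma Ts_Bd (a n r b e : ℕ) (hn : 1 ≤ n) (hr : 1 ≤ r) (hb : b ≤ 1) (he : e ≤ 2) :
    |PowerSeries.coeff e (Tt (Pp a n r b) a n ((r * n + 1 : ℕ) : ℝ))| ≤ B0 a n r * (4 * 3 ^ a * Lc n r * (3 * (r + 2) * n) ^ 4) := by
  have hn1 : (1:ℝ) ≤ n := by exact_mod_cast hn
  have hr1 : (1:ℝ) ≤ r := by exact_mod_cast hr
  have h := (Tt_Bd a n r b hn ((r * n + 1 : ℕ) : ℝ) (3 * (r + 2)) (by push_cast; nlinarith) (by push_cast; nlinarith)).coeff e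
  refine h.trans ?_
  have h1 : (2:ℝ) ^ e ≤ 4 := by interval_cases e <;> norm_num
  have hx : (1:ℝ) ≤ (3 * (r + 2) * n) ^ 4 := one_le_pow₀ (by nlinarith)
  have h2 : ((3 * ((r:ℝ) + 2) * n) ^ 4) ^ b ≤ (3 * (r + 2) * n) ^ 4 := by
    interval_cases b
    · simpa using hx
    · simp
  have hQ := Qq_pos n r
  have hnn : ∀ m ∈ Finset.range (n+1), 0 ≤ (1 / (((r * n + 1 : ℕ) : ℝ) + m - 1/2)) := fun m _ => by
    have : (0:ℝ) ≤ m := by positivity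
    have : (0:ℝ) ≤ (r:ℝ) * n := by positivity
    apply one_div_nonneg.mpr; push_cast; linarith
  have h3 : ((n.factorial : ℝ) * ∏ m ∈ Finset.range (n+1), (1 / (((r * n + 1 : ℕ) : ℝ) + m - 1/2))) ^ a ≤ 3 ^ a * B0 a n r := by
    rw [B0, ← mul_pow]
    refine pow_le_pow_left₀ (mul_nonneg (by positivity) (Finset.prod_nonneg hnn)) ?_ a
    refine (mul_le_mul_of_nonneg_left (prod_s n r hn hr) (by positivity)).trans (le_of_eq ?_)
    field_simp
  have hB := B0_pos a n r
  have hL := Lc_one n r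
  calc _ ≤ 4 * ((Lc n r * (3 * (r + 2) * n) ^ 4) * (3 ^ a * B0 a n r)) := by
        unfold Lc
        have h4 := pow_nonneg (mul_nonneg (Nat.cast_nonneg (n.factorial) : (0:ℝ) ≤ n.factorial) (Finset.prod_nonneg hnn)) a
        gcongr
    _ = _ := by ring

lemma Di_c0 (n : ℕ) (r : ℕ) : PowerSeries.coeff 0 (Di n ((r * n + 1 : ℕ) : ℝ)) = 1 / Qq n r := by
  rw [Di, Qq, PowerSeries.coeff_zero_eq_constantCoeff_apply, map_prod, one_div, ← Finset.prod_inv_distrib]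
  refine Finset.prod_congr rfl fun m _ => ?_
  rw [PowerSeries.constantCoeff_inv, lin_const]

lemma Ts_b0 (a n r : ℕ) : B0 a n r ≤ |PowerSeries.coeff 0 (Tt (Pp a n r 0) a n ((r * n + 1 : ℕ) : ℝ))| := by
  have h : PowerSeries.coeff 0 (Tt (Pp a n r 0) a n ((r * n + 1 : ℕ) : ℝ)) = (PowerSeries.coeff 0 (sh ((r * n + 1 : ℕ) : ℝ) (Up n r))) ^ 3 * B0 a n r := by
    rw [Tt_form, pow_zero, mul_one, coeff0_mul, coeff0_mul, B0]
    have hD := Di_c0 n r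
    rw [PowerSeries.coeff_zero_eq_constantCoeff_apply] at hD ⊢
    simp only [PowerSeries.coeff_zero_eq_constantCoeff_apply, map_pow, PowerSeries.constantCoeff_C, hD]
    rw [div_pow, div_pow, one_pow]; ring
  rw [h, abs_mul, abs_of_pos (B0_pos a n r), abs_pow]
  exact le_mul_of_one_le_left (B0_pos a n r).le (one_le_pow₀ (U_ge n r))

lemma Ts_b1_aux (a n r : ℕ) : Tt (Pp a n r 1) a n ((r * n + 1 : ℕ) : ℝ) = PowerSeries.X ^ 2 * (lin ((r * n + 1 : ℕ) + (n + (r * n + 1) : ℕ)) ^ 2 * Tt (Pp a n r 0) a n ((r * n + 1 : ℕ) : ℝ)) := by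
  rw [Tt_form, Tt_form, Wp, map_mul, sh_lin, sh_lin, add_neg_cancel]
  have : lin 0 = PowerSeries.X := by simp [lin]
  rw [this]; ring

lemma Ts_b1_0 (a n r : ℕ) : PowerSeries.coeff 0 (Tt (Pp a n r 1) a n ((r * n + 1 : ℕ) : ℝ)) = 0 := by
  rw [Ts_b1_aux, coeff0_mul]; simp

lemma Ts_b1_2 (a n r : ℕ) : B0 a n r ≤ |PowerSeries.coeff 2 (Tt (Pp a n r 1) a n ((r * n + 1 : ℕ) : ℝ))| := by
  have h : PowerSeries.coeff 2 (Tt (Pp a n r 1) a n ((r * n + 1 : ℕ) : ℝ)) =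
    (((r * n + 1 : ℕ) : ℝ) + (n + (r * n + 1) : ℕ)) ^ 2 * PowerSeries.coeff 0 (Tt (Pp a n r 0) a n ((r * n + 1 : ℕ) : ℝ)) := by
    rw [Ts_b1_aux]
    have := PowerSeries.coeff_X_pow_mul (lin ((r * n + 1 : ℕ) + (n + (r * n + 1) : ℕ)) ^ 2 * Tt (Pp a n r 0) a n ((r * n + 1 : ℕ) : ℝ)) 2 0
    rw [zero_add] at this
    rw [this, coeff0_mul]
    congr 1
    rw [PowerSeries.coeff_zero_eq_constantCoeff_apply, map_pow, lin_const]
  rw [h, abs_mul]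
  refine (Ts_b0 a n r).trans (le_mul_of_one_le_left (abs_nonneg _) ?_)
  rw [abs_of_nonneg (by positivity)]
  refine one_le_pow₀ ?_
  have : (0:ℝ) ≤ (r:ℝ) * n := by positivity
  have : (0:ℝ) ≤ (n:ℝ) := by positivity
  push_cast; linarith

end

section
open Filter Topology

lemma prod_t (n r : ℕ) (t τ : ℝ) (ht : (r:ℝ) * n + 1 + 1/2 ≤ t) (hτ : τ = (t - 1/2 + n) / (r * n + 1 + n)) :
    ∏ m ∈ Finset.range (n+1), (1 / (t + m - 1/2)) ≤ (τ⁻¹) ^ (n+1) / Qq n r := by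
  have hrn : (0:ℝ) ≤ r * n := by positivity
  have hn0 : (0:ℝ) ≤ n := by positivity
  have hτ0 : 0 < τ := by rw [hτ]; apply div_pos <;> linarith
  rw [le_div_iff₀ (Qq_pos n r), Qq, ← Finset.prod_mul_distrib]
  have : (τ⁻¹) ^ (n+1) = ∏ m ∈ Finset.range (n+1), τ⁻¹ := by simp
  rw [this]
  refine Finset.prod_le_prod (fun m _ => ?_) fun m hm => ?_
  · have : (0:ℝ) ≤ m := by positivity
    refine mul_nonneg (one_div_nonneg.mpr (by linarith)) (by positivity)
  · have h0 : (0:ℝ) ≤ m := by positivity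
    have h1 : (m:ℝ) ≤ n := by exact_mod_cast Nat.lt_succ_iff.mp (Finset.mem_range.mp hm)
    rw [one_div_mul_eq_div, hτ, inv_div, div_le_div_iff₀ (by linarith) (by linarith)]
    push_cast
    nlinarith

lemma Tt_tail (a n r b e t : ℕ) (hn : 1 ≤ n) (hr : 1 ≤ r) (hb : b ≤ 1) (he : e ≤ 2) (ha : 12 * r + 6 ≤ a) (ht : 2 * r * n + 2 ≤ t) :
    |PowerSeries.coeff e (Tt (Pp a n r b) a n t)| ≤ B0 a n r * (4 * Lc n r * (3 * (r + 2) * n) ^ 6 * (2/3) ^ ((a - 12 * r) * n)) * (1 / (t:ℝ) ^ 2) := by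
  have hn1 : (1:ℝ) ≤ n := by exact_mod_cast hn
  have hr1 : (1:ℝ) ≤ r := by exact_mod_cast hr
  have hrn : (1:ℝ) ≤ r * n := by nlinarith
  have hrn' : (n:ℝ) ≤ r * n := by nlinarith
  have ht1 : 2 * ((r:ℝ) * n) + 2 ≤ t := by rw [← mul_assoc]; exact_mod_cast ht
  obtain ⟨τ, hτ⟩ : ∃ τ : ℝ, τ = ((t:ℝ) - 1/2 + n) / (r * n + 1 + n) := ⟨_, rfl⟩
  have hτ2 : τ * (r * n + 1 + n) = (t:ℝ) - 1/2 + n := by rw [hτ]; field_simp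
  have hτ3 : 3/2 ≤ τ := by rw [hτ, le_div_iff₀ (by linarith)]; linarith
  have hτ0 : 0 < τ := by linarith
  have h := (Tt_Bd a n r b hn (t:ℝ) (3 * τ * (r + 2)) (by linarith) (by
    have : τ * (r * n + 1 + n) ≤ τ * ((r + 2) * n) := by
      refine mul_le_mul_of_nonneg_left ?_ hτ0.le
      linarith
    nlinarith)).coeff e
  refine h.trans ?_
  have h1 : (2:ℝ) ^ e ≤ 4 := by interval_cases e <;> norm_num
  have e1 : (3 * τ * ((r:ℝ) + 2) * Real.exp 1) ^ (12 * r * n) = τ ^ (12 * r * n) * Lc n r := by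
    rw [Lc, ← mul_pow]; congr 1; ring
  have hY : (1:ℝ) ≤ 3 * (r + 2) * n := by nlinarith
  have h2 : ((3 * τ * ((r:ℝ) + 2) * n) ^ 4) ^ b ≤ τ ^ 4 * (3 * (r + 2) * n) ^ 4 := by
    have e2 : (3 * τ * ((r:ℝ) + 2) * n) ^ 4 = τ ^ 4 * (3 * (r + 2) * n) ^ 4 := by ring
    rw [e2]
    interval_cases b
    · rw [pow_zero]
      exact one_le_mul_of_one_le_of_one_le (one_le_pow₀ (by linarith)) (one_le_pow₀ hY)
    · simp
  have hQ := Qq_pos n r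
  have hnn : ∀ m ∈ Finset.range (n+1), 0 ≤ (1 / ((t:ℝ) + m - 1/2)) := fun m _ => by
    have : (0:ℝ) ≤ m := by positivity
    apply one_div_nonneg.mpr; linarith
  have h4 := pow_nonneg (mul_nonneg (Nat.cast_nonneg (n.factorial) : (0:ℝ) ≤ n.factorial) (Finset.prod_nonneg hnn)) a
  have h3 : ((n.factorial : ℝ) * ∏ m ∈ Finset.range (n+1), (1 / ((t:ℝ) + m - 1/2))) ^ a ≤ (τ⁻¹) ^ ((n+1)*a) * B0 a n r := by
    rw [B0, pow_mul, ← mul_pow]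
    refine pow_le_pow_left₀ (mul_nonneg (by positivity) (Finset.prod_nonneg hnn)) ?_ a
    refine (mul_le_mul_of_nonneg_left (prod_t n r t τ (by linarith) hτ) (by positivity)).trans (le_of_eq ?_)
    field_simp
  have hB := B0_pos a n r
  have hL := Lc_one n r
  have hti0 : 0 < τ⁻¹ := by positivity
  have hti : τ⁻¹ ≤ 2/3 := by
    rw [inv_le_comm₀ hτ0 (by norm_num)]; linarith
  have h5 : τ ^ (12 * r * n) * τ ^ 4 * (τ⁻¹) ^ ((n+1)*a) ≤ (2/3) ^ ((a - 12 * r) * n) * ((3 * (r + 2) * n) ^ 2 * (1 / (t:ℝ) ^ 2)) := by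
    obtain ⟨c, rfl⟩ := Nat.exists_eq_add_of_le ha
    have e3 : (n+1) * (12 * r + 6 + c) = (12 * r * n + 4) + ((6 + c) * n + 2) + (12 * r + c) := by ring
    have e4 : 12 * r + 6 + c - 12 * r = 6 + c := by omega
    rw [e3, e4, pow_add, pow_add, ← pow_add]
    have e5 : τ ^ (12 * r * n + 4) * ((τ⁻¹) ^ (12 * r * n + 4) * (τ⁻¹) ^ ((6 + c) * n + 2) * (τ⁻¹) ^ (12 * r + c)) = (τ⁻¹) ^ ((6 + c) * n + 2) * (τ⁻¹) ^ (12 * r + c) := by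
      rw [← mul_assoc, ← mul_assoc, ← mul_pow, mul_inv_cancel₀ hτ0.ne', one_pow, one_mul]
    rw [e5]
    have h6 : (τ⁻¹) ^ (12 * r + c) ≤ 1 := pow_le_one₀ hti0.le (by linarith)
    refine (mul_le_of_le_one_right (by positivity) h6).trans ?_
    rw [pow_add]
    refine mul_le_mul (pow_le_pow_left₀ hti0.le hti _) ?_ (by positivity) (by positivity)
    rw [mul_one_div, ← div_pow]
    refine pow_le_pow_left₀ hti0.le ?_ 2
    rw [hτ, inv_div, div_le_div_iff₀ (by linarith) (by linarith)]
    refine mul_le_mul ?_ (by linarith) (by linarith) (by linarith)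
    linarith
  calc _ ≤ 4 * ((τ ^ (12 * r * n) * Lc n r * (τ ^ 4 * (3 * (r + 2) * n) ^ 4)) * ((τ⁻¹) ^ ((n+1)*a) * B0 a n r)) := by
        rw [e1]
        gcongr
    _ = 4 * Lc n r * (3 * (r + 2) * n) ^ 4 * B0 a n r * (τ ^ (12 * r * n) * τ ^ 4 * (τ⁻¹) ^ ((n+1)*a)) := by ring
    _ ≤ 4 * Lc n r * (3 * (r + 2) * n) ^ 4 * B0 a n r * ((2/3) ^ ((a - 12 * r) * n) * ((3 * (r + 2) * n) ^ 2 * (1 / (t:ℝ) ^ 2))) :=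
        mul_le_mul_of_nonneg_left h5 (by positivity)
    _ = _ := by ring

lemma sum_close (f : ℕ → ℝ) (S G : ℝ) (s : ℕ) (hS : HasSum f S) (hf : ∀ t, t ≠ s → |f t| ≤ G * (1 / ((t:ℝ) + 1) ^ 2)) (hG : 0 ≤ G) :
    |S - f s| ≤ G * zeta 2 := by
  have h1 := hS.update s 0
  have h2 : HasSum (fun t : ℕ => G * (1 / ((t:ℝ) + 1) ^ 2)) (G * zeta 2) := (zeta_hasSum 2 le_rfl).mul_left G
  rw [zero_sub, neg_add_eq_sub] at h1
  rw [← h1.tsum_eq]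
  rw [← Real.norm_eq_abs]
  refine tsum_of_norm_bounded h2 fun t => ?_
  by_cases h : t = s
  · subst h; simp; positivity
  · rw [Function.update_of_ne h]; exact hf t h

noncomputable def et (a n r : ℕ) : ℝ := 4 * Lc n r * (3 * (r + 2) * n) ^ 6 * (2/3) ^ ((a - 12 * r) * n) * zeta 2

lemma S_close (a n r b e : ℕ) (hn : 1 ≤ n) (hr : 1 ≤ r) (hb : b ≤ 1) (he : e ≤ 2) (ha : 12 * r + 6 ≤ a) (S : ℝ)
    (hS : HasSum (fun t : ℕ => PowerSeries.coeff e (Tt (Pp a n r b) a n ((t:ℝ) + 1))) S) :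
    |S - PowerSeries.coeff e (Tt (Pp a n r b) a n ((r * n + 1 : ℕ) : ℝ))| ≤ B0 a n r * et a n r := by
  have hB := B0_pos a n r
  have hL := Lc_one n r
  have := sum_close _ S (B0 a n r * (4 * Lc n r * (3 * (r + 2) * n) ^ 6 * (2/3) ^ ((a - 12 * r) * n))) (r * n) hS ?_ (by positivity)
  · push_cast at this ⊢
    rw [et, ← mul_assoc]; exact this
  · intro t ht
    have e1 : (t:ℝ) + 1 = ((t + 1 : ℕ) : ℝ) := by push_cast; ring
    rw [e1]
    by_cases h : t + 1 ≤ 2 * r * n + 1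
    · rw [Tt_zero a n r b (t+1) e hn (by omega) h (by omega) (by omega), abs_zero]; positivity
    · exact Tt_tail a n r b e (t+1) hn hr hb he ha (by omega)

/-- nondegeneracy -/
lemma nondeg (B K η s00 s02 s10 s12 t00 t02 t12 : ℝ) (hB : 0 < B) (hK : 1 ≤ K) (hη : η ≤ 1 / (16 * K))
    (h00 : |s00 - t00| ≤ B * η) (h02 : |s02 - t02| ≤ B * η) (h10 : |s10| ≤ B * η) (h12 : |s12 - t12| ≤ B * η)
    (g00 : B ≤ |t00|) (g02 : |t02| ≤ B * K) (g12 : B ≤ |t12|) (l1 l2 : ℝ) :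
    B / (16 * K) * max |l1| |l2| ≤ |l1 * s00 + l2 * s02| ∨ B / (16 * K) * max |l1| |l2| ≤ |l1 * s10 + l2 * s12| := by
  have hK0 : 0 < K := by linarith
  have hη1 : B * η ≤ B / (16 * K) := by
    have := mul_le_mul_of_nonneg_left hη hB.le
    rwa [mul_one_div] at this
  obtain ⟨x, hx⟩ : ∃ x, x = B / (16 * K) := ⟨_, rfl⟩
  have hx0 : 0 < x := by rw [hx]; positivity
  have hxB : B = 16 * K * x := by rw [hx]; field_simp
  rw [← hx] at hη1 ⊢
  have hxK : x ≤ K * x := le_mul_of_one_le_left hx0.le hK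
  by_cases h : |l1| ≤ 4 * K * |l2|
  · right
    have a1 : |l1 * s10| ≤ 4 * K * |l2| * x := by
      rw [abs_mul]; exact mul_le_mul h (h10.trans hη1) (abs_nonneg _) (by positivity)
    have a2 : 15 * (K * x) * |l2| ≤ |l2 * s12| := by
      rw [abs_mul, mul_comm]
      refine mul_le_mul_of_nonneg_left ?_ (abs_nonneg _)
      have := abs_sub_abs_le_abs_sub t12 s12
      rw [abs_sub_comm] at this
      linarith
    have a3 : |l2 * s12| - |l1 * s10| ≤ |l1 * s10 + l2 * s12| := by
      have := abs_sub_abs_le_abs_sub (l2 * s12) (-(l1 * s10))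
      rw [abs_neg, sub_neg_eq_add, add_comm (l2 * s12)] at this
      exact this
    have a4 : max |l1| |l2| ≤ 4 * K * |l2| := max_le h (by
      have := abs_nonneg l2; nlinarith)
    have a5 : x * max |l1| |l2| ≤ x * (4 * K * |l2|) := mul_le_mul_of_nonneg_left a4 hx0.le
    have a6 : 0 ≤ K * x * |l2| := by positivity
    nlinarith
  · left
    push Not at h
    have hl : |l2| ≤ |l1| := by
      have := abs_nonneg l2; nlinarith
    rw [max_eq_left hl]
    have a1 : |l2 * s02| ≤ |l2| * (17 * K * K * x) := by
      rw [abs_mul]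
      refine mul_le_mul_of_nonneg_left ?_ (abs_nonneg _)
      have := abs_sub_abs_le_abs_sub s02 t02
      have h3 : K * x ≤ K * K * x := by
        have := mul_le_mul_of_nonneg_left hxK hK0.le; linarith
      have h4 : B * K = 16 * K * K * x := by rw [hxB]; ring
      linarith
    have a2 : 15 * (K * x) * |l1| ≤ |l1 * s00| := by
      rw [abs_mul, mul_comm]
      refine mul_le_mul_of_nonneg_left ?_ (abs_nonneg _)
      have := abs_sub_abs_le_abs_sub t00 s00
      rw [abs_sub_comm] at this
      linarith
    have a3 : |l1 * s00| - |l2 * s02| ≤ |l1 * s00 + l2 * s02| := by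
      have := abs_sub_abs_le_abs_sub (l1 * s00) (-(l2 * s02))
      rw [abs_neg, sub_neg_eq_add] at this
      exact this
    have a4 : 4 * (|l2| * (17 * K * K * x)) ≤ |l1| * (17 * K * x) := by
      have := mul_le_mul_of_nonneg_right h.le (by positivity : 0 ≤ 17 * K * x)
      linarith
    have a6 : x * |l1| ≤ K * x * |l1| := mul_le_mul_of_nonneg_right hxK (abs_nonneg _)
    have a7 : 0 ≤ x * |l1| := by positivity
    linarith

end

section
open Filter Topology

noncomputable def gv (i : ℕ) : ℝ × ℝ := if i = 0 then (1, 0) else if i = 1 then (0, 1) else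
  if Odd i then (zeta i, ((i:ℝ) * (i + 1) / 2) * zeta (i + 2)) else (0, 0)

noncomputable def ell (a n r b i : ℕ) : ℝ := if i = 0 then ∑ k ∈ Finset.range a, ∑ j ∈ Finset.range (n+1), cf (Pp a n r b) a n j k * (- Hj j (a - k)) else
  if i = 1 then ∑ k ∈ Finset.range a, ∑ j ∈ Finset.range (n+1), (cf (Pp a n r b) a n j k * (((a - k : ℕ):ℝ) * ((a - k : ℕ) + 1) / 2)) * (- Hj j (a - k + 2)) else
  ∑ j ∈ Finset.range (n+1), cf (Pp a n r b) a n j (a - i)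

lemma reindex (a : ℕ) (ha : 1 ≤ a) (F : ℕ → ℝ) (h1 : F 1 = 0) : ∑ k ∈ Finset.range a, F (a - k) = ∑ i ∈ Finset.range (a - 1), F (i + 2) := by
  obtain ⟨c, rfl⟩ := Nat.exists_eq_add_of_le ha
  rw [← Finset.sum_range_reflect, add_comm 1 c, Finset.sum_range_succ', Nat.add_sub_cancel]
  have : F (c + 1 - (c - 0)) = 0 := by rw [show c + 1 - (c - 0) = 1 by omega, h1]
  rw [this, add_zero]
  refine Finset.sum_congr rfl fun i hi => ?_
  have := Finset.mem_range.mp hi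
  congr 1; omega

lemma deg_ok (a n r b : ℕ) (hn : 1 ≤ n) (hb : b ≤ 1) (ha : 12 * r + 6 ≤ a) : (Pp a n r b).natDegree + 1 < a * (n + 1) := by
  have := Pp_deg a n r b hb
  have h2 : (12 * r + 6) * (n + 1) ≤ a * (n+1) := Nat.mul_le_mul_right _ ha
  nlinarith

lemma form1 (a n r b : ℕ) (hodd : Odd a) (hn : 1 ≤ n) (hne : Even n) (hb : b ≤ 1) (ha : 12 * r + 6 ≤ a) :
    HasSum (fun t : ℕ => PowerSeries.coeff 0 (Tt (Pp a n r b) a n ((t:ℝ) + 1))) (∑ i ∈ Finset.range (a+1), ell a n r b i * (gv i).1) := by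
  have h := S0_hasSum (Pp a n r b) a n (by omega) (deg_ok a n r b hn hb ha)
  convert h using 1
  rw [Finset.sum_add_distrib]
  have h1 := reindex a (by omega) (fun i => (∑ j ∈ Finset.range (n+1), cf (Pp a n r b) a n j (a - i)) * zeta i) (by
    rw [pf_l1 (Pp a n r b) a n (by omega) (deg_ok a n r b hn hb ha), zero_mul])
  have h2 : ∑ k ∈ Finset.range a, (∑ j ∈ Finset.range (n+1), cf (Pp a n r b) a n j k) * zeta (a - k) = ∑ k ∈ Finset.range a, (∑ j ∈ Finset.range (n+1), cf (Pp a n r b) a n j (a - (a - k))) * zeta (a - k) := by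
    refine Finset.sum_congr rfl fun k hk => ?_
    rw [Nat.sub_sub_self (Finset.mem_range.mp hk).le]
  rw [h2, h1]
  obtain ⟨c, rfl⟩ : ∃ c, a = c + 1 := ⟨a - 1, by omega⟩
  rw [Finset.sum_range_succ', Finset.sum_range_succ', Nat.add_sub_cancel]
  simp only [gv, ell, if_true, Nat.add_eq_zero_iff, one_ne_zero, and_false, if_false, zero_add, mul_zero, add_zero, mul_one]
  rw [add_comm]
  congr 1
  refine Finset.sum_congr rfl fun i hi => ?_
  have hi := Finset.mem_range.mp hi
  rw [if_neg (by omega), if_neg (by omega)]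
  by_cases ho : Odd (i + 1 + 1)
  · rw [if_pos ho]
  · rw [if_neg ho, mul_zero]
    rw [cf_sum_zero _ _ _ _ _ hne, zero_mul]
    rw [Nat.not_odd_iff_even] at ho
    exact Nat.Odd.sub_even (by omega) hodd ho

lemma form2 (a n r b : ℕ) (hodd : Odd a) (hn : 1 ≤ n) (hne : Even n) (hb : b ≤ 1) (ha : 12 * r + 6 ≤ a) :
    HasSum (fun t : ℕ => PowerSeries.coeff 2 (Tt (Pp a n r b) a n ((t:ℝ) + 1))) (∑ i ∈ Finset.range (a+1), ell a n r b i * (gv i).2) := by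
  have h := S2_hasSum (Pp a n r b) a n (by omega) (deg_ok a n r b hn hb ha)
  convert h using 1
  rw [Finset.sum_add_distrib]
  have h1 := reindex a (by omega) (fun i => (∑ j ∈ Finset.range (n+1), cf (Pp a n r b) a n j (a - i) * ((i:ℝ) * (i + 1) / 2)) * zeta (i + 2)) (by
    rw [← Finset.sum_mul, pf_l1 (Pp a n r b) a n (by omega) (deg_ok a n r b hn hb ha), zero_mul, zero_mul])
  have h2 : ∑ k ∈ Finset.range a, (∑ j ∈ Finset.range (n+1), cf (Pp a n r b) a n j k * (((a - k : ℕ):ℝ) * ((a - k : ℕ) + 1) / 2)) * zeta (a - k + 2) =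
      ∑ k ∈ Finset.range a, (∑ j ∈ Finset.range (n+1), cf (Pp a n r b) a n j (a - (a - k)) * (((a - k : ℕ):ℝ) * ((a - k : ℕ) + 1) / 2)) * zeta (a - k + 2) := by
    refine Finset.sum_congr rfl fun k hk => ?_
    rw [Nat.sub_sub_self (Finset.mem_range.mp hk).le]
  rw [h2, h1]
  obtain ⟨c, rfl⟩ : ∃ c, a = c + 1 := ⟨a - 1, by omega⟩
  rw [Finset.sum_range_succ', Finset.sum_range_succ', Nat.add_sub_cancel]
  simp only [gv, ell, if_true, Nat.add_eq_zero_iff, one_ne_zero, and_false, if_false, zero_add, mul_zero, add_zero, mul_one]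
  rw [add_comm]
  congr 1
  refine Finset.sum_congr rfl fun i hi => ?_
  have hi := Finset.mem_range.mp hi
  rw [if_neg (by omega), if_neg (by omega), ← Finset.sum_mul]
  by_cases ho : Odd (i + 1 + 1)
  · rw [if_pos ho, mul_assoc]
  · rw [if_neg ho, mul_zero]
    rw [cf_sum_zero _ _ _ _ _ hne, zero_mul, zero_mul]
    rw [Nat.not_odd_iff_even] at ho
    exact Nat.Odd.sub_even (by omega) hodd ho

/-! integrality of the coefficients -/

lemma isInt_sum {ι : Type*} (s : Finset ι) (f : ι → ℝ) (h : ∀ i ∈ s, ∃ z : ℤ, f i = z) : ∃ z : ℤ, ∑ i ∈ s, f i = z := by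
  classical
  induction s using Finset.induction_on with
  | empty => exact ⟨0, by simp⟩
  | insert i s hi ih =>
    obtain ⟨z, hz⟩ := ih fun j hj => h j (Finset.mem_insert_of_mem hj)
    obtain ⟨w, hw⟩ := h i (Finset.mem_insert_self _ _)
    exact ⟨w + z, by rw [Finset.sum_insert hi, hz, hw]; push_cast; ring⟩

lemma Hj_int (j i n d : ℕ) (hj : j ≤ n) (h : ∀ i, 1 ≤ i → i ≤ n → i ∣ d) : ∃ z : ℤ, (d:ℝ) ^ i * Hj j i = z := by
  rw [Hj, Finset.mul_sum]
  refine isInt_sum _ _ fun u hu => ?_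
  have := Finset.mem_range.mp hu
  obtain ⟨e, he⟩ := h (u+1) (by omega) (by omega)
  refine ⟨(e:ℤ) ^ i, ?_⟩
  rw [he]; push_cast
  rw [mul_pow]; field_simp

lemma ell_int (a n r b i d : ℕ) (hi : i ≤ a) (h : ∀ i, 1 ≤ i → i ≤ n → i ∣ d) : ∃ z : ℤ, (d:ℝ) ^ (a + 2) * ell a n r b i = z := by
  rw [ell]
  split_ifs with h0 h1
  · rw [Finset.mul_sum]
    refine isInt_sum _ _ fun k hk => ?_
    rw [Finset.mul_sum]
    refine isInt_sum _ _ fun j hj => ?_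
    have hk := Finset.mem_range.mp hk
    have hj := Finset.mem_range.mp hj
    obtain ⟨z, hz⟩ := cf_int a n r b j k d (by omega) h
    obtain ⟨w, hw⟩ := Hj_int j (a - k) n d (by omega) h
    refine ⟨z * (-w) * (d:ℤ) ^ 2, ?_⟩
    push_cast
    rw [← hz, ← hw]
    have : a + 2 = k + (a - k) + 2 := by omega
    rw [this, pow_add, pow_add]
    have : k + (a - k) = a := by omega
    ring
  · rw [Finset.mul_sum]
    refine isInt_sum _ _ fun k hk => ?_
    rw [Finset.mul_sum]
    refine isInt_sum _ _ fun j hj => ?_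
    have hk := Finset.mem_range.mp hk
    have hj := Finset.mem_range.mp hj
    obtain ⟨z, hz⟩ := cf_int a n r b j k d (by omega) h
    obtain ⟨w, hw⟩ := Hj_int j (a - k + 2) n d (by omega) h
    refine ⟨z * (-w) * ((a - k + 1).choose 2 : ℕ), ?_⟩
    push_cast
    rw [← hz, ← hw, Nat.cast_choose_two]
    have : (d:ℝ) ^ (a + 2) = d ^ k * d ^ (a - k + 2) := by rw [← pow_add]; congr 1; omega
    rw [this]
    push_cast
    ring
  · rw [Finset.mul_sum]
    refine isInt_sum _ _ fun j hj => ?_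
    have hj := Finset.mem_range.mp hj
    obtain ⟨z, hz⟩ := cf_int a n r b j (a - i) d (by omega) h
    refine ⟨z * (d:ℤ) ^ (i + 2), ?_⟩
    push_cast
    rw [← hz]
    have : a + 2 = (a - i) + (i + 2) := by omega
    rw [this, pow_add]
    have : a - i + (i + 2) - i = a - i + 2 := by omega
    ring

/-! sizes of the coefficients -/

lemma Hj_le (j i : ℕ) : |Hj j i| ≤ j := by
  rw [Hj]
  refine (Finset.abs_sum_le_sum_abs _ _).trans ?_
  calc _ ≤ ∑ u ∈ Finset.range j, (1:ℝ) := by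
        refine Finset.sum_le_sum fun u _ => ?_
        rw [abs_of_pos (by positivity), div_le_one (by positivity)]
        refine one_le_pow₀ ?_
        have : (0:ℝ) ≤ u := by positivity
        linarith
    _ = j := by simp

noncomputable def CB (a n r : ℕ) : ℝ := 2 ^ a * ((2 ^ n * ((n:ℝ) + 1) ^ 2) ^ a * (Lc n r * (3 * (r + 2) * n) ^ 4))

lemma CB_nonneg (a n r : ℕ) : 0 ≤ CB a n r := by
  have := Lc_one n r
  unfold CB; positivity

lemma cf_CB (a n r b j k : ℕ) (hn : 1 ≤ n) (hj : j ≤ n) (hb : b ≤ 1) (hk : k ≤ a) : |cf (Pp a n r b) a n j k| ≤ CB a n r := by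
  refine (cf_Bd a n r b j k hn hj).trans ?_
  have hn1 : (1:ℝ) ≤ n := by exact_mod_cast hn
  have hr1 : (0:ℝ) ≤ r := by positivity
  have hx : (1:ℝ) ≤ (3 * (r + 2) * n) ^ 4 := one_le_pow₀ (by nlinarith)
  have h2 : ((3 * ((r:ℝ) + 2) * n) ^ 4) ^ b ≤ (3 * (r + 2) * n) ^ 4 := by
    interval_cases b
    · simpa using hx
    · simp
  unfold CB Lc
  gcongr
  norm_num

lemma ell_le (a n r b i : ℕ) (ha : 1 ≤ a) (hn : 1 ≤ n) (hb : b ≤ 1) : |ell a n r b i| ≤ a ^ 3 * ((n:ℝ) + 1) ^ 2 * CB a n r := by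
  have ha1 : (1:ℝ) ≤ a := by exact_mod_cast ha
  have hn1 : (1:ℝ) ≤ n := by exact_mod_cast hn
  have hC := CB_nonneg a n r
  rw [ell]
  split_ifs with h0 h1
  · calc _ ≤ ∑ k ∈ Finset.range a, ∑ j ∈ Finset.range (n+1), CB a n r * n := by
          refine (Finset.abs_sum_le_sum_abs _ _).trans (Finset.sum_le_sum fun k hk => (Finset.abs_sum_le_sum_abs _ _).trans (Finset.sum_le_sum fun j hj => ?_))
          have hk := Finset.mem_range.mp hk
          have hj : j ≤ n := by have := Finset.mem_range.mp hj; omega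
          rw [abs_mul, abs_neg]
          exact mul_le_mul (cf_CB a n r b j k hn hj hb hk.le) ((Hj_le _ _).trans (by exact_mod_cast hj)) (abs_nonneg _) hC
      _ = a * (((n:ℝ)+1) * n) * CB a n r := by simp; ring
      _ ≤ _ := by
          gcongr
          · exact le_self_pow₀ ha1 (by norm_num)
          · nlinarith
  · calc _ ≤ ∑ k ∈ Finset.range a, ∑ j ∈ Finset.range (n+1), CB a n r * a ^ 2 * n := by
          refine (Finset.abs_sum_le_sum_abs _ _).trans (Finset.sum_le_sum fun k hk => (Finset.abs_sum_le_sum_abs _ _).trans (Finset.sum_le_sum fun j hj => ?_))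
          have hk := Finset.mem_range.mp hk
          have hj : j ≤ n := by have := Finset.mem_range.mp hj; omega
          rw [abs_mul, abs_neg, abs_mul]
          refine mul_le_mul (mul_le_mul (cf_CB a n r b j k hn hj hb hk.le) ?_ (abs_nonneg _) hC) ((Hj_le _ _).trans (by exact_mod_cast hj)) (abs_nonneg _) (by positivity)
          have h5 : ((a - k : ℕ):ℝ) ≤ a := by exact_mod_cast Nat.sub_le a k
          have h6 : (0:ℝ) ≤ ((a - k : ℕ):ℝ) := by positivity
          rw [abs_of_nonneg (by positivity)]
          nlinarith
      _ = a ^ 3 * (((n:ℝ)+1) * n) * CB a n r := by simp; ring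
      _ ≤ _ := by
          gcongr
          nlinarith
  · calc _ ≤ ∑ j ∈ Finset.range (n+1), CB a n r := by
          refine (Finset.abs_sum_le_sum_abs _ _).trans (Finset.sum_le_sum fun j hj => ?_)
          exact cf_CB a n r b j _ hn (by have := Finset.mem_range.mp hj; omega) hb (by omega)
      _ = 1 * ((n:ℝ)+1) * CB a n r := by simp
      _ ≤ _ := by
          gcongr
          · exact one_le_pow₀ ha1
          · nlinarith

end

section
open Filter Topology

lemma poly_le (C δ : ℝ) (p : ℕ) (hδ : 0 < δ) : ∀ᶠ n : ℕ in atTop, C * ((n:ℝ) + 1) ^ p ≤ Real.exp (δ * n) := by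
  have h1 : |Real.exp (-δ)| < 1 := by rw [abs_of_pos (Real.exp_pos _)]; rw [← Real.exp_zero]; exact Real.exp_lt_exp.mpr (by linarith)
  have h2 := (tendsto_pow_const_mul_const_pow_of_abs_lt_one p h1).comp (tendsto_add_atTop_nat 1)
  have h3 := h2.eventually (gt_mem_nhds (show 0 < Real.exp (-δ) / (|C| + 1) by positivity))
  filter_upwards [h3] with n hn
  simp only [Function.comp] at hn
  rw [lt_div_iff₀ (by positivity)] at hn
  push_cast at hn
  rw [pow_succ (Real.exp (-δ))] at hn
  have e : Real.exp (δ * n) * Real.exp (-δ) ^ n = 1 := by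
    rw [← Real.exp_nat_mul, ← Real.exp_add]; simp; ring
  have hp : (0:ℝ) < Real.exp (-δ) := Real.exp_pos _
  have hq : (0:ℝ) < Real.exp (-δ) ^ n := by positivity
  have h4 : (((n:ℝ) + 1) ^ p * (|C| + 1)) * (Real.exp (-δ) ^ n) ≤ 1 := by
    by_contra hc
    push Not at hc
    nlinarith
  have h5 : ((n:ℝ) + 1) ^ p * (|C| + 1) ≤ Real.exp (δ * n) := by
    exact le_of_mul_le_mul_right (h4.trans e.ge) hq
  refine le_trans ?_ h5
  have : (0:ℝ) ≤ ((n:ℝ) + 1) ^ p := by positivity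
  have := le_abs_self C
  nlinarith

noncomputable def th (r : ℕ) : ℝ := 12 * r * Real.log (3 * (r + 2) * Real.exp 1)

lemma Lc_exp (n r : ℕ) : Lc n r = Real.exp (th r * n) := by
  rw [Lc, th, ← Real.rpow_natCast, Real.rpow_def_of_pos (by positivity)]
  congr 1; push_cast; ring

lemma pow_exp (x : ℝ) (hx : 0 < x) (m : ℕ) : x ^ m = Real.exp (Real.log x * m) := by
  rw [← Real.rpow_natCast, Real.rpow_def_of_pos hx]

lemma B0_upper (a n r : ℕ) (hn : 1 ≤ n) (hr : 1 ≤ r) : B0 a n r ≤ (Real.exp 1 * n) ^ a * Real.exp (-(a * (1 + Real.log r)) * n) := by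
  have hn1 : (1:ℝ) ≤ n := by exact_mod_cast hn
  have hr1 : (1:ℝ) ≤ r := by exact_mod_cast hr
  have hrn : (1:ℝ) ≤ r * n := by nlinarith
  have hQ : ((r:ℝ) * n) ^ n ≤ Qq n r := by
    calc ((r:ℝ) * n) ^ n ≤ (r * n) ^ (n+1) := pow_le_pow_right₀ hrn (by omega)
      _ = ∏ m ∈ Finset.range (n+1), ((r:ℝ) * n) := by simp
      _ ≤ _ := Finset.prod_le_prod (fun _ _ => by positivity) fun m _ => by
          have : (0:ℝ) ≤ m := by positivity
          push_cast; linarith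
  have h1 : n.factorial / Qq n r ≤ Real.exp 1 * n * Real.exp (-(1 + Real.log r) * n) := by
    rw [div_le_iff₀ (Qq_pos n r)]
    refine (fact_upper n hn).trans ?_
    rw [mul_assoc (Real.exp 1 * (n:ℝ)) (Real.exp _)]
    refine mul_le_mul_of_nonneg_left ?_ (by positivity)
    refine le_trans (le_of_eq ?_) (mul_le_mul_of_nonneg_left hQ (Real.exp_pos _).le)
    rw [pow_exp ((n:ℝ) / Real.exp 1) (by positivity), pow_exp ((r:ℝ) * n) (by positivity), ← Real.exp_add, Real.log_div (by positivity) (by positivity), Real.log_exp, Real.log_mul (by positivity) (by positivity)]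
    congr 1; ring
  rw [B0]
  have hQ := Qq_pos n r
  refine (pow_le_pow_left₀ (by positivity) h1 a).trans (le_of_eq ?_)
  rw [mul_pow, ← Real.exp_nat_mul]
  congr 2; ring

lemma B0_lower (a n r : ℕ) (hn : 1 ≤ n) : 1 / B0 a n r ≤ ((r + 2) * n) ^ a * Real.exp (a * (1 + Real.log (r + 2)) * n) := by
  have hn1 : (1:ℝ) ≤ n := by exact_mod_cast hn
  have hr1 : (0:ℝ) ≤ r := by positivity
  have hQ : Qq n r ≤ (((r:ℝ) + 2) * n) ^ (n+1) := by
    calc _ ≤ ∏ m ∈ Finset.range (n+1), (((r:ℝ) + 2) * n) := Finset.prod_le_prod (fun _ _ => by positivity) fun m hm => by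
          have : (m:ℝ) ≤ n := by exact_mod_cast Nat.lt_succ_iff.mp (Finset.mem_range.mp hm)
          push_cast; linarith
      _ = _ := by simp
  have h1 : Qq n r / n.factorial ≤ ((r + 2) * n) * Real.exp ((1 + Real.log (r + 2)) * n) := by
    rw [div_le_iff₀ (by positivity)]
    refine hQ.trans ?_
    refine le_trans (le_of_eq ?_) (mul_le_mul_of_nonneg_left (fact_lower n) (by positivity))
    rw [pow_succ', mul_assoc (((r:ℝ)+2)*n)]
    congr 1
    rw [pow_exp _ (by positivity), pow_exp _ (by positivity), ← Real.exp_add, Real.log_div (by positivity) (by positivity), Real.log_exp, Real.log_mul (by positivity) (by positivity)]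
    congr 1; ring
  rw [B0, div_pow, one_div_div, ← div_pow]
  have hQ := Qq_pos n r
  refine (pow_le_pow_left₀ (by positivity) h1 a).trans (le_of_eq ?_)
  rw [mul_pow, ← Real.exp_nat_mul]
  congr 2; ring

noncomputable def Kc (a n r : ℕ) : ℝ := 4 * 3 ^ a * Lc n r * (3 * (r + 2) * n) ^ 4

lemma Kc_one (a n r : ℕ) (hn : 1 ≤ n) : 1 ≤ Kc a n r := by
  have hn1 : (1:ℝ) ≤ n := by exact_mod_cast hn
  have hr1 : (0:ℝ) ≤ r := by positivity
  have hx : (1:ℝ) ≤ (3 * (r + 2) * n) ^ 4 := one_le_pow₀ (by nlinarith)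
  have h3 : (1:ℝ) ≤ 3 ^ a := one_le_pow₀ (by norm_num)
  refine one_le_mul_of_one_le_of_one_le (one_le_mul_of_one_le_of_one_le (by linarith) (Lc_one n r)) hx

lemma ev_i (a r : ℕ) (δ : ℝ) (hδ : 0 < δ) : ∀ᶠ n : ℕ in atTop, a ^ 3 * ((n:ℝ) + 1) ^ 2 * CB a n r ≤ Real.exp ((a * Real.log 2 + th r + δ) * n) := by
  filter_upwards [poly_le (a ^ 3 * 2 ^ a * (3 * (r + 2)) ^ 4) δ (2 + 2 * a + 4) hδ] with n hn
  have e : a ^ 3 * ((n:ℝ) + 1) ^ 2 * CB a n r = (a ^ 3 * 2 ^ a * (3 * (r + 2)) ^ 4) * (((n:ℝ) + 1) ^ (2 + 2 * a) * n ^ 4) * Real.exp ((a * Real.log 2 + th r) * n) := by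
    have e2 : Real.exp ((a * Real.log 2 + th r) * n) = (2 ^ n) ^ a * Lc n r := by
      rw [Lc_exp, ← pow_mul, pow_exp 2 (by norm_num), ← Real.exp_add]
      congr 1; push_cast; ring
    rw [e2, CB, mul_pow (2 ^ n : ℝ), pow_add ((n:ℝ)+1) 2 (2*a), pow_mul ((n:ℝ)+1) 2 a]; ring
  rw [e, add_mul _ δ, Real.exp_add, mul_comm (Real.exp _)]
  refine mul_le_mul_of_nonneg_right (le_trans ?_ hn) (Real.exp_pos _).le
  rw [pow_add _ (2 + 2 * a) 4]
  gcongr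
  linarith

lemma ev_iv (a r : ℕ) (hg : 2 * th r < (a - 12 * r : ℕ) * Real.log (3/2)) : ∀ᶠ n : ℕ in atTop, et a n r ≤ 1 / (16 * Kc a n r) := by
  filter_upwards [poly_le (16 * 4 * 3 ^ a * 4 * zeta 2 * (3 * (r + 2)) ^ 10) _ 10 (sub_pos.mpr hg), eventually_ge_atTop 1] with n hn hn1
  have hK := Kc_one a n r hn1
  have hz : 0 ≤ zeta 2 := tsum_nonneg fun m => by positivity
  rw [le_div_iff₀ (by linarith)]
  have e : et a n r * (16 * Kc a n r) = (16 * 4 * 3 ^ a * 4 * zeta 2 * (3 * (r + 2)) ^ 10) * (n:ℝ) ^ 10 * (Real.exp (2 * th r * n) * Real.exp (-((a - 12 * r : ℕ) * Real.log (3/2)) * n)) := by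
    have e2 : Real.exp (2 * th r * n) = Lc n r * Lc n r := by
      rw [Lc_exp, ← Real.exp_add]; congr 1; ring
    have e3 : Real.exp (-((a - 12 * r : ℕ) * Real.log (3/2)) * n) = (2/3) ^ ((a - 12 * r) * n) := by
      rw [pow_exp _ (by norm_num)]
      have : Real.log (2/3) = - Real.log (3/2) := by rw [← Real.log_inv]; norm_num
      rw [this]; congr 1; push_cast; ring
    rw [e2, e3, et, Kc]; ring
  rw [e, ← Real.exp_add]
  calc _ ≤ Real.exp (((a - 12 * r : ℕ) * Real.log (3/2) - 2 * th r) * n) * Real.exp (2 * th r * n + -((a - 12 * r : ℕ) * Real.log (3/2)) * n) := by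
        refine mul_le_mul_of_nonneg_right (le_trans ?_ hn) (Real.exp_pos _).le
        gcongr
        linarith
    _ = 1 := by rw [← Real.exp_add, Real.exp_eq_one_iff]; ring

lemma ev_ii (a r : ℕ) (hr : 1 ≤ r) (δ : ℝ) (hδ : 0 < δ) : ∀ᶠ n : ℕ in atTop, (Nat.lcmUpto n : ℝ) ^ (a + 2) * (B0 a n r * (2 * Kc a n r)) ≤
    Real.exp (-(a * (1 + Real.log r) - (1 + δ) * (a + 2) - th r - δ) * n) := by
  filter_upwards [poly_le (Real.exp 1 ^ a * 2 * 4 * 3 ^ a * (3 * (r + 2)) ^ 4) δ (a + 4) hδ, eventually_ge_atTop 1, lcm_bound δ hδ] with n hn hn1 hd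
  have h1 : (Nat.lcmUpto n : ℝ) ^ (a + 2) ≤ Real.exp ((1 + δ) * (a + 2) * n) := by
    refine (pow_le_pow_left₀ (by positivity) hd _).trans (le_of_eq ?_)
    rw [← Real.exp_nat_mul]; congr 1; push_cast; ring
  have hK := Kc_one a n r hn1
  have hB := B0_pos a n r
  calc _ ≤ Real.exp ((1 + δ) * (a + 2) * n) * (((Real.exp 1 * n) ^ a * Real.exp (-(a * (1 + Real.log r)) * n)) * (2 * Kc a n r)) := by
        gcongr
        exact B0_upper a n r hn1 hr
    _ = (Real.exp 1 ^ a * 2 * 4 * 3 ^ a * (3 * (r + 2)) ^ 4) * (n:ℝ) ^ (a + 4) * (Real.exp ((1 + δ) * (a + 2) * n) * Real.exp (-(a * (1 + Real.log r)) * n) * Real.exp (th r * n)) := by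
        rw [Kc, Lc_exp]; ring
    _ ≤ Real.exp (δ * n) * (Real.exp ((1 + δ) * (a + 2) * n) * Real.exp (-(a * (1 + Real.log r)) * n) * Real.exp (th r * n)) := by
        refine mul_le_mul_of_nonneg_right (le_trans ?_ hn) (by positivity)
        gcongr
        linarith
    _ = _ := by
        rw [← Real.exp_add, ← Real.exp_add, ← Real.exp_add]; congr 1; ring

lemma ev_iii (a r : ℕ) (δ : ℝ) (hδ : 0 < δ) : ∀ᶠ n : ℕ in atTop, Real.exp (-(a * (1 + Real.log (r + 2)) + th r + δ) * n) ≤ B0 a n r / (16 * Kc a n r) := by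
  filter_upwards [poly_le (((r:ℝ) + 2) ^ a * 16 * 4 * 3 ^ a * (3 * (r + 2)) ^ 4) δ (a + 4) hδ, eventually_ge_atTop 1] with n hn hn1
  have hK := Kc_one a n r hn1
  have hB := B0_pos a n r
  have h : 1 / B0 a n r * (16 * Kc a n r) ≤ Real.exp ((a * (1 + Real.log (r + 2)) + th r + δ) * n) := by
    calc _ ≤ (((r + 2) * n) ^ a * Real.exp (a * (1 + Real.log (r + 2)) * n)) * (16 * Kc a n r) := by
          gcongr
          exact B0_lower a n r hn1
      _ = (((r:ℝ) + 2) ^ a * 16 * 4 * 3 ^ a * (3 * (r + 2)) ^ 4) * (n:ℝ) ^ (a + 4) * (Real.exp (a * (1 + Real.log (r + 2)) * n) * Real.exp (th r * n)) := by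
          rw [Kc, Lc_exp, mul_pow ((r:ℝ) + 2) (n:ℝ)]; ring
      _ ≤ Real.exp (δ * n) * (Real.exp (a * (1 + Real.log (r + 2)) * n) * Real.exp (th r * n)) := by
          refine mul_le_mul_of_nonneg_right (le_trans ?_ hn) (by positivity)
          gcongr
          linarith
      _ = _ := by
          rw [← Real.exp_add, ← Real.exp_add]; congr 1; ring
  rw [neg_mul, Real.exp_neg, inv_le_comm₀ (Real.exp_pos _) (by positivity)]
  refine le_trans (le_of_eq ?_) h
  field_simp

end

section
open Filter Topology

def Vset (a : ℕ) : Set (ℝ × ℝ) := {((1 : ℝ), (0 : ℝ)), ((0 : ℝ), (1 : ℝ))} ∪ {x : ℝ × ℝ | ∃ i : ℕ, Odd i ∧ 3 ≤ i ∧ i ≤ a ∧ x = (zeta i, ((i:ℝ) * (i + 1) / 2) * zeta (i + 2))}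

lemma Vset_fin (a : ℕ) : (Vset a).Finite := by
  refine Set.Finite.union (by simp) ?_
  refine Set.Finite.subset ((Finset.range (a+1)).finite_toSet.image (fun i : ℕ => (zeta i, ((i:ℝ) * (i + 1) / 2) * zeta (i + 2)))) ?_
  rintro x ⟨i, _, _, hi, rfl⟩
  exact ⟨i, by simp; omega, rfl⟩

lemma gv_mem (a i : ℕ) (hi : i ≤ a) : gv i ∈ Submodule.span ℚ (Vset a) := by
  rw [gv]
  split_ifs with h0 h1 h2
  · exact Submodule.subset_span (Or.inl (by simp))
  · exact Submodule.subset_span (Or.inl (by simp))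
  · refine Submodule.subset_span (Or.inr ⟨i, h2, ?_, hi, rfl⟩)
    obtain ⟨m, rfl⟩ := h2; omega
  · exact Submodule.zero_mem _

lemma rank_bound (a r : ℕ) (hodd : Odd a) (hr : 1 ≤ r) (ha : 12 * r + 6 ≤ a) (hg : 2 * th r < (a - 12 * r : ℕ) * Real.log (3/2))
    (δ h α α' : ℝ) (hδ : 0 < δ) (hh : h = a * Real.log 2 + th r + δ) (hα : α = a * (1 + Real.log r) - (1 + δ) * (a + 2) - th r - δ)
    (hα' : α' = a * (1 + Real.log (r + 2)) + th r + δ) (hpos : 0 < α) (hβ : α ≤ h + α') :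
    2 * α ≤ ((Module.finrank ℚ (Submodule.span ℚ (Vset a)) : ℝ) - 2) * (h + α' - α) := by
  haveI : FiniteDimensional ℚ (Submodule.span ℚ (Vset a)) := FiniteDimensional.span_of_finite ℚ (Vset_fin a)
  have key := criterion (Submodule.span ℚ (Vset a)) (gv_mem a 0 (by omega)) (gv_mem a 1 (by omega)) (ι := Fin (a+1)) (fun i => gv i)
    (fun i => gv_mem a i (by omega)) (2 * α) (2 * h) (2 * α') (by linarith) (by linarith) ?_
  · linarith
  have ht : Tendsto (fun k : ℕ => 2 * k) atTop atTop := tendsto_atTop_mono (fun k => show k ≤ 2 * k by omega) tendsto_id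
  have H1 := ht.eventually (ev_i a r δ hδ)
  have H2 := ht.eventually (ev_ii a r hr δ hδ)
  have H3 := ht.eventually (ev_iii a r δ hδ)
  have H4 := ht.eventually (ev_iv a r hg)
  filter_upwards [H1, H2, H3, H4, eventually_ge_atTop 1] with k h1 h2 h3 h4 hk
  rw [← hh] at h1
  rw [← hα] at h2
  rw [← hα'] at h3
  have hn : 1 ≤ 2 * k := by omega
  have hne : Even (2 * k) := even_two_mul k
  generalize hnk : 2 * k = n at *
  have hnk' : (n:ℝ) = 2 * k := by rw [← hnk]; push_cast; ring
  have hd : ∀ i, 1 ≤ i → i ≤ n → i ∣ Nat.lcmUpto n := fun i hi1 hi2 => Finset.dvd_lcm (f := id) (Finset.mem_Icc.mpr ⟨hi1, hi2⟩)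
  have hdpos : (0:ℝ) < (Nat.lcmUpto n : ℝ) ^ (a + 2) := by
    have := Nat.lcmUpto_pos n
    positivity
  have hc : ∀ (b : Fin 2) (i : Fin (a+1)), ∃ z : ℤ, (Nat.lcmUpto n : ℝ) ^ (a + 2) * ell a n r b i = z := fun b i =>
    ell_int a n r b i (Nat.lcmUpto n) (by omega) hd
  choose c hc using hc
  have hs1 : ∀ b : Fin 2, ∑ i : Fin (a+1), (c b i : ℝ) * (gv i).1 = (Nat.lcmUpto n : ℝ) ^ (a + 2) * ∑ i ∈ Finset.range (a+1), ell a n r b i * (gv i).1 := fun b => by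
    rw [Finset.sum_range, Finset.mul_sum]
    refine Finset.sum_congr rfl fun i _ => ?_
    rw [← hc]; ring
  have hs2 : ∀ b : Fin 2, ∑ i : Fin (a+1), (c b i : ℝ) * (gv i).2 = (Nat.lcmUpto n : ℝ) ^ (a + 2) * ∑ i ∈ Finset.range (a+1), ell a n r b i * (gv i).2 := fun b => by
    rw [Finset.sum_range, Finset.mul_sum]
    refine Finset.sum_congr rfl fun i _ => ?_
    rw [← hc]; ring
  obtain ⟨s1, hs1'⟩ : ∃ s1 : ℕ → ℝ, s1 = fun b => ∑ i ∈ Finset.range (a+1), ell a n r b i * (gv i).1 := ⟨_, rfl⟩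
  obtain ⟨s2, hs2'⟩ : ∃ s2 : ℕ → ℝ, s2 = fun b => ∑ i ∈ Finset.range (a+1), ell a n r b i * (gv i).2 := ⟨_, rfl⟩
  have hs1 : ∀ b : Fin 2, ∑ i : Fin (a+1), (c b i : ℝ) * (gv i).1 = (Nat.lcmUpto n : ℝ) ^ (a + 2) * s1 b := fun b => by rw [hs1 b, hs1']
  have hs2 : ∀ b : Fin 2, ∑ i : Fin (a+1), (c b i : ℝ) * (gv i).2 = (Nat.lcmUpto n : ℝ) ^ (a + 2) * s2 b := fun b => by rw [hs2 b, hs2']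
  have c1 : ∀ b, b ≤ 1 → |s1 b - PowerSeries.coeff 0 (Tt (Pp a n r b) a n ((r * n + 1 : ℕ) : ℝ))| ≤ B0 a n r * et a n r := fun b hb => by
    rw [hs1']; exact S_close a n r b 0 hn hr hb (by omega) ha _ (form1 a n r b hodd hn hne hb ha)
  have c2 : ∀ b, b ≤ 1 → |s2 b - PowerSeries.coeff 2 (Tt (Pp a n r b) a n ((r * n + 1 : ℕ) : ℝ))| ≤ B0 a n r * et a n r := fun b hb => by
    rw [hs2']; exact S_close a n r b 2 hn hr hb (by omega) ha _ (form2 a n r b hodd hn hne hb ha)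
  have hB := B0_pos a n r
  have hK := Kc_one a n r hn
  have het : et a n r ≤ Kc a n r := by
    refine h4.trans ?_
    rw [div_le_iff₀ (by linarith)]
    nlinarith
  have up : ∀ s t : ℝ, |s - t| ≤ B0 a n r * et a n r → |t| ≤ B0 a n r * Kc a n r → |s| ≤ B0 a n r * (2 * Kc a n r) := fun s t h1 h2 => by
    have := abs_sub_abs_le_abs_sub s t
    have := mul_le_mul_of_nonneg_left het hB.le
    linarith
  have u1 : ∀ b, b ≤ 1 → |s1 b| ≤ B0 a n r * (2 * Kc a n r) := fun b hb => up _ _ (c1 b hb) (Ts_Bd a n r b 0 hn hr hb (by omega))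
  have u2 : ∀ b, b ≤ 1 → |s2 b| ≤ B0 a n r * (2 * Kc a n r) := fun b hb => up _ _ (c2 b hb) (Ts_Bd a n r b 2 hn hr hb (by omega))
  have eα : -(2 * α) * (k:ℝ) = -α * n := by rw [hnk']; ring
  have eα' : -(2 * α') * (k:ℝ) = -α' * n := by rw [hnk']; ring
  have eh : 2 * h * (k:ℝ) = h * n := by rw [hnk']; ring
  rw [eα, eα', eh]
  refine ⟨(Nat.lcmUpto n : ℝ) ^ (a + 2), hdpos, c, ?_, ?_, ?_, ?_⟩
  · intro b i
    rw [← hc, abs_mul, abs_of_pos hdpos]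
    exact mul_le_mul_of_nonneg_left ((ell_le a n r b i (by omega) hn (by omega)).trans h1) hdpos.le
  · intro b
    rw [hs1, abs_mul, abs_of_pos hdpos]
    exact (mul_le_mul_of_nonneg_left (u1 b (by omega)) hdpos.le).trans h2
  · intro b
    rw [hs2, abs_mul, abs_of_pos hdpos]
    exact (mul_le_mul_of_nonneg_left (u2 b (by omega)) hdpos.le).trans h2
  · intro l1 l2
    have c10 := c1 1 le_rfl
    rw [Ts_b1_0, sub_zero] at c10
    have nd := nondeg (B0 a n r) (Kc a n r) (et a n r) (s1 0) (s2 0) (s1 1) (s2 1) _ _ _ hB hK h4 (c1 0 (by omega)) (c2 0 (by omega)) c10 (c2 1 le_rfl)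
      (Ts_b0 a n r) (Ts_Bd a n r 0 2 hn hr (by omega) le_rfl) (Ts_b1_2 a n r) l1 l2
    have fin : ∀ b : Fin 2, B0 a n r / (16 * Kc a n r) * max |l1| |l2| ≤ |l1 * s1 b + l2 * s2 b| →
        (Nat.lcmUpto n : ℝ) ^ (a + 2) * Real.exp (-α' * n) * max |l1| |l2| ≤ |l1 * (∑ i : Fin (a+1), (c b i : ℝ) * (gv i).1) + l2 * (∑ i : Fin (a+1), (c b i : ℝ) * (gv i).2)| := by
      intro b hb
      have e : l1 * ((Nat.lcmUpto n : ℝ) ^ (a + 2) * s1 b) + l2 * ((Nat.lcmUpto n : ℝ) ^ (a + 2) * s2 b) = (Nat.lcmUpto n : ℝ) ^ (a + 2) * (l1 * s1 b + l2 * s2 b) := by ring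
      rw [hs1, hs2, e, abs_mul, abs_of_pos hdpos, mul_assoc]
      refine mul_le_mul_of_nonneg_left (le_trans ?_ hb) hdpos.le
      exact mul_le_mul_of_nonneg_right h3 (le_max_of_le_left (abs_nonneg _))
    rcases nd with h | h
    · exact ⟨0, fin 0 h⟩
    · exact ⟨1, fin 1 h⟩

end

section
open Filter Topology

lemma th_ge (r : ℕ) : 12 * (r:ℝ) ≤ th r := by
  have h : 1 ≤ Real.log (3 * (r + 2) * Real.exp 1) := by
    rw [Real.le_log_iff_exp_le (by positivity)]
    have := Real.exp_pos 1
    have hr : (0:ℝ) ≤ r := by positivity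
    nlinarith
  unfold th
  have hr : (0:ℝ) ≤ 12 * r := by positivity
  nlinarith

lemma ch_r (η : ℝ) (h0 : 0 < η) (h1 : η < 1 / 4) : ∀ᶠ a : ℕ in atTop, ∃ r : ℕ, 1 ≤ r ∧ 2 / (r:ℝ) ≤ η ∧ th r ≤ η * a ∧
    (1 - 2 * η) * Real.log a ≤ Real.log r := by
  have c := tendsto_natCast_atTop_atTop (R := ℝ)
  have t1 : Tendsto (fun x : ℝ => x ^ η) atTop atTop := tendsto_rpow_atTop h0
  have t2 : Tendsto (fun x : ℝ => x ^ (1 - 2 * η)) atTop atTop := tendsto_rpow_atTop (by linarith)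
  have e3 := (isLittleO_log_rpow_atTop h0).bound (show 0 < η / 24 by linarith)
  filter_upwards [c.eventually (t1.eventually_ge_atTop 2), c.eventually (t2.eventually_ge_atTop (1 + 2 / η)), c.eventually e3, eventually_ge_atTop 36] with a b1 b2 b3 b4
  have ha : (36:ℝ) ≤ a := by exact_mod_cast b4
  have ha0 : (0:ℝ) < a := by linarith
  have hx : (0:ℝ) ≤ (a:ℝ) ^ (1 - η) := by positivity
  have hle : (⌊(a:ℝ) ^ (1 - η)⌋₊ : ℝ) ≤ (a:ℝ) ^ (1 - η) := Nat.floor_le hx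
  have hlt : (a:ℝ) ^ (1 - η) < (⌊(a:ℝ) ^ (1 - η)⌋₊ : ℝ) + 1 := Nat.lt_floor_add_one _
  have hm : (a:ℝ) ^ (1 - η) = (a:ℝ) ^ (1 - 2 * η) * (a:ℝ) ^ η := by rw [← Real.rpow_add ha0]; congr 1; ring
  have hm2 : (a:ℝ) ^ (1 - η) * (a:ℝ) ^ η = a := by rw [← Real.rpow_add ha0]; simp
  have h2η : 0 < 2 / η := by positivity
  generalize ⌊(a:ℝ) ^ (1 - η)⌋₊ = r at *
  have hr : (a:ℝ) ^ (1 - 2 * η) ≤ r := by nlinarith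
  have hr1 : (1:ℝ) ≤ r := by linarith
  have hra : (r:ℝ) ≤ a := by nlinarith
  refine ⟨r, by exact_mod_cast hr1, ?_, ?_, ?_⟩
  · rw [div_le_iff₀ (by linarith)]
    have : 2 / η ≤ r := by linarith
    rw [div_le_iff₀ h0] at this
    linarith
  · have hl : Real.log (3 * (r + 2) * Real.exp 1) ≤ 2 * Real.log a := by
      rw [show 2 * Real.log a = Real.log ((a:ℝ) ^ 2) by rw [Real.log_pow]; norm_num]
      apply Real.log_le_log (by positivity)
      have := Real.exp_one_lt_d9
      have := Real.exp_pos 1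
      calc 3 * ((r:ℝ) + 2) * Real.exp 1 ≤ 3 * ((a:ℝ) + 2) * 3 := by gcongr; linarith
        _ ≤ _ := by nlinarith
    have hL : 0 ≤ Real.log a := Real.log_nonneg (by linarith)
    rw [Real.norm_of_nonneg hL, Real.norm_of_nonneg (by positivity)] at b3
    unfold th
    calc 12 * (r:ℝ) * Real.log (3 * (r + 2) * Real.exp 1) ≤ 12 * (r:ℝ) * (2 * (η / 24 * (a:ℝ) ^ η)) := by
          gcongr
          linarith
      _ ≤ 12 * (a:ℝ) ^ (1 - η) * (2 * (η / 24 * (a:ℝ) ^ η)) := by gcongr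
      _ = η * ((a:ℝ) ^ (1 - η) * (a:ℝ) ^ η) := by ring
      _ = η * a := by rw [hm2]
  · rw [← Real.log_rpow ha0]
    exact Real.log_le_log (by positivity) hr

lemma main_asymp (ε : ℝ) (h0 : 0 < ε) (h1 : ε ≤ 1) : ∃ A : ℕ, ∀ a : ℕ, Odd a → A ≤ a →
      (2 - ε) * Real.log a / (1 + Real.log 2) ≤ (Module.finrank ℚ (Submodule.span ℚ (Vset a)) : ℝ) := by
  obtain ⟨η, hη⟩ : ∃ η, η = ε / 24 := ⟨_, rfl⟩
  have hη0 : 0 < η := by linarith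
  have c := tendsto_natCast_atTop_atTop (R := ℝ)
  have e := (ch_r η hη0 (by linarith)).and ((c.eventually_ge_atTop ((3 + 5 * η) / η)).and
    (((Real.tendsto_log_atTop.comp c).eventually_ge_atTop 3).and (eventually_ge_atTop 12)))
  obtain ⟨A, hA⟩ := eventually_atTop.mp e
  refine ⟨A, fun a hodd haA => ?_⟩
  obtain ⟨⟨r, hr, hr2, hth, hlog⟩, ha1, hL, ha12⟩ := hA a haA
  simp only [Function.comp] at hL
  rw [div_le_iff₀ hη0] at ha1
  have ha : (12:ℝ) ≤ a := by exact_mod_cast ha12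
  have hth' := th_ge r
  have hrR : (1:ℝ) ≤ r := by exact_mod_cast hr
  have h12 : (12 * (r:ℝ)) ≤ a / 24 := by nlinarith
  have hra : 12 * r + 6 ≤ a := by
    have : (12 * (r:ℝ)) + 6 ≤ a := by linarith
    exact_mod_cast this
  have l2 : 0 < Real.log 2 := Real.log_pos (by norm_num)
  have l3 : 1 / 3 ≤ Real.log (3/2) := by
    have := Real.one_sub_inv_le_log_of_pos (show (0:ℝ) < 3/2 by norm_num)
    norm_num at this ⊢; linarith
  have la : Real.log r ≤ Real.log (r + 2) := Real.log_le_log (by linarith) (by linarith)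
  have lb : Real.log (r + 2) - Real.log r ≤ η := by
    rw [← Real.log_div (by linarith) (by linarith)]
    have := Real.log_le_sub_one_of_pos (show (0:ℝ) < (r + 2) / r by positivity)
    have e : ((r:ℝ) + 2) / r - 1 = 2 / r := by field_simp; ring
    linarith
  have ha0 : (0:ℝ) ≤ a := by linarith
  have hαl : a * ((1 - 3 * η) * Real.log a) ≤ a * (1 + Real.log r) - (1 + η) * (a + 2) - th r - η := by
    have : a * ((1 - 2 * η) * Real.log a) ≤ a * Real.log r := by gcongr
    have : a * (η * 3) ≤ a * (η * Real.log a) := by gcongr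
    nlinarith
  have hαp : 0 < a * ((1 - 3 * η) * Real.log a) := by
    apply mul_pos (by linarith) (mul_pos (by linarith) (by linarith))
  have m1 : a * Real.log r ≤ a * Real.log (r + 2) := by gcongr
  have m2 : a * (Real.log (r + 2) - Real.log r) ≤ a * η := by gcongr
  have m3 : 0 < a * Real.log 2 := by positivity
  have m4 : 0 ≤ η * a := by positivity
  have key := rank_bound a r hodd hr hra ?_ η _ _ _ hη0 rfl rfl rfl (by linarith) (by linarith)
  · obtain ⟨ρ, hρ⟩ : ∃ ρ : ℝ, ρ = (Module.finrank ℚ (Submodule.span ℚ (Vset a)) : ℝ) := ⟨_, rfl⟩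
    rw [← hρ] at key ⊢
    obtain ⟨β, hβ⟩ : ∃ β : ℝ, β = a * Real.log 2 + th r + η + (a * (1 + Real.log (r + 2)) + th r + η) - (a * (1 + Real.log r) - (1 + η) * (a + 2) - th r - η) := ⟨_, rfl⟩
    rw [← hβ] at key
    have hβ0 : 0 < β := by linarith
    have hβ1 : β ≤ a * (1 + Real.log 2 + 6 * η) := by linarith
    have k1 : 0 < (ρ - 2) * β := by linarith
    have k2 : 0 < ρ - 2 := (pos_iff_pos_of_mul_pos k1).mpr hβ0
    have k3 : (ρ - 2) * β ≤ (ρ - 2) * (a * (1 + Real.log 2 + 6 * η)) := by gcongr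
    have k4 : a * (2 * ((1 - 3 * η) * Real.log a)) ≤ a * ((ρ - 2) * (1 + Real.log 2 + 6 * η)) := by linarith
    have k5 := le_of_mul_le_mul_left k4 (by linarith)
    rw [div_le_iff₀ (by linarith)]
    have k6 : (2 - ε) * (1 + Real.log 2 + 6 * η) ≤ 2 * (1 - 3 * η) * (1 + Real.log 2) := by
      have hε : ε = 24 * η := by linarith
      rw [hε]
      have q1 := mul_pos hη0 l2
      have q2 := mul_pos hη0 hη0
      linarith
    have k7 : (2 - ε) * (1 + Real.log 2 + 6 * η) * Real.log a ≤ 2 * (1 - 3 * η) * (1 + Real.log 2) * Real.log a := by gcongr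
    have k8 : (2 * ((1 - 3 * η) * Real.log a)) * (1 + Real.log 2) ≤ ((ρ - 2) * (1 + Real.log 2 + 6 * η)) * (1 + Real.log 2) := by gcongr
    have k9 : (1 + Real.log 2 + 6 * η) * ((2 - ε) * Real.log a) ≤ (1 + Real.log 2 + 6 * η) * ((ρ - 2) * (1 + Real.log 2)) := by linarith
    have := le_of_mul_le_mul_left k9 (by linarith)
    linarith
  · rw [Nat.cast_sub (by omega)]
    push_cast
    nlinarith


end

/-- For every ε > 0 there exists A such that for every odd integer a ≥ A, the rank over ℚ of
the family (1,0), (0,1), and (ζ(i), (i(i+1)/2)·ζ(i+2)) for odd 3 ≤ i ≤ a, in ℝ² viewed as a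
ℚ-vector space, is at least (2−ε)·(log a)/(1+log 2). -/
theorem stmt0 :
    ∀ ε : ℝ, 0 < ε → ∃ A : ℕ, ∀ a : ℕ, Odd a → A ≤ a →
      (2 - ε) * Real.log a / (1 + Real.log 2) ≤
        (Module.finrank ℚ (Submodule.span ℚ
          (({((1:ℝ), (0:ℝ)), ((0:ℝ), (1:ℝ))} : Set (ℝ × ℝ)) ∪
            {x : ℝ × ℝ | ∃ i : ℕ, Odd i ∧ 3 ≤ i ∧ i ≤ a ∧
              x = (zeta i, ((i : ℝ) * (i + 1) / 2) * zeta (i + 2))})) : ℝ) := by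
  intro ε hε
  obtain ⟨A, hA⟩ := main_asymp (min ε 1) (lt_min hε one_pos) (min_le_right _ _)
  refine ⟨A, fun a hodd ha => le_trans ?_ (hA a hodd ha)⟩
  have l2 : 0 < Real.log 2 := Real.log_pos (by norm_num)
  have : 0 ≤ Real.log (a:ℝ) := Real.log_natCast_nonneg a
  have := min_le_left ε 1
  gcongr
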